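/- Let N ≥ 2, T > 0, and let Ω be the N-dimensional flat torus obtained from the periodic box [-1,1]^N. Let u ∈ C([0,T); L²(Ω;ℝ^N)) be weakly divergence-free, i.e. ∫_{τ₁}^{τ₂}∫_Ω u·∇_xφ dx dt = 0 for every φ ∈ C¹([0,T)×Ω) and all 0 ≤ τ₁ < τ₂ < T. Let ρ, r ∈ C([0,T); L²(Ω)) both satisfy the continuity equation weakly with velocity u, i.e. ∫_{τ₁}^{τ₂}∫_Ω [σ∂_tφ + σu·∇_xφ] dx dt = ∫_Ω σ(τ₂,x)φ(τ₂,x) dx − ∫_Ω σ(τ₁,x)φ(τ₁,x) dx for σ ∈ {ρ, r}, every φ ∈ C¹([0,T)×Ω), and all 0 ≤ τ₁ < τ₂ < T, and suppose ρ(0,·) = r(0,·). If ρ, r, u, ρu, ru ∈ B^α_{p,∞}([0,T)×Ω) (componentwise for vector quantities) for some α > 1/3 and p ≥ 3, then ρ = r almost everywhere on [0,T)×Ω. -/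

import Mathlib

/-!
STATEMENT 8: Uniqueness for the continuity equation with a weakly divergence-free velocity
on the flat torus Ω obtained from [-1,1]^N: if ρ, r are weak solutions of the continuity
equation with the same velocity u and the same initial data, and ρ, r, u, ρu, ru lie in
the space-time Besov space B^α_{p,∞}([0,T)×Ω) with α > 1/3, p ≥ 3, then ρ = r a.e.
-/

open MeasureTheory Set Filter
open scoped RealInnerProductSpace ENNReal

noncomputable section

abbrev Spc (N : ℕ) := EuclideanSpace ℝ (Fin N)

def IsPeriodic {N : ℕ} {E : Type*} (f : Spc N → E) : Prop :=
  ∀ (x : Spc N) (i : Fin N), f (x + EuclideanSpace.single i (2 : ℝ)) = f x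

def TorusBox (N : ℕ) : Set (Spc N) := {x | ∀ i, x i ∈ Icc (-1 : ℝ) 1}

/-- `u ∈ C([0,T); L²(Ω;E))`. -/
structure ContL2 {N : ℕ} {E : Type*} [NormedAddCommGroup E] (T : ℝ)
    (u : ℝ → Spc N → E) : Prop where
  mem : ∀ t ∈ Ico (0 : ℝ) T, MemLp (u t) 2 (volume.restrict (TorusBox N))
  cont : ∀ t ∈ Ico (0 : ℝ) T,
    Tendsto (fun s => eLpNorm (fun x => u s x - u t x) 2 (volume.restrict (TorusBox N)))
      (nhdsWithin t (Ico 0 T)) (nhds 0)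

/-- `u` is weakly divergence-free on `[0,T) × Ω`. -/
def WeaklyDivFree {N : ℕ} (T : ℝ) (u : ℝ → Spc N → Spc N) : Prop :=
  ∀ φ : ℝ → Spc N → ℝ,
    ContDiff ℝ 1 (Function.uncurry φ) → (∀ t, IsPeriodic (φ t)) →
    ∀ τ₁ τ₂ : ℝ, 0 ≤ τ₁ → τ₁ < τ₂ → τ₂ < T →
    (∫ t in Ioc τ₁ τ₂, ∫ x in TorusBox N, ⟪u t x, gradient (fun y => φ t y) x⟫) = 0

/-- `σ` satisfies the continuity equation weakly with velocity `u` on `[0,T) × Ω`. -/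
def WeakContinuityEq {N : ℕ} (T : ℝ) (σ : ℝ → Spc N → ℝ) (u : ℝ → Spc N → Spc N) : Prop :=
  ∀ φ : ℝ → Spc N → ℝ,
    ContDiff ℝ 1 (Function.uncurry φ) → (∀ t, IsPeriodic (φ t)) →
    ∀ τ₁ τ₂ : ℝ, 0 ≤ τ₁ → τ₁ < τ₂ → τ₂ < T →
    (∫ t in Ioc τ₁ τ₂, ∫ x in TorusBox N,
        (σ t x * deriv (fun s => φ s x) t
          + σ t x * ⟪u t x, gradient (fun y => φ t y) x⟫))
      = (∫ x in TorusBox N, σ τ₂ x * φ τ₂ x)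
        - ∫ x in TorusBox N, σ τ₁ x * φ τ₁ x

/-- Space-time Besov seminorm on a domain `Q ⊆ ℝ × ℝ^N`. -/
def besovSeminormST {N : ℕ} (α p : ℝ) (Q : Set (ℝ × Spc N)) (f : ℝ × Spc N → ℝ) : ℝ≥0∞ :=
  ⨆ (Q₁ : Set (ℝ × Spc N)) (_ : closure Q₁ ⊆ Q) (ξ : ℝ × Spc N) (_ : ξ ≠ 0)
    (_ : (fun z => z + ξ) '' Q₁ ⊆ Q),
      eLpNorm (fun z => f (z + ξ) - f z) (ENNReal.ofReal p) (volume.restrict Q₁)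
        / ENNReal.ofReal (‖ξ‖ ^ α)

/-- Membership in the space-time Besov space `B^α_{p,∞}(Q)`. -/
def MemBesovST {N : ℕ} (α p : ℝ) (Q : Set (ℝ × Spc N)) (f : ℝ × Spc N → ℝ) : Prop :=
  MemLp f (ENNReal.ofReal p) (volume.restrict Q) ∧ besovSeminormST α p Q f < ⊤


/-! ### Bump functions -/

/-- Smooth step-down function: `1` on `v ≤ 1`, `0` on `v ≥ 2`. -/
def Bf (v : ℝ) : ℝ := 1 - Real.smoothTransition (v - 1)

lemma Bf_contDiff : ContDiff ℝ 1 Bf := by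
  have h : ContDiff ℝ ((1 : ℕ∞) : WithTop ℕ∞) Real.smoothTransition := Real.smoothTransition.contDiff
  exact contDiff_const.sub (h.comp (contDiff_id.sub contDiff_const))

lemma Bf_nonneg (v : ℝ) : 0 ≤ Bf v := by
  have := Real.smoothTransition.le_one (v - 1); unfold Bf; linarith

lemma Bf_le_one (v : ℝ) : Bf v ≤ 1 := by
  have := Real.smoothTransition.nonneg (v - 1); unfold Bf; linarith

lemma Bf_one {v : ℝ} (h : v ≤ 1) : Bf v = 1 := by
  unfold Bf; rw [Real.smoothTransition.zero_of_nonpos (by linarith)]; ring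

lemma Bf_zero {v : ℝ} (h : 2 ≤ v) : Bf v = 0 := by
  unfold Bf; rw [Real.smoothTransition.one_of_one_le (by linarith)]; ring

lemma Bf_deriv_zero {v : ℝ} (h : 2 < v) : deriv Bf v = 0 := by
  have : Bf =ᶠ[nhds v] fun _ => 0 := by
    filter_upwards [lt_mem_nhds h] with x hx using Bf_zero hx.le
  rw [this.deriv_eq]; simp

lemma Bf_deriv_zero' {v : ℝ} (h : v < 1) : deriv Bf v = 0 := by
  have : Bf =ᶠ[nhds v] fun _ => 1 := by
    filter_upwards [gt_mem_nhds h] with x hx using Bf_one (le_of_lt hx)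
  rw [this.deriv_eq]; simp

lemma Bf_deriv_bound : ∃ L : ℝ, 0 < L ∧ ∀ v, |deriv Bf v| ≤ L := by
  have hc : Continuous (deriv Bf) := Bf_contDiff.continuous_deriv le_rfl
  obtain ⟨C, hC⟩ := (isCompact_Icc (a := (0:ℝ)) (b := 3)).exists_bound_of_continuousOn hc.continuousOn
  refine ⟨max C 1, by positivity, fun v => ?_⟩
  by_cases h1 : v < 1
  · rw [Bf_deriv_zero' h1]; simp
  by_cases h2 : 2 < v
  · rw [Bf_deriv_zero h2]; simp
  · exact (hC v ⟨by linarith, by linarith⟩).trans (le_max_left _ _)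

/-- Periodic bump at the even integers of width `l`. -/
def sb (l s : ℝ) : ℝ := Bf (Real.sin (Real.pi * s / 2) ^ 2 / l ^ 2)

lemma sb_contDiff (l : ℝ) : ContDiff ℝ 1 (sb l) := by
  unfold sb
  apply Bf_contDiff.comp
  have : ContDiff ℝ 1 (fun s : ℝ => Real.sin (Real.pi * s / 2)) :=
    Real.contDiff_sin.comp (by fun_prop)
  fun_prop

lemma sb_per (l s : ℝ) : sb l (s + 2) = sb l s := by
  unfold sb
  have : Real.pi * (s + 2) / 2 = Real.pi * s / 2 + Real.pi := by ring
  rw [this, Real.sin_add_pi]; simp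

lemma sb_nonneg (l s : ℝ) : 0 ≤ sb l s := Bf_nonneg _
lemma sb_le_one (l s : ℝ) : sb l s ≤ 1 := Bf_le_one _

lemma sb_zero {l s : ℝ} (hl : 0 < l) (h : 2 * l ^ 2 ≤ Real.sin (Real.pi * s / 2) ^ 2) :
    sb l s = 0 := by
  apply Bf_zero; rw [le_div_iff₀ (by positivity)]; linarith

lemma sb_one {l s : ℝ} (hl : 0 < l) (h : Real.sin (Real.pi * s / 2) ^ 2 ≤ l ^ 2) :
    sb l s = 1 := by
  apply Bf_one; rw [div_le_iff₀ (by positivity)]; linarith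

lemma sb_hasDerivAt (l s : ℝ) :
    HasDerivAt (sb l) (deriv Bf (Real.sin (Real.pi * s / 2) ^ 2 / l ^ 2) *
      (2 * Real.sin (Real.pi * s / 2) * (Real.cos (Real.pi * s / 2) * (Real.pi / 2)) / l ^ 2)) s := by
  have h1 : HasDerivAt (fun s : ℝ => Real.pi * s / 2) (Real.pi / 2) s := by
    simpa using ((hasDerivAt_id s).const_mul Real.pi).div_const 2
  have h2 := ((h1.sin).pow 2).div_const (l ^ 2)
  have h3 : HasDerivAt Bf (deriv Bf (Real.sin (Real.pi * s / 2) ^ 2 / l ^ 2))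
      (Real.sin (Real.pi * s / 2) ^ 2 / l ^ 2) :=
    ((Bf_contDiff.differentiable one_ne_zero) _).hasDerivAt
  have := HasDerivAt.comp s h3 h2
  refine this.congr_deriv ?_
  norm_num

lemma sb_deriv_zero {l s : ℝ} (hl : 0 < l) (h : 2 * l ^ 2 < Real.sin (Real.pi * s / 2) ^ 2) :
    deriv (sb l) s = 0 := by
  rw [(sb_hasDerivAt l s).deriv, Bf_deriv_zero, zero_mul]
  rw [lt_div_iff₀ (by positivity)]; linarith

lemma sb_deriv_bound : ∃ L : ℝ, 0 < L ∧ ∀ l s, 0 < l → |deriv (sb l) s| ≤ L / l := by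
  obtain ⟨L, hL, hB⟩ := Bf_deriv_bound
  refine ⟨5 * L, by positivity, fun l s hl => ?_⟩
  by_cases h : 2 * l ^ 2 < Real.sin (Real.pi * s / 2) ^ 2
  · rw [sb_deriv_zero hl h]; simp; positivity
  push Not at h
  rw [(sb_hasDerivAt l s).deriv, abs_mul]
  set S := Real.sin (Real.pi * s / 2)
  set c := Real.cos (Real.pi * s / 2) with hc
  have hS : |S| ≤ 3 / 2 * l := by
    exact abs_le_of_sq_le_sq (by nlinarith) (by positivity)
  have hcc : |c| ≤ 1 := Real.abs_cos_le_one _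
  have h4 : |2 * S * (c * (Real.pi / 2)) / l ^ 2| ≤ 5 / l := by
    rw [abs_div, abs_of_pos (by positivity : (0:ℝ) < l ^ 2), div_le_div_iff₀ (by positivity) hl]
    have : |2 * S * (c * (Real.pi / 2))| = |S| * |c| * Real.pi := by
      rw [show 2 * S * (c * (Real.pi / 2)) = S * c * Real.pi by ring, abs_mul, abs_mul,
        abs_of_pos Real.pi_pos]
    rw [this]
    have h5 : |S| * |c| ≤ 3 / 2 * l * 1 := by gcongr
    have h6 : |S| * |c| * Real.pi ≤ 3 / 2 * l * 1 * 3.15 := by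
      gcongr; exact Real.pi_lt_d2.le
    nlinarith [abs_nonneg S, abs_nonneg c, sq_nonneg l]
  calc _ ≤ L * (5 / l) := by gcongr; exact hB _
    _ = 5 * L / l := by ring

lemma jordan {s : ℝ} (h : |s| ≤ 1) : |s| ≤ |Real.sin (Real.pi * s / 2)| := by
  have key : ∀ s : ℝ, 0 ≤ s → s ≤ 1 → s ≤ Real.sin (Real.pi * s / 2) := by
    intro s h0 h1
    have := Real.mul_le_sin (x := Real.pi * s / 2) (by positivity)
      (by nlinarith [Real.pi_pos])
    have h2 : 2 / Real.pi * (Real.pi * s / 2) = s := by field_simp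
    linarith
  rcases le_total 0 s with h0 | h0
  · rw [abs_of_nonneg h0] at h ⊢
    exact (key s h0 h).trans (le_abs_self _)
  · rw [abs_of_nonpos h0] at h ⊢
    have := key (-s) (by linarith) h
    rw [show Real.pi * -s / 2 = -(Real.pi * s / 2) by ring, Real.sin_neg] at this
    exact this.trans (neg_le_abs _)

lemma sin_le_small {s l : ℝ} (h : |s| ≤ l / 2) : Real.sin (Real.pi * s / 2) ^ 2 ≤ l ^ 2 := by
  have h1 : |Real.sin (Real.pi * s / 2)| ≤ |Real.pi * s / 2| := Real.abs_sin_le_abs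
  have h2 : |Real.pi * s / 2| = Real.pi / 2 * |s| := by
    rw [show Real.pi * s / 2 = Real.pi / 2 * s by ring, abs_mul, abs_of_pos (by positivity)]
  have h3 : |Real.sin (Real.pi * s / 2)| ≤ l := by
    rw [h2] at h1
    have := Real.pi_lt_d2
    nlinarith [abs_nonneg s]
  rw [← sq_abs]
  exact pow_le_pow_left₀ (abs_nonneg _) h3 2

/-! ### Space-time sets and slices -/

abbrev SpT (N : ℕ) := ℝ × Spc N

/-- The compact space-time cylinder `[0,τ] × box`. -/
def KK (N : ℕ) (τ : ℝ) : Set (SpT N) := Icc (0 : ℝ) τ ×ˢ TorusBox N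

instance spt_haar (N : ℕ) : (volume : Measure (SpT N)).IsAddHaarMeasure := by
  rw [Measure.volume_eq_prod]; infer_instance

/-- Unit space vector. -/
def ee {N : ℕ} (i : Fin N) : SpT N := (0, EuclideanSpace.single i (1 : ℝ))

lemma TorusBox_closed (N : ℕ) : IsClosed (TorusBox N) := by
  have : TorusBox N = ⋂ i, {x : Spc N | x i ∈ Icc (-1 : ℝ) 1} := by
    ext x; simp [TorusBox]
  rw [this]
  refine isClosed_iInter fun i => isClosed_Icc.preimage ?_
  exact (EuclideanSpace.proj i : Spc N →L[ℝ] ℝ).continuous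

lemma TorusBox_bounded (N : ℕ) : Bornology.IsBounded (TorusBox N) := by
  refine (Metric.isBounded_iff_subset_closedBall 0).2 ⟨√(∑ _i : Fin N, (1:ℝ)), fun x hx => ?_⟩
  rw [mem_closedBall_zero_iff, EuclideanSpace.norm_eq]
  apply Real.sqrt_le_sqrt
  apply Finset.sum_le_sum
  intro i _
  have := hx i
  rw [Real.norm_eq_abs, sq_abs]
  nlinarith [this.1, this.2]

lemma TorusBox_compact (N : ℕ) : IsCompact (TorusBox N) :=
  Metric.isCompact_of_isClosed_isBounded (TorusBox_closed N) (TorusBox_bounded N)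

lemma KK_compact (N : ℕ) (τ : ℝ) : IsCompact (KK N τ) := isCompact_Icc.prod (TorusBox_compact N)
lemma KK_closed (N : ℕ) (τ : ℝ) : IsClosed (KK N τ) := (KK_compact N τ).isClosed
lemma KK_meas (N : ℕ) (τ : ℝ) : MeasurableSet (KK N τ) := (KK_closed N τ).measurableSet
lemma KK_lt_top (N : ℕ) (τ : ℝ) : volume (KK N τ) < ⊤ := (KK_compact N τ).measure_lt_top

instance KK_fin (N : ℕ) (τ : ℝ) : IsFiniteMeasure (volume.restrict (KK N τ)) :=
  ⟨by simpa using KK_lt_top N τ⟩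

@[simp] lemma ee_snd {N : ℕ} (i j : Fin N) : (ee i : SpT N).2 j = if j = i then 1 else 0 := by
  simp [ee]

@[simp] lemma ee_fst {N : ℕ} (i : Fin N) : (ee i : SpT N).1 = 0 := rfl

lemma measurable_coord {N : ℕ} (i : Fin N) : Measurable (fun z : SpT N => z.2 i) := by
  have : Continuous (fun z : SpT N => (EuclideanSpace.proj i : Spc N →L[ℝ] ℝ) z.2) := by fun_prop
  exact this.measurable

/-- part of the cylinder where the `i`-th coordinate lies in `I`. -/
def SS (N : ℕ) (τ : ℝ) (i : Fin N) (I : Set ℝ) : Set (SpT N) := {z | z ∈ KK N τ ∧ z.2 i ∈ I}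

lemma SS_meas {N : ℕ} {τ : ℝ} {i : Fin N} {I : Set ℝ} (hI : MeasurableSet I) :
    MeasurableSet (SS N τ i I) :=
  (KK_meas N τ).inter (measurable_coord i hI)

lemma SS_shift {N : ℕ} {τ : ℝ} {i : Fin N} {I : Set ℝ} (hI : I ⊆ Icc (-1) 1) {z : SpT N}
    (hz : z ∈ SS N τ i I) (h : ℝ) : z + h • ee i ∈ SS N τ i I ↔ z.2 i + h ∈ I := by
  constructor
  · intro hh; simpa using hh.2
  · intro hh
    refine ⟨⟨by simpa using hz.1.1, fun j => ?_⟩, by simpa using hh⟩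
    by_cases hj : j = i
    · subst hj; simpa using hI hh
    · simpa [hj] using hz.1.2 j

lemma slice_pair {N : ℕ} {τ : ℝ} {i : Fin N} {I : Set ℝ} (hI : I ⊆ Icc (-1) 1)
    (hIm : MeasurableSet I) (G : SpT N → SpT N → ℝ≥0∞) (hG : Measurable (Function.uncurry G)) :
    ∫⁻ z in SS N τ i I, ∫⁻ s in I, G z (z + (s - z.2 i) • ee i)
      = ∫⁻ h : ℝ, ∫⁻ z in SS N τ i I ∩ {z | z + h • ee i ∈ SS N τ i I}, G z (z + h • ee i) := by
  have hS := SS_meas (N := N) (τ := τ) (i := i) hIm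
  have hG' : Measurable (fun q : SpT N × ℝ => G q.1 (q.1 + q.2 • ee i)) :=
    hG.comp (f := fun q : SpT N × ℝ => (q.1, q.1 + q.2 • (ee i : SpT N))) (by fun_prop)
  have h1 : ∀ z ∈ SS N τ i I, ∫⁻ s in I, G z (z + (s - z.2 i) • ee i)
      = ∫⁻ h, I.indicator (fun _ => G z (z + h • ee i)) (z.2 i + h) := by
    intro z _
    rw [← lintegral_indicator hIm]
    rw [← lintegral_add_left_eq_self _ (z.2 i)]
    congr 1; ext h
    simp only [Set.indicator]
    split_ifs <;> simp
  rw [setLIntegral_congr_fun hS h1]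
  rw [lintegral_lintegral_swap]
  · congr 1; ext h
    have hm : MeasurableSet (SS N τ i I ∩ {z | z + h • ee i ∈ SS N τ i I}) :=
      hS.inter ((by fun_prop : Measurable (fun z : SpT N => z + h • ee i)) hS)
    rw [← lintegral_indicator hS, ← lintegral_indicator hm]
    congr 1; ext z
    by_cases hz : z ∈ SS N τ i I
    · have := SS_shift hI hz h
      by_cases hzh : z.2 i + h ∈ I
      · have h3 := this.2 hzh
        simp [Set.indicator, hz, hzh, h3]
      · have h3 : ¬ _ := fun h' => hzh (this.1 h')
        simp [Set.indicator, hz, hzh, h3]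
    · simp [Set.indicator, hz]
  · apply Measurable.aemeasurable
    have : (Function.uncurry fun (x : SpT N) y => I.indicator (fun _ => G x (x + y • ee i)) (x.2 i + y))
      = {q : SpT N × ℝ | q.1.2 i + q.2 ∈ I}.indicator (fun q => G q.1 (q.1 + q.2 • ee i)) := by
      ext q; simp only [Function.uncurry, Set.indicator]; rfl
    rw [this]
    refine hG'.indicator ?_
    exact (((measurable_coord i).comp measurable_fst).add measurable_snd) hIm

lemma slice_eq {N : ℕ} {τ : ℝ} {i : Fin N} {I : Set ℝ} (hI : I ⊆ Icc (-1) 1)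
    (hIm : MeasurableSet I) (F : SpT N → ℝ≥0∞) (hF : Measurable F) :
    ∫⁻ z in SS N τ i I, ∫⁻ s in I, F (z + (s - z.2 i) • ee i)
      = volume I * ∫⁻ z in SS N τ i I, F z := by
  have hS := SS_meas (N := N) (τ := τ) (i := i) hIm
  rw [slice_pair hI hIm (fun _ y => F y) (hF.comp measurable_snd)]
  have h1 : ∀ h : ℝ, ∫⁻ z in SS N τ i I ∩ {z | z + h • ee i ∈ SS N τ i I}, F (z + h • ee i)
      = ∫⁻ z in SS N τ i I, (I.indicator (fun _ => F z) (z.2 i - h)) := by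
    intro h
    have hm : MeasurableSet (SS N τ i I ∩ {z | z + h • ee i ∈ SS N τ i I}) :=
      hS.inter ((by fun_prop : Measurable (fun z : SpT N => z + h • ee i)) hS)
    rw [← lintegral_indicator hS, ← lintegral_indicator hm]
    rw [← lintegral_add_right_eq_self (fun z => (SS N τ i I).indicator _ z) (h • ee i)]
    congr 1; ext z
    by_cases hzh : z + h • ee i ∈ SS N τ i I
    · have := SS_shift hI hzh (-h)
      simp only [neg_smul, add_neg_cancel_right] at this
      by_cases hz : z ∈ SS N τ i I
      · have h3 := this.1 hz
        simp only [Set.indicator, mem_inter_iff, hz, hzh, mem_ofPred_eq, and_self, if_true]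
        rw [if_pos (by simpa [sub_eq_add_neg] using h3)]
      · have h3 : ¬ _ := fun h' => hz (this.2 h')
        simp only [Set.indicator, mem_inter_iff, hz, hzh, mem_ofPred_eq, and_true, if_true, if_false]
        rw [if_neg (by simpa [sub_eq_add_neg] using h3)]
    · simp [Set.indicator, hzh]
  simp_rw [h1]
  rw [lintegral_lintegral_swap]
  · rw [← lintegral_const_mul _ hF]
    refine lintegral_congr fun z => ?_
    rw [lintegral_sub_left_eq_self (fun s => I.indicator (fun _ => F z) s) (z.2 i)]
    rw [lintegral_indicator hIm]
    simp [mul_comm]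
  · apply Measurable.aemeasurable
    have : (Function.uncurry fun (y : ℝ) (x : SpT N) => I.indicator (fun _ => F x) (x.2 i - y))
      = {q : ℝ × SpT N | q.2.2 i - q.1 ∈ I}.indicator (fun q => F q.2) := by
      ext q; simp only [Function.uncurry, Set.indicator]; rfl
    rw [this]
    refine (hF.comp measurable_snd).indicator ?_
    exact (((measurable_coord i).comp measurable_snd).sub measurable_fst) hIm

/-! ### Core hypotheses and the trace descent -/

def PerST {N : ℕ} (φ : SpT N → ℝ) : Prop := ∀ z i, φ (z + (2 : ℝ) • ee i) = φ z

structure Core (N : ℕ) (τ0 τ α C : ℝ) (w : SpT N → ℝ) (u : SpT N → Spc N) : Prop where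
  h0 : 0 < τ0
  hτ : τ0 < τ
  hα : 1 / 3 < α
  hα1 : α < 1
  hC : 0 < C
  wm : Measurable w
  um : Measurable u
  wL : MemLp w 3 (volume.restrict (KK N τ))
  uL : MemLp u 3 (volume.restrict (KK N τ))
  wB : ∀ ξ : SpT N, ∫⁻ z in KK N τ ∩ {z | z + ξ ∈ KK N τ}, ‖w (z + ξ) - w z‖ₑ ^ 3
    ≤ ENNReal.ofReal ((C * ‖ξ‖ ^ α) ^ 3)
  uB : ∀ ξ : SpT N, ∫⁻ z in KK N τ ∩ {z | z + ξ ∈ KK N τ}, ‖u (z + ξ) - u z‖ₑ ^ 3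
    ≤ ENNReal.ofReal ((C * ‖ξ‖ ^ α) ^ 3)
  E1 : ∀ φ : SpT N → ℝ, ContDiff ℝ 1 φ → PerST φ → (∀ x, φ (τ, x) = 0) →
    ∫ z in KK N τ, w z * fderiv ℝ φ z (1, u z) = 0
  E2 : ∀ φ : SpT N → ℝ, ContDiff ℝ 1 φ → PerST φ →
    ∫ z in KK N τ, fderiv ℝ φ z (0, u z) = 0

lemma eLpNorm_three {X E : Type*} [MeasurableSpace X] [NormedAddCommGroup E] (f : X → E)
    (μ : Measure X) : eLpNorm f 3 μ ^ 3 = ∫⁻ x, ‖f x‖ₑ ^ 3 ∂μ := by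
  have := eLpNorm_nnreal_pow_eq_lintegral (f := f) (μ := μ) (p := 3) (by norm_num)
  simpa using this

lemma eLpNorm_three_le {X E : Type*} [MeasurableSpace X] [NormedAddCommGroup E] {f : X → E}
    {μ : Measure X} {a : ℝ} (ha : 0 ≤ a) (h : ∫⁻ x, ‖f x‖ₑ ^ 3 ∂μ ≤ ENNReal.ofReal (a ^ 3)) :
    eLpNorm f 3 μ ≤ ENNReal.ofReal a := by
  rw [← eLpNorm_three, ENNReal.ofReal_pow ha] at h
  exact (ENNReal.pow_le_pow_left_iff (by norm_num)).1 h

lemma le_eLpNorm_three {X E : Type*} [MeasurableSpace X] [NormedAddCommGroup E] {f : X → E}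
    {μ : Measure X} {a : ℝ} (ha : 0 ≤ a) (h : eLpNorm f 3 μ ≤ ENNReal.ofReal a) :
    ∫⁻ x, ‖f x‖ₑ ^ 3 ∂μ ≤ ENNReal.ofReal (a ^ 3) := by
  rw [← eLpNorm_three, ENNReal.ofReal_pow ha]
  gcongr

/-- strip in one coordinate -/
def Ist (s δ : ℝ) : Set ℝ := {x | x ∈ Icc (-1 : ℝ) 1 ∧ 1 + s * x < δ}

lemma Ist_sub (s δ : ℝ) : Ist s δ ⊆ Icc (-1) 1 := fun _ h => h.1

lemma Ist_meas (s δ : ℝ) : MeasurableSet (Ist s δ) :=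
  measurableSet_Icc.inter (measurableSet_lt (f := fun x : ℝ => 1 + s * x) (g := fun _ => δ)
    (by fun_prop) (by fun_prop))

lemma one_step {a b c y r : ℝ} (hc : 0 ≤ c) (hy : 0 ≤ y)
    (hr : 0 < r) (hr3 : 2 * r ^ 3 = 1) (h1 : a ≤ b + c) (h2 : a ^ 3 + b ^ 3 ≤ y ^ 3) :
    a ≤ c + r * y := by
  by_contra h
  push Not at h
  have h3 : r * y < b := by linarith
  have h4 : r * y < a := by linarith
  have hry : 0 ≤ r * y := by positivity
  have h5 : (r * y) ^ 3 < b ^ 3 := pow_lt_pow_left₀ h3 hry (by norm_num)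
  have h6 : (r * y) ^ 3 < a ^ 3 := pow_lt_pow_left₀ h4 hry (by norm_num)
  have : 2 * (r * y) ^ 3 = y ^ 3 := by
    rw [mul_pow, ← mul_assoc, hr3, one_mul]
  linarith

lemma norm_ee {N : ℕ} (i : Fin N) : ‖(ee i : SpT N)‖ = 1 := by
  simp [ee, Prod.norm_def]

/-- directional Besov property towards the interior from the face with sign `s` -/
def DirB {N : ℕ} (τ α C : ℝ) (i : Fin N) (s : ℝ) (f : SpT N → ℝ) : Prop :=
  ∀ h : ℝ, 0 < h → ∫⁻ z in KK N τ ∩ {z | z + (s * h) • ee i ∈ KK N τ},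
    ‖f (z + (s * h) • ee i) - f z‖ₑ ^ 3 ≤ ENNReal.ofReal ((C * h ^ α) ^ 3)

lemma descent_step {N : ℕ} {τ α C : ℝ} {i : Fin N} {s : ℝ} (hs : s * s = 1) (hC : 0 ≤ C)
    {f : SpT N → ℝ} (hfm : Measurable f)
    (hB : DirB τ α C i s f) {δ y r : ℝ} (hδ : 0 < δ) (hδ1 : δ ≤ 1 / 2) (hy : 0 ≤ y)
    (hr : 0 < r) (hr3 : 2 * r ^ 3 = 1)
    (hI : ∫⁻ z in SS N τ i (Ist s (2 * δ)), ‖f z‖ₑ ^ 3 ≤ ENNReal.ofReal (y ^ 3)) :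
    ∫⁻ z in SS N τ i (Ist s δ), ‖f z‖ₑ ^ 3 ≤ ENNReal.ofReal ((C * δ ^ α + r * y) ^ 3) := by
  have hs' : s = 1 ∨ s = -1 := by
    have : (s - 1) * (s + 1) = 0 := by linarith
    rcases mul_eq_zero.1 this with h | h
    · left; linarith
    · right; linarith
  set S1 := SS N τ i (Ist s δ) with hS1
  set S2 := SS N τ i (Ist s (2 * δ)) with hS2
  have m1 : MeasurableSet S1 := SS_meas (Ist_meas _ _)
  have m2 : MeasurableSet S2 := SS_meas (Ist_meas _ _)
  set ξ : SpT N := (s * δ) • ee i with hξ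
  have hshift : Measurable (fun z : SpT N => z + ξ) := by fun_prop
  have hsub : S1 ⊆ S2 := fun z hz => ⟨hz.1, hz.2.1, by have := hz.2.2; linarith⟩
  -- the shifted strip
  have hmap : ∀ z ∈ S1, z + ξ ∈ S2 \ S1 := by
    intro z hz
    have h1 := hz.2.2
    have h2 := hz.2.1
    have hzi : (z + ξ).2 i = z.2 i + s * δ := by simp [hξ]
    have h3 : 1 + s * (z.2 i + s * δ) = 1 + s * z.2 i + δ := by linear_combination δ * hs
    have h5 : 0 ≤ 1 + s * z.2 i := by
      rcases hs' with rfl | rfl <;> linarith [h2.1, h2.2]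
    have h4 : z.2 i + s * δ ∈ Ist s (2 * δ) := by
      refine ⟨?_, by rw [h3]; linarith⟩
      rcases hs' with rfl | rfl <;> constructor <;> linarith [h2.1, h2.2]
    refine ⟨?_, fun hh => ?_⟩
    · exact (SS_shift (Ist_sub _ _) (hsub hz) _).2 h4
    · have := hh.2.2
      rw [hzi, h3] at this
      linarith
  have hb : ∫⁻ z in S1, ‖f (z + ξ)‖ₑ ^ 3 ≤ ∫⁻ z in S2 \ S1, ‖f z‖ₑ ^ 3 := by
    rw [← lintegral_indicator m1, ← lintegral_indicator (m2.diff m1)]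
    rw [← lintegral_add_right_eq_self (fun z => (S2 \ S1).indicator _ z) ξ]
    refine lintegral_mono fun z => ?_
    by_cases hz : z ∈ S1
    · rw [indicator_of_mem hz, indicator_of_mem (hmap z hz)]
    · rw [indicator_of_notMem hz]; exact zero_le
  have hsum : (∫⁻ z in S1, ‖f z‖ₑ ^ 3) + ∫⁻ z in S2 \ S1, ‖f z‖ₑ ^ 3 = ∫⁻ z in S2, ‖f z‖ₑ ^ 3 := by
    have := lintegral_inter_add_sdiff (μ := volume) (fun z => ‖f z‖ₑ ^ 3) S2 m1
    rwa [inter_eq_right.2 hsub] at this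
  have hsum2 : (∫⁻ z in S1, ‖f z‖ₑ ^ 3) + ∫⁻ z in S1, ‖f (z + ξ)‖ₑ ^ 3 ≤ ENNReal.ofReal (y ^ 3) :=
    (add_le_add_right hb _).trans (hsum.le.trans hI)
  have hc : ∫⁻ z in S1, ‖f (z + ξ) - f z‖ₑ ^ 3 ≤ ENNReal.ofReal ((C * δ ^ α) ^ 3) := by
    refine (lintegral_mono_set ?_).trans (hB δ hδ)
    intro z hz
    exact ⟨hz.1, (hmap z hz).1.1⟩
  rw [← eLpNorm_three, ← eLpNorm_three] at hsum2
  have hc' := eLpNorm_three_le (by positivity) hc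
  have ha : eLpNorm f 3 (volume.restrict S1) ≠ ⊤ := by
    intro h; rw [h] at hsum2; simp at hsum2
  have hbt : eLpNorm (fun z => f (z + ξ)) 3 (volume.restrict S1) ≠ ⊤ := by
    intro h; rw [h] at hsum2; simp at hsum2
  have htri : eLpNorm f 3 (volume.restrict S1) ≤ eLpNorm (fun z => f (z + ξ)) 3 (volume.restrict S1)
      + ENNReal.ofReal (C * δ ^ α) := by
    have h1 : f = (fun z => f (z + ξ)) - (fun z => f (z + ξ) - f z) := by ext z; simp
    calc eLpNorm f 3 (volume.restrict S1)
        = eLpNorm ((fun z => f (z + ξ)) - (fun z => f (z + ξ) - f z)) 3 (volume.restrict S1) := by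
          rw [← h1]
      _ ≤ _ := eLpNorm_sub_le (hfm.comp hshift).aestronglyMeasurable
          ((hfm.comp hshift).sub hfm).aestronglyMeasurable (by norm_num)
      _ ≤ _ := by gcongr
  obtain ⟨a, ha0, hae⟩ : ∃ a : ℝ, 0 ≤ a ∧ eLpNorm f 3 (volume.restrict S1) = ENNReal.ofReal a :=
    ⟨_, ENNReal.toReal_nonneg, (ENNReal.ofReal_toReal ha).symm⟩
  obtain ⟨b, hb0, hbe⟩ : ∃ b : ℝ, 0 ≤ b ∧
      eLpNorm (fun z => f (z + ξ)) 3 (volume.restrict S1) = ENNReal.ofReal b :=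
    ⟨_, ENNReal.toReal_nonneg, (ENNReal.ofReal_toReal hbt).symm⟩
  have hcc : 0 ≤ C * δ ^ α := by positivity
  rw [hae, hbe] at hsum2 htri
  rw [← ENNReal.ofReal_add hb0 hcc, ENNReal.ofReal_le_ofReal_iff (by positivity)] at htri
  rw [← ENNReal.ofReal_pow ha0, ← ENNReal.ofReal_pow hb0, ← ENNReal.ofReal_add (by positivity) (by positivity),
    ENNReal.ofReal_le_ofReal_iff (by positivity)] at hsum2
  apply le_eLpNorm_three (by positivity)
  rw [hae]
  exact ENNReal.ofReal_le_ofReal (one_step hcc hy hr hr3 htri hsum2)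

lemma descent {N : ℕ} {τ α C : ℝ} {i : Fin N} {s : ℝ} (hs : s * s = 1) (hC : 0 ≤ C)
    (hα : 1 / 3 < α)
    {f : SpT N → ℝ} (hfm : Measurable f)
    (hB : DirB τ α C i s f) {A : ℝ} (hA : 0 ≤ A) (k : ℕ)
    (hI : ∫⁻ z in SS N τ i (Ist s ((1 / 2) ^ k)), ‖f z‖ₑ ^ 3 ≤ ENNReal.ofReal (A ^ 3 * (1 / 2) ^ k)) :
    ∀ n, k ≤ n → ∫⁻ z in SS N τ i (Ist s ((1 / 2) ^ n)), ‖f z‖ₑ ^ 3 ≤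
      ENNReal.ofReal ((A + C * ((1 / 2 : ℝ) ^ (α - 1 / 3)) ^ k / (1 - (1 / 2 : ℝ) ^ (α - 1 / 3))) ^ 3
        * (1 / 2) ^ n) := by
  set q : ℝ := (1 / 2 : ℝ) ^ (α - 1 / 3) with hq
  set r : ℝ := (1 / 2 : ℝ) ^ (1 / 3 : ℝ) with hr
  have hq0 : 0 < q := by positivity
  have hq1 : q < 1 := Real.rpow_lt_one (by norm_num) (by norm_num) (by linarith)
  have hr0 : 0 < r := by positivity
  have hr3 : r ^ 3 = 1 / 2 := by
    rw [hr, ← Real.rpow_natCast, ← Real.rpow_mul (by norm_num)]; norm_num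
  have hqr : (1 / 2 : ℝ) ^ α = q * r := by
    rw [hq, hr, ← Real.rpow_add (by norm_num)]; congr 1; ring
  have key : ∀ m, ∫⁻ z in SS N τ i (Ist s ((1 / 2) ^ (k + m))), ‖f z‖ₑ ^ 3 ≤
      ENNReal.ofReal ((A + C * q ^ k * (q * (1 - q ^ m)) / (1 - q)) ^ 3 * (1 / 2) ^ (k + m)) := by
    intro m
    induction m with
    | zero => simpa using hI
    | succ m ih =>
      set B := A + C * q ^ k * (q * (1 - q ^ m)) / (1 - q) with hBdef
      have hqm : q ^ m ≤ 1 := pow_le_one₀ hq0.le hq1.le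
      have hB0 : 0 ≤ B := by
        have : 0 ≤ 1 - q ^ m := by linarith
        have : 0 < 1 - q := by linarith
        positivity
      have e1 : (1 / 2 : ℝ) ^ (k + m) = 2 * (1 / 2) ^ (k + (m + 1)) := by ring
      have e2 : B ^ 3 * (1 / 2) ^ (k + m) = (B * r ^ (k + m)) ^ 3 := by
        rw [mul_pow, ← pow_mul, mul_comm (k + m) 3, pow_mul, hr3]
      rw [e2, e1] at ih
      have := descent_step hs hC hfm hB (δ := (1 / 2) ^ (k + (m + 1))) (by positivity)
        (by
          rw [← add_assoc, pow_succ]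
          have : (1 / 2 : ℝ) ^ (k + m) ≤ 1 := pow_le_one₀ (by norm_num) (by norm_num)
          linarith) (by positivity) hr0 (by rw [hr3]; norm_num) ih
      refine this.trans (ENNReal.ofReal_le_ofReal (le_of_eq ?_))
      have e3 : ((1 / 2 : ℝ) ^ (k + (m + 1))) ^ α = (q * r) ^ (k + (m + 1)) := by
        rw [← hqr, ← Real.rpow_natCast, ← Real.rpow_natCast, ← Real.rpow_mul (by norm_num),
          ← Real.rpow_mul (by norm_num), mul_comm]
      rw [e3]
      have e4 : (1 / 2 : ℝ) ^ (k + (m + 1)) = (r ^ (k + (m + 1))) ^ 3 := by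
        rw [← pow_mul, mul_comm _ 3, pow_mul, hr3]
      rw [e4, ← mul_pow]
      congr 1
      have : (1 - q) ≠ 0 := by linarith
      rw [hBdef, mul_pow]
      field_simp
      ring
  intro n hn
  obtain ⟨m, rfl⟩ := Nat.exists_eq_add_of_le hn
  refine (key m).trans (ENNReal.ofReal_le_ofReal ?_)
  have hqm : q ^ m ≤ 1 := pow_le_one₀ hq0.le hq1.le
  have hqm0 : 0 < q ^ m := by positivity
  have h1q : 0 < 1 - q := by linarith
  have h2 : 0 ≤ 1 - q ^ m := by linarith
  have h3 : q * (1 - q ^ m) ≤ 1 := by nlinarith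
  have h4 : C * q ^ k * (q * (1 - q ^ m)) / (1 - q) ≤ C * q ^ k / (1 - q) := by
    apply div_le_div_of_nonneg_right _ h1q.le
    exact mul_le_of_le_one_right (by positivity) h3
  gcongr

lemma Core.wD {N : ℕ} {τ0 τ α C : ℝ} {w : SpT N → ℝ} {u : SpT N → Spc N} (H : Core N τ0 τ α C w u)
    (i : Fin N) {s : ℝ} (hs : s * s = 1) : DirB τ α C i s w := by
  intro h hh
  refine (H.wB _).trans (le_of_eq ?_)
  have : |s| = 1 := by
    have := abs_mul_abs_self s; rw [hs] at this; nlinarith [abs_nonneg s]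
  rw [norm_smul, norm_ee, Real.norm_eq_abs, abs_mul, this, abs_of_pos hh]; simp

lemma Core.uD {N : ℕ} {τ0 τ α C : ℝ} {w : SpT N → ℝ} {u : SpT N → Spc N} (H : Core N τ0 τ α C w u)
    (i : Fin N) {s : ℝ} (hs : s * s = 1) : DirB τ α C i s (fun z => u z i) := by
  intro h hh
  refine le_trans ?_ ((H.uB ((s * h) • ee i)).trans (le_of_eq ?_))
  · refine lintegral_mono fun z => ?_
    gcongr
    rw [← PiLp.sub_apply, enorm_le_iff_norm_le]
    exact PiLp.norm_apply_le _ i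
  have : |s| = 1 := by
    have := abs_mul_abs_self s; rw [hs] at this; nlinarith [abs_nonneg s]
  rw [norm_smul, norm_ee, Real.norm_eq_abs, abs_mul, this, abs_of_pos hh]; simp

/-! ### Periodic smooth approximation -/

lemma SS_full (N : ℕ) (τ : ℝ) (i : Fin N) : SS N τ i (Icc (-1) 1) = KK N τ := by
  ext z; exact ⟨fun h => h.1, fun h => ⟨h, h.2 i⟩⟩

lemma hyper_null {N : ℕ} {τ : ℝ} (i : Fin N) (c : ℝ) :
    ∀ᵐ z ∂(volume.restrict (KK N τ)), z.2 i ≠ c := by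
  have hm : MeasurableSet {z : SpT N | z.2 i = c} := measurable_coord i (measurableSet_singleton c)
  have h := slice_eq (N := N) (τ := τ) (i := i) (I := Icc (-1) 1) subset_rfl measurableSet_Icc
    ({z : SpT N | z.2 i = c}.indicator 1) (measurable_one.indicator hm)
  rw [SS_full] at h
  have h0 : ∀ z : SpT N, ∫⁻ s in Icc (-1:ℝ) 1,
      {z : SpT N | z.2 i = c}.indicator (1 : SpT N → ℝ≥0∞) (z + (s - z.2 i) • ee i) = 0 := by
    intro z
    rw [lintegral_eq_zero_iff']
    · have : ∀ᵐ s : ℝ, s ≠ c := by simp [ae_iff]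
      filter_upwards [ae_restrict_of_ae this] with s hs
      rw [indicator_of_notMem]; · rfl
      simpa using hs
    · exact ((measurable_one.indicator hm).comp (by fun_prop)).aemeasurable
  simp only [h0, lintegral_zero] at h
  have h2 : ∫⁻ z in KK N τ, {z : SpT N | z.2 i = c}.indicator (1 : SpT N → ℝ≥0∞) z = 0 := by
    rcases mul_eq_zero.1 h.symm with h | h
    · norm_num [Real.volume_Icc] at h
    · exact h
  rw [lintegral_indicator_one hm] at h2
  rw [ae_iff]
  simpa using h2

/-- embedding of the cylinder over the torus -/
def emb {N : ℕ} (z : SpT N) : ℝ × (Fin N → ℂ) :=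
  (z.1, fun j => Complex.exp ((Real.pi * z.2 j : ℝ) * Complex.I))

lemma emb_contDiff {N : ℕ} : ContDiff ℝ 1 (emb : SpT N → _) := by
  have hc : ∀ j, ContDiff ℝ 1 (fun z : SpT N => z.2 j) := fun j =>
    ((EuclideanSpace.proj j : Spc N →L[ℝ] ℝ).contDiff).comp contDiff_snd
  refine contDiff_fst.prodMk (contDiff_pi.2 fun j => ?_)
  have h1 : ContDiff ℝ 1 (fun z : SpT N => ((Real.pi * z.2 j : ℝ) : ℂ)) :=
    Complex.ofRealCLM.contDiff.comp (contDiff_const.mul (hc j))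
  exact (h1.mul contDiff_const).cexp

lemma emb_per {N : ℕ} (z : SpT N) (i : Fin N) : emb (z + (2 : ℝ) • ee i) = emb z := by
  refine Prod.ext (by simp [emb]) ?_
  funext j
  by_cases h : j = i
  · subst h
    have : ((Real.pi * (z + (2 : ℝ) • ee j).2 j : ℝ) : ℂ) * Complex.I
      = ((Real.pi * z.2 j : ℝ) : ℂ) * Complex.I + 2 * Real.pi * Complex.I := by
      simp; ring
    simp only [emb, this, Complex.exp_add, Complex.exp_two_pi_mul_I, mul_one]
  · simp [emb, h]

def unemb {N : ℕ} (v : ℝ × (Fin N → ℂ)) : SpT N :=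
  (v.1, WithLp.toLp 2 fun j => (v.2 j).arg / Real.pi)

lemma unemb_meas {N : ℕ} : Measurable (unemb : _ → SpT N) := by
  refine measurable_fst.prodMk ?_
  refine (by fun_prop : Measurable (WithLp.toLp 2 : (Fin N → ℝ) → Spc N)).comp ?_
  refine measurable_pi_lambda _ fun j => ?_
  exact (Complex.measurable_arg.comp ((measurable_pi_apply j).comp measurable_snd)).div_const _

lemma unemb_emb {N : ℕ} (z : SpT N) (hz : ∀ j, z.2 j ∈ Ioc (-1 : ℝ) 1) : unemb (emb z) = z := by
  refine Prod.ext rfl ?_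
  ext j
  have hpi := Real.pi_pos
  simp only [unemb, emb]
  rw [Complex.arg_exp_mul_I, toIocMod_eq_self _ |>.2]
  · field_simp
  · constructor <;> nlinarith [(hz j).1, (hz j).2]

lemma exists_per_approx {N : ℕ} {τ : ℝ} {w : SpT N → ℝ} (hwm : Measurable w)
    (hw : MemLp w 3 (volume.restrict (KK N τ))) {ε : ℝ} (hε : 0 < ε) :
    ∃ Ψ : SpT N → ℝ, ContDiff ℝ 1 Ψ ∧ PerST Ψ ∧
      eLpNorm (w - Ψ) 3 (volume.restrict (KK N τ)) ≤ ENNReal.ofReal ε := by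
  set μ := volume.restrict (KK N τ) with hμ
  have hem : Measurable (emb : SpT N → _) := emb_contDiff.continuous.measurable
  have hae : (w ∘ unemb) ∘ emb =ᵐ[μ] w := by
    have h1 : ∀ᵐ z ∂μ, ∀ j, z.2 j ≠ -1 := ae_all_iff.2 fun j => hyper_null j _
    filter_upwards [h1, ae_restrict_mem (KK_meas N τ)] with z hz hK
    have : unemb (emb z) = z := unemb_emb z fun j =>
      ⟨lt_of_le_of_ne (hK.2 j).1 (hz j).symm, (hK.2 j).2⟩
    simp [this]
  have hM : MemLp (w ∘ unemb) 3 (μ.map emb) := by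
    rw [memLp_map_measure_iff (hwm.comp unemb_meas).aestronglyMeasurable hem.aemeasurable]
    exact (memLp_congr_ae hae).2 hw
  haveI : IsFiniteMeasure (μ.map (emb : SpT N → _)) := inferInstance
  obtain ⟨g, -, hg, hgn⟩ := hM.exist_eLpNorm_sub_le (by norm_num) (by norm_num) hε
  refine ⟨g ∘ emb, (hg.of_le (by exact_mod_cast le_top)).comp emb_contDiff, fun z i => by simp [emb_per], ?_⟩
  rw [eLpNorm_map_measure ((hwm.comp unemb_meas).aestronglyMeasurable.sub hg.continuous.aestronglyMeasurable)
    hem.aemeasurable] at hgn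
  refine le_trans (le_of_eq (eLpNorm_congr_ae ?_)) hgn
  filter_upwards [hae] with z hz
  simp only [Function.comp, Pi.sub_apply] at hz ⊢
  rw [hz]

/-! ### Selection of face approximations -/

lemma enn_cube_add (a b : ℝ≥0∞) : (a + b) ^ 3 ≤ 4 * (a ^ 3 + b ^ 3) := by
  have := ENNReal.rpow_add_le_mul_rpow_add_rpow a b (p := 3) (by norm_num)
  norm_num at this
  exact_mod_cast this

lemma enorm_cube_sub {E : Type*} [NormedAddCommGroup E] (a b c : E) :
    ‖a - c‖ₑ ^ 3 ≤ 4 * (‖a - b‖ₑ ^ 3 + ‖b - c‖ₑ ^ 3) := by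
  refine le_trans ?_ (enn_cube_add _ _)
  gcongr
  calc ‖a - c‖ₑ = ‖(a - b) + (b - c)‖ₑ := by congr 1; abel
    _ ≤ _ := enorm_add_le _ _

lemma enn_young (a b c : ℝ≥0∞) : a * b * c ≤ a ^ 3 + b ^ 3 + c ^ 3 := by
  have hm : ∀ m : ℝ≥0∞, a ≤ m → b ≤ m → c ≤ m → m ^ 3 ≤ a ^ 3 + b ^ 3 + c ^ 3 →
      a * b * c ≤ a ^ 3 + b ^ 3 + c ^ 3 := by
    intro m h1 h2 h3 h4
    refine le_trans ?_ h4
    calc a * b * c ≤ m * m * m := by gcongr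
      _ = m ^ 3 := by ring
  rcases le_total a b with h1 | h1
  · rcases le_total b c with h2 | h2
    · exact hm c (h1.trans h2) h2 le_rfl le_add_self
    · exact hm b h1 le_rfl h2 (le_trans le_add_self le_self_add)
  · rcases le_total a c with h2 | h2
    · exact hm c h2 (h1.trans h2) le_rfl le_add_self
    · exact hm a le_rfl h1 h2 (le_trans le_self_add le_self_add)

lemma sgn_cases {s : ℝ} (hs : s * s = 1) : s = 1 ∨ s = -1 := by
  have : (s - 1) * (s + 1) = 0 := by linarith
  rcases mul_eq_zero.1 this with h | h
  · left; linarith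
  · right; linarith

lemma Ist_vol {s δ : ℝ} (hs : s * s = 1) (hδ1 : δ ≤ 1) :
    volume (Ist s δ) = ENNReal.ofReal δ := by
  rcases sgn_cases hs with rfl | rfl
  · have : Ist 1 δ = Ico (-1) (δ - 1) := by
      ext x; simp only [Ist, mem_ofPred_eq, mem_Icc, mem_Ico]
      constructor
      · rintro ⟨⟨h1, h2⟩, h3⟩; exact ⟨h1, by linarith⟩
      · rintro ⟨h1, h2⟩; exact ⟨⟨h1, by linarith⟩, by linarith⟩
    rw [this, Real.volume_Ico]; congr 1; ring
  · have : Ist (-1) δ = Ioc (1 - δ) 1 := by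
      ext x; simp only [Ist, mem_ofPred_eq, mem_Icc, mem_Ioc]
      constructor
      · rintro ⟨⟨h1, h2⟩, h3⟩; exact ⟨by linarith, by linarith⟩
      · rintro ⟨h1, h2⟩; exact ⟨⟨by linarith, by linarith⟩, by linarith⟩
    rw [this, Real.volume_Ioc]; congr 1; ring

lemma Ist_diff {s δ x y : ℝ} (hs : s * s = 1) (hx : x ∈ Ist s δ) (hy : y ∈ Ist s δ) :
    |y - x| ≤ δ := by
  have h1 := hx.1; have h2 := hx.2; have h3 := hy.1; have h4 := hy.2
  rw [abs_le]
  rcases sgn_cases hs with rfl | rfl <;> constructor <;> linarith [h1.1, h1.2, h3.1, h3.2]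

lemma select {N : ℕ} {τ0 τ α C : ℝ} {w : SpT N → ℝ} {u : SpT N → Spc N} (H : Core N τ0 τ α C w u)
    (i : Fin N) {s : ℝ} (hs : s * s = 1) {δ : ℝ} (hδ : 0 < δ) (hδ1 : δ ≤ 1) :
    ∃ ψ : SpT N → ℝ, ContDiff ℝ 1 ψ ∧ PerST ψ ∧ (∀ z (h : ℝ), ψ (z + h • ee i) = ψ z) ∧
      ∫⁻ z in SS N τ i (Ist s δ), ‖w z - ψ z‖ₑ ^ 3 ≤ ENNReal.ofReal ((3 * (C * δ ^ α)) ^ 3) := by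
  have hC := H.hC
  have hm := Ist_meas s δ
  have hsub := Ist_sub s δ
  set I := Ist s δ with hI
  set e : ℝ := C * δ ^ α with he
  have he0 : 0 < e := by positivity
  obtain ⟨Ψ, hΨ, hΨp, hΨn⟩ := exists_per_approx H.wm H.wL he0
  have hΨm : Measurable Ψ := hΨ.continuous.measurable
  have hwm := H.wm
  -- first piece
  have p1 : ∫⁻ z in SS N τ i I, ∫⁻ σ in I, ‖w z - w (z + (σ - z.2 i) • ee i)‖ₑ ^ 3
      ≤ ENNReal.ofReal (2 * δ) * ENNReal.ofReal (e ^ 3) := by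
    rw [slice_pair hsub hm (fun a b => ‖w a - w b‖ₑ ^ 3) (by
      exact (((hwm.comp measurable_fst).sub (hwm.comp measurable_snd)).enorm).pow_const 3)]
    have hle : ∀ h : ℝ, (∫⁻ z in SS N τ i I ∩ {z | z + h • ee i ∈ SS N τ i I},
        ‖w z - w (z + h • ee i)‖ₑ ^ 3) ≤ (Icc (-δ) δ).indicator (fun _ => ENNReal.ofReal (e ^ 3)) h := by
      intro h
      by_cases hh : |h| ≤ δ
      · rw [indicator_of_mem (show h ∈ Icc (-δ) δ from abs_le.1 hh)]
        calc _ = ∫⁻ z in SS N τ i I ∩ {z | z + h • ee i ∈ SS N τ i I},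
                ‖w (z + h • ee i) - w z‖ₑ ^ 3 := by simp_rw [enorm_sub_rev]
          _ ≤ ∫⁻ z in KK N τ ∩ {z | z + h • ee i ∈ KK N τ},
                ‖w (z + h • ee i) - w z‖ₑ ^ 3 :=
              lintegral_mono_set fun z hz => ⟨hz.1.1, hz.2.1⟩
          _ ≤ _ := H.wB _
          _ ≤ _ := by
            apply ENNReal.ofReal_le_ofReal
            rw [norm_smul, norm_ee, mul_one, Real.norm_eq_abs]
            have : |h| ^ α ≤ δ ^ α := Real.rpow_le_rpow (abs_nonneg _) hh (by linarith [H.hα])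
            rw [he]
            gcongr
      · have : SS N τ i I ∩ {z | z + h • ee i ∈ SS N τ i I} = ∅ := by
          ext z
          simp only [mem_inter_iff, mem_ofPred_eq, mem_empty_iff_false, iff_false]
          rintro ⟨h1, h2⟩
          apply hh
          have := Ist_diff hs h1.2 h2.2
          simpa using this
        rw [this]; simp
    refine (lintegral_mono hle).trans ?_
    rw [lintegral_indicator measurableSet_Icc]
    rw [setLIntegral_const, Real.volume_Icc, mul_comm]
    apply le_of_eq; congr 2; ring
  have p2 : ∫⁻ z in SS N τ i I, ∫⁻ σ in I, ‖w (z + (σ - z.2 i) • ee i) - Ψ (z + (σ - z.2 i) • ee i)‖ₑ ^ 3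
      ≤ ENNReal.ofReal δ * ENNReal.ofReal (e ^ 3) := by
    rw [slice_eq hsub hm (fun z => ‖w z - Ψ z‖ₑ ^ 3) ((hwm.sub hΨm).enorm.pow_const 3), Ist_vol hs hδ1]
    gcongr
    refine (lintegral_mono_set fun z hz => hz.1).trans (le_eLpNorm_three he0.le hΨn)
  have mA : Measurable (fun q : SpT N × ℝ => q.1 + (q.2 - q.1.2 i) • (ee i : SpT N)) := by
    have := (measurable_coord i).comp (measurable_fst : Measurable (Prod.fst : SpT N × ℝ → _))
    exact measurable_fst.add ((measurable_snd.sub this).smul_const _)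
  have hW : Measurable (fun q : SpT N × ℝ => ‖w q.1 - Ψ (q.1 + (q.2 - q.1.2 i) • ee i)‖ₑ ^ 3) :=
    (((hwm.comp measurable_fst).sub (hΨm.comp mA)).enorm).pow_const 3
  have mAz : ∀ z : SpT N, Measurable (fun σ : ℝ => z + (σ - z.2 i) • (ee i : SpT N)) := fun z => by
    fun_prop
  have hq1 : Measurable (fun q : SpT N × ℝ => ‖w q.1 - w (q.1 + (q.2 - q.1.2 i) • ee i)‖ₑ ^ 3) :=
    (((hwm.comp measurable_fst).sub (hwm.comp mA)).enorm).pow_const 3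
  have p3 : ∫⁻ σ in I, ∫⁻ z in SS N τ i I, ‖w z - Ψ (z + (σ - z.2 i) • ee i)‖ₑ ^ 3
      ≤ ENNReal.ofReal (12 * δ * e ^ 3) := by
    rw [lintegral_lintegral_swap
      (f := fun (σ : ℝ) (z : SpT N) => ‖w z - Ψ (z + (σ - z.2 i) • ee i)‖ₑ ^ 3)
      (hW.comp measurable_swap).aemeasurable]
    calc _ ≤ ∫⁻ z in SS N τ i I, 4 * ((∫⁻ σ in I, ‖w z - w (z + (σ - z.2 i) • ee i)‖ₑ ^ 3)
            + ∫⁻ σ in I, ‖w (z + (σ - z.2 i) • ee i) - Ψ (z + (σ - z.2 i) • ee i)‖ₑ ^ 3) := by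
          refine lintegral_mono fun z => ?_
          have m1 : Measurable fun σ : ℝ => ‖w z - w (z + (σ - z.2 i) • ee i)‖ₑ ^ 3 :=
            (((hwm.comp (mAz z)).const_sub _).enorm).pow_const 3
          rw [← lintegral_add_left m1, ← lintegral_const_mul']
          · exact lintegral_mono fun σ => enorm_cube_sub _ _ _
          · norm_num
      _ = 4 * ((∫⁻ z in SS N τ i I, ∫⁻ σ in I, ‖w z - w (z + (σ - z.2 i) • ee i)‖ₑ ^ 3)
            + ∫⁻ z in SS N τ i I, ∫⁻ σ in I,
              ‖w (z + (σ - z.2 i) • ee i) - Ψ (z + (σ - z.2 i) • ee i)‖ₑ ^ 3) := by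
          rw [lintegral_const_mul' _ _ (by norm_num), lintegral_add_left]
          exact hq1.lintegral_prod_right'
      _ ≤ 4 * (ENNReal.ofReal (2 * δ) * ENNReal.ofReal (e ^ 3)
            + ENNReal.ofReal δ * ENNReal.ofReal (e ^ 3)) := by gcongr
      _ = ENNReal.ofReal (12 * δ * e ^ 3) := by
          rw [← ENNReal.ofReal_mul (by positivity), ← ENNReal.ofReal_mul (by positivity),
            ← ENNReal.ofReal_add (by positivity) (by positivity),
            show (4 : ℝ≥0∞) = ENNReal.ofReal 4 by simp, ← ENNReal.ofReal_mul (by norm_num)]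
          congr 1; ring
  have hvol := Ist_vol hs hδ1
  obtain ⟨σ, -, hσ⟩ := exists_le_setLAverage (μ := volume) (s := I)
    (f := fun σ => ∫⁻ z in SS N τ i I, ‖w z - Ψ (z + (σ - z.2 i) • ee i)‖ₑ ^ 3)
    (by rw [hvol]; simpa using hδ) (by rw [hvol]; exact ENNReal.ofReal_ne_top)
    hW.lintegral_prod_left'.aemeasurable
  refine ⟨fun z => Ψ (z + (σ - z.2 i) • ee i), ?_, ?_, ?_, ?_⟩
  · refine hΨ.comp ?_
    have hc : ContDiff ℝ 1 (fun z : SpT N => z.2 i) :=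
      ((EuclideanSpace.proj i : Spc N →L[ℝ] ℝ).contDiff).comp contDiff_snd
    exact contDiff_id.add ((contDiff_const.sub hc).smul contDiff_const)
  · intro z j
    by_cases hj : j = i
    · subst hj
      dsimp only
      congr 1
      have : (z + (2:ℝ) • ee j).2 j = z.2 j + 2 := by simp
      rw [this]
      module
    · have : (z + (2:ℝ) • ee j).2 i = z.2 i := by simp [Ne.symm hj]
      dsimp only
      rw [this, add_right_comm, hΨp]
  · intro z h
    dsimp only
    congr 1
    have : (z + h • ee i).2 i = z.2 i + h := by simp
    rw [this]
    module
  · refine hσ.trans ?_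
    rw [setLAverage_eq, hvol]
    refine (ENNReal.div_le_div_right p3 _).trans ?_
    rw [← ENNReal.ofReal_div_of_pos hδ]
    apply ENNReal.ofReal_le_ofReal
    rw [show 12 * δ * e ^ 3 / δ = 12 * e ^ 3 by field_simp]
    nlinarith [pow_pos he0 3]

/-! ### Bounds near the faces -/

lemma strip_bound {N : ℕ} {τ α C : ℝ} (i : Fin N) {f : SpT N → ℝ} (hC : 0 ≤ C)
    (hα : 1 / 3 < α) (hfm : Measurable f) (hfL : MemLp f 3 (volume.restrict (KK N τ)))
    (hB : ∀ s : ℝ, s * s = 1 → DirB τ α C i s f) :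
    ∃ D : ℝ, 0 < D ∧ ∀ s : ℝ, s * s = 1 → ∀ n : ℕ,
      ∫⁻ z in SS N τ i (Ist s ((1 / 2) ^ n)), ‖f z‖ₑ ^ 3 ≤ ENNReal.ofReal (D * (1 / 2) ^ n) := by
  set A : ℝ := (eLpNorm f 3 (volume.restrict (KK N τ))).toReal with hA
  set q : ℝ := (1 / 2 : ℝ) ^ (α - 1 / 3) with hq
  have hq1 : q < 1 := Real.rpow_lt_one (by norm_num) (by norm_num) (by linarith)
  have h1q : 0 < 1 - q := by linarith
  have hA0 : 0 ≤ A := ENNReal.toReal_nonneg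
  refine ⟨(A + C * q ^ 0 / (1 - q)) ^ 3 + 1, by positivity, fun s hs n => ?_⟩
  have := descent hs hC hα hfm (hB s hs) hA0 0 (by
    refine (lintegral_mono_set (t := KK N τ) fun z hz => hz.1).trans ?_
    simp only [pow_zero, mul_one]
    apply le_eLpNorm_three hA0
    rw [hA, ENNReal.ofReal_toReal hfL.eLpNorm_ne_top]) n (Nat.zero_le _)
  refine this.trans (ENNReal.ofReal_le_ofReal ?_)
  gcongr
  exact le_add_of_nonneg_right zero_le_one

lemma face_approx {N : ℕ} {τ0 τ α C : ℝ} {w : SpT N → ℝ} {u : SpT N → Spc N}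
    (H : Core N τ0 τ α C w u) (i : Fin N) {s : ℝ} (hs : s * s = 1) {κ : ℝ} (hκ : 0 < κ) :
    ∃ (ψ : SpT N → ℝ) (k : ℕ), ContDiff ℝ 1 ψ ∧ PerST ψ ∧ (∀ z (h : ℝ), ψ (z + h • ee i) = ψ z) ∧
      ∀ n, k ≤ n → ∫⁻ z in SS N τ i (Ist s ((1 / 2) ^ n)), ‖w z - ψ z‖ₑ ^ 3
        ≤ ENNReal.ofReal (κ ^ 3 * (1 / 2) ^ n) := by
  have hC := H.hC
  set q : ℝ := (1 / 2 : ℝ) ^ (α - 1 / 3) with hq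
  have hq0 : 0 < q := by positivity
  have hq1 : q < 1 := Real.rpow_lt_one (by norm_num) (by norm_num) (by linarith [H.hα])
  have h1q : 0 < 1 - q := by linarith
  set r : ℝ := (1 / 2 : ℝ) ^ (1 / 3 : ℝ) with hr
  have hr3 : r ^ 3 = 1 / 2 := by
    rw [hr, ← Real.rpow_natCast, ← Real.rpow_mul (by norm_num)]; norm_num
  have hqr : (1 / 2 : ℝ) ^ α = q * r := by
    rw [hq, hr, ← Real.rpow_add (by norm_num)]; congr 1; ring
  obtain ⟨k, hk⟩ : ∃ k : ℕ, q ^ k < κ / (3 * C + C / (1 - q)) :=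
    exists_pow_lt_of_lt_one (by positivity) hq1
  rw [lt_div_iff₀ (by positivity)] at hk
  have hk1 : (1 / 2 : ℝ) ^ k ≤ 1 := pow_le_one₀ (by norm_num) (by norm_num)
  obtain ⟨ψ, h1, h2, h3, h4⟩ := select H i hs (δ := (1 / 2) ^ k) (by positivity) hk1
  refine ⟨ψ, k, h1, h2, h3, fun n hn => ?_⟩
  have e3 : ((1 / 2 : ℝ) ^ k) ^ α = (q * r) ^ k := by
    rw [← hqr, ← Real.rpow_natCast, ← Real.rpow_natCast, ← Real.rpow_mul (by norm_num),
      ← Real.rpow_mul (by norm_num), mul_comm]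
  have e5 : (3 * (C * ((1 / 2 : ℝ) ^ k) ^ α)) ^ 3 = (3 * C * q ^ k) ^ 3 * (1 / 2) ^ k := by
    rw [e3, ← hr3, ← pow_mul, mul_comm 3 k, pow_mul, ← mul_pow]; congr 1; rw [mul_pow]; ring
  rw [e5] at h4
  have hD : DirB τ α C i s (fun z => w z - ψ z) := by
    intro h hh
    refine le_trans (le_of_eq ?_) (H.wD i hs h hh)
    refine lintegral_congr fun z => ?_
    dsimp only
    rw [h3]; congr 2; ring
  have := descent hs hC.le H.hα (H.wm.sub h1.continuous.measurable) hD (A := 3 * C * q ^ k)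
    (by positivity) k h4 n hn
  refine this.trans (ENNReal.ofReal_le_ofReal ?_)
  have e6 : 3 * C * q ^ k + C * q ^ k / (1 - q) ≤ κ := by
    refine le_trans (le_of_eq ?_) hk.le; field_simp
  have : 0 ≤ 3 * C * q ^ k + C * q ^ k / (1 - q) := by positivity
  gcongr

lemma cross {N : ℕ} {τ : ℝ} (i : Fin N) {s : ℝ} (hs : s * s = 1) {δ : ℝ} (hδ : 0 < δ) (hδ1 : δ ≤ 1)
    {ψ : SpT N → ℝ} (hψ : ∀ z (h : ℝ), ψ (z + h • ee i) = ψ z) :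
    ∫⁻ z in SS N τ i (Ist s δ), ‖ψ z‖ₑ ^ 3 ≤ ∫⁻ z in SS N τ i (Ist (-s) (2 * δ)), ‖ψ z‖ₑ ^ 3 := by
  rw [← lintegral_indicator (SS_meas (Ist_meas _ _)), ← lintegral_indicator (SS_meas (Ist_meas _ _))]
  rw [← lintegral_add_right_eq_self (fun z => (SS N τ i (Ist (-s) (2 * δ))).indicator _ z)
    ((s * (2 - δ)) • ee i)]
  refine lintegral_mono fun z => ?_
  by_cases hz : z ∈ SS N τ i (Ist s δ)
  · have hm : z + (s * (2 - δ)) • ee i ∈ SS N τ i (Ist (-s) (2 * δ)) := by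
      have h1 := hz.2.1
      have h2 := hz.2.2
      have hm' : z.2 i + s * (2 - δ) ∈ Ist (-s) (2 * δ) := by
        rcases sgn_cases hs with rfl | rfl
        · refine ⟨⟨?_, ?_⟩, ?_⟩ <;> linarith [h1.1, h1.2]
        · refine ⟨⟨?_, ?_⟩, ?_⟩ <;> linarith [h1.1, h1.2]
      have hz' : z ∈ SS N τ i (Icc (-1) 1) := ⟨hz.1, h1⟩
      exact ⟨((SS_shift subset_rfl hz' _).2 hm'.1).1, by simpa using hm'⟩
    rw [indicator_of_mem hz, indicator_of_mem hm, hψ]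
  · rw [indicator_of_notMem hz]; exact zero_le

lemma face_strip {N : ℕ} {τ : ℝ} (i : Fin N) {s : ℝ} (hs : s * s = 1) {δ κ D : ℝ} (hδ : 0 < δ)
    (hδ1 : δ ≤ 1) (hκ : 0 < κ) (hκ1 : κ ≤ 1) (hD : 0 < D)
    {w v ψ ψ' : SpT N → ℝ} (hw : Measurable w) (hv : Measurable v) (hψm : Measurable ψ)
    (hψm' : Measurable ψ') (hψ : ∀ z (h : ℝ), ψ' (z + h • ee i) = ψ' z)
    (h1 : ∫⁻ z in SS N τ i (Ist s δ), ‖w z - ψ z‖ₑ ^ 3 ≤ ENNReal.ofReal (κ ^ 3 * δ))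
    (h2 : ∫⁻ z in SS N τ i (Ist (-s) (2 * δ)), ‖w z - ψ' z‖ₑ ^ 3 ≤ ENNReal.ofReal (κ ^ 3 * (2 * δ)))
    (h3 : ∫⁻ z in SS N τ i (Ist s δ), ‖w z‖ₑ ^ 3 ≤ ENNReal.ofReal (D * δ))
    (h4 : ∫⁻ z in SS N τ i (Ist (-s) (2 * δ)), ‖w z‖ₑ ^ 3 ≤ ENNReal.ofReal (D * (2 * δ)))
    (h5 : ∫⁻ z in SS N τ i (Ist s δ), ‖v z‖ₑ ^ 3 ≤ ENNReal.ofReal (D * δ)) :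
    ∫⁻ z in SS N τ i (Ist s δ), ‖(w z - ψ z) * (w z - ψ' z) * v z‖ₑ
      ≤ ENNReal.ofReal ((37 * D + 33) * κ * δ) := by
  have hk3 : κ ^ 3 ≤ 1 := pow_le_one₀ hκ.le hκ1
  have four : (4 : ℝ≥0∞) = ENNReal.ofReal 4 := by simp
  have c1 : ∫⁻ z in SS N τ i (Ist (-s) (2 * δ)), ‖ψ' z‖ₑ ^ 3 ≤ ENNReal.ofReal (8 * (D + 1) * δ) := by
    calc _ ≤ ∫⁻ z in SS N τ i (Ist (-s) (2 * δ)), 4 * (‖w z - ψ' z‖ₑ ^ 3 + ‖w z‖ₑ ^ 3) := by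
          refine lintegral_mono fun z => ?_
          have := enorm_cube_sub (ψ' z) (w z) 0
          simpa [enorm_sub_rev (ψ' z)] using this
      _ = 4 * ((∫⁻ z in SS N τ i (Ist (-s) (2 * δ)), ‖w z - ψ' z‖ₑ ^ 3)
            + ∫⁻ z in SS N τ i (Ist (-s) (2 * δ)), ‖w z‖ₑ ^ 3) := by
          rw [lintegral_const_mul' _ _ (by norm_num), lintegral_add_left]
          exact (hw.sub hψm').enorm.pow_const 3
      _ ≤ 4 * (ENNReal.ofReal (κ ^ 3 * (2 * δ)) + ENNReal.ofReal (D * (2 * δ))) := by gcongr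
      _ ≤ _ := by
          rw [← ENNReal.ofReal_add (by positivity) (by positivity), four,
            ← ENNReal.ofReal_mul (by norm_num)]
          apply ENNReal.ofReal_le_ofReal
          nlinarith
  have c2 := (cross (τ := τ) i hs hδ hδ1 hψ).trans c1
  have c3 : ∫⁻ z in SS N τ i (Ist s δ), ‖w z - ψ' z‖ₑ ^ 3 ≤ ENNReal.ofReal ((36 * D + 32) * δ) := by
    calc _ ≤ ∫⁻ z in SS N τ i (Ist s δ), 4 * (‖w z‖ₑ ^ 3 + ‖ψ' z‖ₑ ^ 3) := by
          refine lintegral_mono fun z => ?_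
          have := enorm_cube_sub (w z) 0 (ψ' z)
          simpa using this
      _ = 4 * ((∫⁻ z in SS N τ i (Ist s δ), ‖w z‖ₑ ^ 3)
            + ∫⁻ z in SS N τ i (Ist s δ), ‖ψ' z‖ₑ ^ 3) := by
          rw [lintegral_const_mul' _ _ (by norm_num), lintegral_add_left]
          exact hw.enorm.pow_const 3
      _ ≤ 4 * (ENNReal.ofReal (D * δ) + ENNReal.ofReal (8 * (D + 1) * δ)) := by gcongr
      _ ≤ _ := by
          rw [← ENNReal.ofReal_add (by positivity) (by positivity), four,
            ← ENNReal.ofReal_mul (by norm_num)]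
          apply ENNReal.ofReal_le_ofReal
          nlinarith
  have hyo : ∀ z, ‖(w z - ψ z) * (w z - ψ' z) * v z‖ₑ ≤
      ENNReal.ofReal κ * (ENNReal.ofReal ((κ⁻¹) ^ 3) * ‖w z - ψ z‖ₑ ^ 3 + ‖w z - ψ' z‖ₑ ^ 3 + ‖v z‖ₑ ^ 3) := by
    intro z
    have := enn_young (ENNReal.ofReal κ⁻¹ * ‖w z - ψ z‖ₑ) ‖w z - ψ' z‖ₑ ‖v z‖ₑ
    rw [mul_pow, ← ENNReal.ofReal_pow (by positivity)] at this
    refine le_trans (le_of_eq ?_) (mul_le_mul_right this (ENNReal.ofReal κ))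
    rw [enorm_mul, enorm_mul, ← mul_assoc, ← mul_assoc, ← mul_assoc, ← ENNReal.ofReal_mul hκ.le,
      mul_inv_cancel₀ hκ.ne']
    simp
  have mA : Measurable (fun z => ‖w z - ψ z‖ₑ ^ 3) := (hw.sub hψm).enorm.pow_const 3
  have mB : Measurable (fun z => ‖w z - ψ' z‖ₑ ^ 3) := (hw.sub hψm').enorm.pow_const 3
  calc _ ≤ ∫⁻ z in SS N τ i (Ist s δ), ENNReal.ofReal κ * (ENNReal.ofReal ((κ⁻¹) ^ 3) * ‖w z - ψ z‖ₑ ^ 3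
            + ‖w z - ψ' z‖ₑ ^ 3 + ‖v z‖ₑ ^ 3) := lintegral_mono hyo
    _ = ENNReal.ofReal κ * (ENNReal.ofReal ((κ⁻¹) ^ 3) * (∫⁻ z in SS N τ i (Ist s δ), ‖w z - ψ z‖ₑ ^ 3)
          + (∫⁻ z in SS N τ i (Ist s δ), ‖w z - ψ' z‖ₑ ^ 3)
          + ∫⁻ z in SS N τ i (Ist s δ), ‖v z‖ₑ ^ 3) := by
        rw [lintegral_const_mul' _ _ ENNReal.ofReal_ne_top, lintegral_add_left
            (f := fun z => ENNReal.ofReal ((κ⁻¹) ^ 3) * ‖w z - ψ z‖ₑ ^ 3 + ‖w z - ψ' z‖ₑ ^ 3)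
            ((mA.const_mul _).add mB),
          lintegral_add_left (mA.const_mul _), lintegral_const_mul' _ _ ENNReal.ofReal_ne_top]
    _ ≤ ENNReal.ofReal κ * (ENNReal.ofReal ((κ⁻¹) ^ 3) * ENNReal.ofReal (κ ^ 3 * δ)
          + ENNReal.ofReal ((36 * D + 32) * δ) + ENNReal.ofReal (D * δ)) := by gcongr
    _ = _ := by
        rw [← ENNReal.ofReal_mul (by positivity), ← ENNReal.ofReal_add (by positivity) (by positivity),
          ← ENNReal.ofReal_add (by positivity) (by positivity), ← ENNReal.ofReal_mul hκ.le]
        congr 1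
        field_simp
        ring

lemma face_quad {N : ℕ} {τ0 τ α C : ℝ} {w : SpT N → ℝ} {u : SpT N → Spc N}
    (H : Core N τ0 τ α C w u) (i : Fin N) :
    ∃ D : ℝ, 0 < D ∧ ∀ κ : ℝ, 0 < κ → κ ≤ 1 → ∃ (P M : SpT N → ℝ) (k : ℕ),
      ContDiff ℝ 1 P ∧ PerST P ∧ ContDiff ℝ 1 M ∧ PerST M ∧
      ∀ n, k ≤ n → ∀ s : ℝ, s * s = 1 → ∫⁻ z in SS N τ i (Ist s ((1 / 2) ^ n)),
        ‖(w z ^ 2 - P z * w z + M z) * u z i‖ₑ ≤ ENNReal.ofReal (D * κ * (1 / 2) ^ n) := by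
  have hum : Measurable fun z => u z i :=
    (EuclideanSpace.proj i : Spc N →L[ℝ] ℝ).continuous.measurable.comp H.um
  obtain ⟨D1, hD1, b1⟩ := strip_bound (τ := τ) i H.hC.le H.hα H.wm H.wL (fun s hs => H.wD i hs)
  obtain ⟨D2, hD2, b2⟩ := strip_bound (τ := τ) (f := fun z => u z i) i H.hC.le H.hα hum
    (H.uL.of_le hum.aestronglyMeasurable (ae_of_all _ fun z => PiLp.norm_apply_le _ i))
    (fun s hs => H.uD i hs)
  set D := D1 + D2 with hD
  have hD0 : 0 < D := by positivity
  refine ⟨37 * D + 33, by positivity, fun κ hκ hκ1 => ?_⟩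
  obtain ⟨ψ, k, c1, p1, i1, a1⟩ := face_approx H i (s := 1) (by norm_num) hκ
  obtain ⟨ψ', k', c2, p2, i2, a2⟩ := face_approx H i (s := -1) (by norm_num) hκ
  refine ⟨fun z => ψ z + ψ' z, fun z => ψ z * ψ' z, max k k' + 1, c1.add c2, fun z j => by simp [p1 z j, p2 z j],
    c1.mul c2, fun z j => by simp [p1 z j, p2 z j], fun n hn s hs => ?_⟩
  obtain ⟨m, rfl⟩ := Nat.exists_eq_add_of_le' (le_trans le_add_self hn)
  have hkm : k ≤ m ∧ k' ≤ m := by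
    constructor
    · have := le_max_left k k'; omega
    · have := le_max_right k k'; omega
  have e1 : 2 * (1 / 2 : ℝ) ^ (m + 1) = (1 / 2) ^ m := by ring
  have hd1 : (1 / 2 : ℝ) ^ (m + 1) ≤ 1 := pow_le_one₀ (by norm_num) (by norm_num)
  have B1 : ∀ s : ℝ, s * s = 1 → ∀ n : ℕ,
      ∫⁻ z in SS N τ i (Ist s ((1 / 2) ^ n)), ‖w z‖ₑ ^ 3 ≤ ENNReal.ofReal (D * (1 / 2) ^ n) :=
    fun s hs n => (b1 s hs n).trans (ENNReal.ofReal_le_ofReal (by gcongr; linarith))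
  have B2 : ∀ s : ℝ, s * s = 1 → ∀ n : ℕ,
      ∫⁻ z in SS N τ i (Ist s ((1 / 2) ^ n)), ‖u z i‖ₑ ^ 3 ≤ ENNReal.ofReal (D * (1 / 2) ^ n) :=
    fun s hs n => (b2 s hs n).trans (ENNReal.ofReal_le_ofReal (by gcongr; linarith))
  have hs' : (-s) * (-s) = 1 := by linarith
  have m1 := c1.continuous.measurable
  have m2 := c2.continuous.measurable
  rcases sgn_cases hs with rfl | rfl
  · have := face_strip (τ := τ) i hs (by positivity) hd1 hκ hκ1 hD0 H.wm hum m1 m2 i2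
      (a1 (m + 1) (by omega)) (by rw [e1]; exact a2 m hkm.2) (B1 _ hs _) (by rw [e1]; exact B1 _ hs' _)
      (B2 _ hs _)
    refine le_trans (le_of_eq (lintegral_congr fun z => ?_)) this
    congr 1; ring
  · have := face_strip (τ := τ) i hs (by positivity) hd1 hκ hκ1 hD0 H.wm hum m2 m1 i1
      (a2 (m + 1) (by omega)) (by rw [e1, neg_neg]; exact a1 m hkm.1) (B1 _ hs _)
      (by rw [e1]; exact B1 _ hs' _) (B2 _ hs _)
    refine le_trans (le_of_eq (lintegral_congr fun z => ?_)) this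
    congr 1; ring

/-! ### The face step -/

/-- the dominating function -/
def GG {N : ℕ} (w : SpT N → ℝ) (u : SpT N → Spc N) (z : SpT N) : ℝ := (1 + |w z| + ‖u z‖) ^ 3

lemma GG_int {N : ℕ} {τ0 τ α C : ℝ} {w : SpT N → ℝ} {u : SpT N → Spc N}
    (H : Core N τ0 τ α C w u) : IntegrableOn (GG w u) (KK N τ) := by
  have h : MemLp (fun z => 1 + |w z| + ‖u z‖) 3 (volume.restrict (KK N τ)) :=
    ((memLp_const (1:ℝ)).add H.wL.norm).add H.uL.norm
  have := h.integrable_norm_pow (by norm_num)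
  refine this.congr (ae_of_all _ fun z => ?_)
  simp only [GG, Real.norm_eq_abs]
  rw [abs_of_nonneg (by positivity)]

lemma GG_ge {N : ℕ} (w : SpT N → ℝ) (u : SpT N → Spc N) (z : SpT N) :
    w z ^ 2 * (1 + ‖u z‖) ≤ GG w u z ∧ |w z| * (1 + ‖u z‖) ≤ GG w u z ∧ 1 + ‖u z‖ ≤ GG w u z := by
  unfold GG
  have h1 := abs_nonneg (w z)
  have h2 := norm_nonneg (u z)
  rw [← sq_abs (w z)]
  set a := |w z|
  set b := ‖u z‖
  have e : (1 + a + b) ^ 3 = (1 + a + b) ^ 2 * (1 + a + b) := by ring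
  have h3 : a ^ 2 ≤ (1 + a + b) ^ 2 := by gcongr; linarith
  have h4 : a ≤ (1 + a + b) ^ 2 := by nlinarith
  have h5 : 1 ≤ (1 + a + b) ^ 2 := by nlinarith
  refine ⟨?_, ?_, ?_⟩
  · rw [e]; gcongr; linarith
  · rw [e]; gcongr; linarith
  · rw [e]; nlinarith

lemma dom_int {N : ℕ} {τ0 τ α C : ℝ} {w : SpT N → ℝ} {u : SpT N → Spc N}
    (H : Core N τ0 τ α C w u) {F : SpT N → ℝ} (hF : Measurable F) {B : ℝ}
    (hB : ∀ z ∈ KK N τ, |F z| ≤ B * GG w u z) : IntegrableOn F (KK N τ) := by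
  refine Integrable.mono' ((GG_int H).const_mul B) hF.aestronglyMeasurable ?_
  filter_upwards [ae_restrict_mem (KK_meas N τ)] with z hz using hB z hz

lemma fd_meas {N : ℕ} {φ : SpT N → ℝ} (hφ : ContDiff ℝ 1 φ) {v : SpT N → SpT N}
    (hv : Measurable v) : Measurable (fun z => fderiv ℝ φ z (v z)) := by
  have : Continuous (fun q : SpT N × SpT N => fderiv ℝ φ q.1 q.2) := hφ.continuous_fderiv_apply one_ne_zero
  exact this.measurable.comp (measurable_id.prodMk hv)

lemma fd_bound {N : ℕ} {τ : ℝ} {φ : SpT N → ℝ} (hφ : ContDiff ℝ 1 φ) :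
    ∃ B : ℝ, 0 < B ∧ (∀ z ∈ KK N τ, ∀ v, |fderiv ℝ φ z v| ≤ B * ‖v‖) ∧ (∀ z ∈ KK N τ, |φ z| ≤ B) := by
  obtain ⟨B1, h1⟩ := (KK_compact N τ).exists_bound_of_continuousOn (hφ.continuous_fderiv one_ne_zero).continuousOn
  obtain ⟨B2, h2⟩ := (KK_compact N τ).exists_bound_of_continuousOn hφ.continuous.continuousOn
  refine ⟨max (max B1 B2) 1, by positivity, fun z hz v => ?_, fun z hz => ?_⟩
  · refine ((fderiv ℝ φ z).le_opNorm v).trans ?_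
    gcongr
    exact (h1 z hz).trans ((le_max_left _ _).trans (le_max_left _ _))
  · exact (h2 z hz).trans ((le_max_right _ _).trans (le_max_left _ _))

lemma norm_one_u {N : ℕ} (c : ℝ) (hc : |c| ≤ 1) (v : Spc N) : ‖((c, v) : SpT N)‖ ≤ 1 + ‖v‖ := by
  rw [Prod.norm_def]
  simp only [Real.norm_eq_abs]
  exact max_le (by linarith [norm_nonneg v]) (by linarith)

/-- bump around the faces `x_i = ±1` -/
def bz {N : ℕ} (i : Fin N) (n : ℕ) (z : SpT N) : ℝ := sb ((1 / 2) ^ n / 2) (z.2 i + 1)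

lemma coord_hasFDerivAt {N : ℕ} (i : Fin N) (z : SpT N) :
    HasFDerivAt (fun z : SpT N => z.2 i)
      ((EuclideanSpace.proj i : Spc N →L[ℝ] ℝ).comp (ContinuousLinearMap.snd ℝ ℝ (Spc N))) z :=
  ((EuclideanSpace.proj i : Spc N →L[ℝ] ℝ).comp (ContinuousLinearMap.snd ℝ ℝ (Spc N))).hasFDerivAt

lemma coord_contDiff {N : ℕ} (i : Fin N) : ContDiff ℝ 1 (fun z : SpT N => z.2 i) :=
  ((EuclideanSpace.proj i : Spc N →L[ℝ] ℝ).contDiff).comp contDiff_snd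

lemma bz_contDiff {N : ℕ} (i : Fin N) (n : ℕ) : ContDiff ℝ 1 (bz i n : SpT N → ℝ) :=
  (sb_contDiff _).comp ((coord_contDiff i).add contDiff_const)

lemma bz_per {N : ℕ} (i : Fin N) (n : ℕ) : PerST (bz i n : SpT N → ℝ) := by
  intro z j
  unfold bz
  by_cases h : j = i
  · subst h
    rw [show (z + (2:ℝ) • ee j).2 j + 1 = (z.2 j + 1) + 2 by simp; ring, sb_per]
  · simp [Ne.symm h]

lemma bz_fderiv {N : ℕ} (i : Fin N) (n : ℕ) (z v : SpT N) :
    fderiv ℝ (bz i n) z v = deriv (sb ((1 / 2) ^ n / 2)) (z.2 i + 1) * v.2 i := by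
  have h1 := ((sb_hasDerivAt ((1 / 2) ^ n / 2) (z.2 i + 1)).differentiableAt.hasDerivAt).comp_hasFDerivAt z
    ((coord_hasFDerivAt i z).add_const 1)
  have : fderiv ℝ (bz i n) z = _ := h1.fderiv
  rw [this]
  simp

lemma bz_mem {N : ℕ} (i : Fin N) (n : ℕ) (z : SpT N) : 0 ≤ bz i n z ∧ bz i n z ≤ 1 :=
  ⟨sb_nonneg _ _, sb_le_one _ _⟩

lemma sin_shift (x : ℝ) : Real.sin (Real.pi * (x + 1) / 2) = Real.cos (Real.pi * x / 2) := by
  rw [show Real.pi * (x + 1) / 2 = Real.pi * x / 2 + Real.pi / 2 by ring, Real.sin_add_pi_div_two]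

lemma near_face {x δ : ℝ} (hx : x ∈ Icc (-1 : ℝ) 1) (hδ : 0 < δ)
    (h : Real.sin (Real.pi * (x + 1) / 2) ^ 2 ≤ 2 * (δ / 2) ^ 2) :
    x ∈ Ist 1 δ ∨ x ∈ Ist (-1) δ := by
  have hlt : ∀ y : ℝ, |y| ≤ 1 → Real.sin (Real.pi * y / 2) ^ 2 ≤ 2 * (δ / 2) ^ 2 → |y| < δ := by
    intro y hy h
    have := jordan hy
    have h2 : |y| ^ 2 ≤ Real.sin (Real.pi * y / 2) ^ 2 := by
      rw [← sq_abs (Real.sin _)]; gcongr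
    by_contra hh
    push Not at hh
    nlinarith
  rcases le_total x 0 with h0 | h0
  · left
    refine ⟨hx, ?_⟩
    have := hlt (x + 1) (by rw [abs_le]; constructor <;> linarith [hx.1]) h
    rw [abs_of_nonneg (by linarith [hx.1])] at this
    linarith
  · right
    refine ⟨hx, ?_⟩
    have := hlt (x - 1) (by rw [abs_le]; constructor <;> linarith [hx.2]) (by
      rw [show Real.pi * (x + 1) / 2 = Real.pi * (x - 1) / 2 + Real.pi by ring, Real.sin_add_pi] at h
      simpa using h)
    rw [abs_of_nonpos (by linarith [hx.2])] at this
    linarith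

lemma bz_tendsto {N : ℕ} {τ : ℝ} (i : Fin N) :
    ∀ᵐ z ∂(volume.restrict (KK N τ)), Tendsto (fun n => bz i n z) atTop (nhds 0) := by
  filter_upwards [hyper_null (τ := τ) i 1, hyper_null (τ := τ) i (-1),
    ae_restrict_mem (KK_meas N τ)] with z h1 h2 hz
  apply tendsto_nhds_of_eventually_eq
  have hδ : Tendsto (fun n : ℕ => ((1:ℝ) / 2) ^ n) atTop (nhds 0) :=
    tendsto_pow_atTop_nhds_zero_of_lt_one (by norm_num) (by norm_num)
  have hz2 := hz.2 i
  have p1 : 0 < 1 - z.2 i := by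
    rcases lt_or_eq_of_le hz2.2 with h | h
    · linarith
    · exact absurd h h1
  have p2 : 0 < 1 + z.2 i := by
    rcases lt_or_eq_of_le hz2.1 with h | h
    · linarith
    · exact absurd h.symm h2
  filter_upwards [hδ.eventually (gt_mem_nhds p1), hδ.eventually (gt_mem_nhds p2)] with n a1 a2
  refine sb_zero (by positivity) ?_
  by_contra hh
  push Not at hh
  rcases near_face hz2 (by positivity) hh.le with h | h
  · have := h.2; linarith
  · have := h.2; linarith

lemma bz_dct {N : ℕ} {τ0 τ α C : ℝ} {w : SpT N → ℝ} {u : SpT N → Spc N}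
    (H : Core N τ0 τ α C w u) (i : Fin N) {F : SpT N → ℝ} (hF : Measurable F) {B : ℝ}
    (hB : ∀ z ∈ KK N τ, |F z| ≤ B * GG w u z) :
    Tendsto (fun n => ∫ z in KK N τ, bz i n z * F z) atTop (nhds 0) := by
  have := tendsto_integral_of_dominated_convergence (μ := volume.restrict (KK N τ))
    (F := fun n z => bz i n z * F z) (f := fun _ => 0) (fun z => B * GG w u z)
    (fun n => ((bz_contDiff i n).continuous.measurable.mul hF).aestronglyMeasurable)
    ((GG_int H).const_mul B) (fun n => by
      filter_upwards [ae_restrict_mem (KK_meas N τ)] with z hz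
      rw [Real.norm_eq_abs, abs_mul, abs_of_nonneg (bz_mem i n z).1]
      exact (mul_le_of_le_one_left (abs_nonneg _) (bz_mem i n z).2).trans (hB z hz))
    (by filter_upwards [bz_tendsto (τ := τ) i] with z hz
        simpa using hz.mul_const (F z))
  simpa using this

def Sprop {N : ℕ} (τ0 τ : ℝ) (w : SpT N → ℝ) (u : SpT N → Spc N) (J : Finset (Fin N)) : Prop :=
  ∀ χ : SpT N → ℝ, ContDiff ℝ 1 χ → PerST χ → (∀ z : SpT N, τ0 ≤ z.1 → χ z = 0) →
    (∃ l : ℝ, 0 < l ∧ ∀ z : SpT N, ∀ j ∈ J, |Real.cos (Real.pi * z.2 j / 2)| ≤ l → χ z = 0) →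
    ∫ z in KK N τ, w z ^ 2 * fderiv ℝ χ z (1, u z) = 0

lemma fderiv_mul_apply {N : ℕ} {f g : SpT N → ℝ} (hf : ContDiff ℝ 1 f) (hg : ContDiff ℝ 1 g)
    (z v : SpT N) : fderiv ℝ (fun z => f z * g z) z v = f z * fderiv ℝ g z v + fderiv ℝ f z v * g z := by
  rw [fderiv_fun_mul (hf.differentiable one_ne_zero z) (hg.differentiable one_ne_zero z)]
  simp [mul_comm]

lemma face_step {N : ℕ} {τ0 τ α C : ℝ} {w : SpT N → ℝ} {u : SpT N → Spc N}
    (H : Core N τ0 τ α C w u) (i : Fin N) (J : Finset (Fin N))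
    (hS : Sprop τ0 τ w u (insert i J)) : Sprop τ0 τ w u J := by
  intro χ hχ hχp hχ0 hχl
  obtain ⟨l, hl, hχl⟩ := hχl
  have hwm := H.wm
  have hum := H.um
  have mv : ∀ c : ℝ, Measurable (fun z : SpT N => ((c, u z) : SpT N)) := fun c =>
    measurable_const.prodMk hum
  have mui : Measurable fun z => u z i :=
    (EuclideanSpace.proj i : Spc N →L[ℝ] ℝ).continuous.measurable.comp H.um
  have hui : ∀ z, |u z i| ≤ 1 + ‖u z‖ := fun z => by
    have : ‖u z i‖ ≤ ‖u z‖ := PiLp.norm_apply_le _ i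
    rw [Real.norm_eq_abs] at this; linarith
  set db : ℕ → SpT N → ℝ := fun n z => deriv (sb ((1 / 2) ^ n / 2)) (z.2 i + 1) with hdb
  obtain ⟨L, hL, hdL⟩ := sb_deriv_bound
  have hdbB : ∀ n z, |db n z| ≤ L / ((1 / 2) ^ n / 2) := fun n z => hdL _ _ (by positivity)
  have mdb : ∀ n, Measurable (db n) := fun n =>
    ((measurable_deriv _).comp ((measurable_coord i).add_const 1))
  obtain ⟨B, hB, hB1, hB2⟩ := fd_bound (τ := τ) hχ
  have hχm := hχ.continuous.measurable
  set X := ∫ z in KK N τ, w z ^ 2 * fderiv ℝ χ z (1, u z) with hX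
  set a : ℕ → ℝ := fun n => ∫ z in KK N τ, w z ^ 2 * (χ z * (db n z * u z i)) with ha
  -- first convergence
  have bF : ∀ z ∈ KK N τ, |w z ^ 2 * fderiv ℝ χ z (1, u z)| ≤ B * GG w u z := by
    intro z hz
    rw [abs_mul, abs_of_nonneg (sq_nonneg (w z))]
    calc _ ≤ w z ^ 2 * (B * (1 + ‖u z‖)) := by
          gcongr
          exact (hB1 z hz _).trans (by gcongr; exact norm_one_u 1 (by simp) _)
      _ = B * (w z ^ 2 * (1 + ‖u z‖)) := by ring
      _ ≤ _ := by gcongr; exact (GG_ge w u z).1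
  have mF : Measurable (fun z => w z ^ 2 * fderiv ℝ χ z (1, u z)) :=
    (hwm.pow_const 2).mul (fd_meas hχ (mv 1))
  have iF := dom_int H mF bF
  have ibF : ∀ n, IntegrableOn (fun z => bz i n z * (w z ^ 2 * fderiv ℝ χ z (1, u z))) (KK N τ) := fun n =>
    dom_int H ((bz_contDiff i n).continuous.measurable.mul mF) (B := B) fun z hz => by
      rw [abs_mul, abs_of_nonneg (bz_mem i n z).1]
      exact (mul_le_of_le_one_left (abs_nonneg _) (bz_mem i n z).2).trans (bF z hz)
  -- generic integrability of terms with db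
  have idb : ∀ n (f : SpT N → ℝ), Measurable f → ∀ B' : ℝ,
      (∀ z ∈ KK N τ, |f z| * (1 + ‖u z‖) ≤ B' * GG w u z) →
      IntegrableOn (fun z => f z * (db n z * u z i)) (KK N τ) := by
    intro n f hf B' hf'
    refine dom_int H (hf.mul ((mdb n).mul mui)) (B := L / ((1 / 2) ^ n / 2) * B') fun z hz => ?_
    rw [abs_mul, abs_mul]
    calc _ ≤ |f z| * (L / ((1 / 2) ^ n / 2) * (1 + ‖u z‖)) := by
          gcongr
          · exact hdbB n z
          · exact hui z
      _ = L / ((1 / 2) ^ n / 2) * (|f z| * (1 + ‖u z‖)) := by ring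
      _ ≤ L / ((1 / 2) ^ n / 2) * (B' * GG w u z) := by
          exact mul_le_mul_of_nonneg_left (hf' z hz) (by positivity)
      _ = _ := by ring
  have i2 : ∀ n, IntegrableOn (fun z => w z ^ 2 * (χ z * (db n z * u z i))) (KK N τ) := by
    intro n
    have := idb n (fun z => w z ^ 2 * χ z) ((hwm.pow_const 2).mul hχm) B (fun z hz => by
      rw [abs_mul, abs_of_nonneg (sq_nonneg (w z))]
      calc _ ≤ w z ^ 2 * B * (1 + ‖u z‖) := by gcongr; exact hB2 z hz
        _ = B * (w z ^ 2 * (1 + ‖u z‖)) := by ring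
        _ ≤ _ := by gcongr; exact (GG_ge w u z).1)
    simpa only [mul_assoc] using this
  have h1 : ∀ n, a n = X - ∫ z in KK N τ, bz i n z * (w z ^ 2 * fderiv ℝ χ z (1, u z)) := by
    intro n
    have c1 : ContDiff ℝ 1 (fun z => 1 - bz i n z : SpT N → ℝ) := contDiff_const.sub (bz_contDiff i n)
    have := hS (fun z => χ z * (1 - bz i n z)) (hχ.mul c1)
      (fun z j => by simp only [hχp z j, bz_per i n z j])
      (fun z hz => by simp [hχ0 z hz])
      ⟨min l ((1 / 2) ^ n / 2), by positivity, fun z j hj hc => by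
        rcases Finset.mem_insert.1 hj with rfl | hj
        · have : bz j n z = 1 := sb_one (by positivity) (by
            rw [sin_shift, ← sq_abs]
            have := hc.trans (min_le_right _ _)
            gcongr)
          simp [this]
        · simp [hχl z j hj (hc.trans (min_le_left _ _))]⟩
    have e : ∀ z, w z ^ 2 * fderiv ℝ (fun z => χ z * (1 - bz i n z)) z (1, u z)
        = w z ^ 2 * fderiv ℝ χ z (1, u z) - bz i n z * (w z ^ 2 * fderiv ℝ χ z (1, u z))
          - w z ^ 2 * (χ z * (db n z * u z i)) := by
      intro z
      rw [fderiv_mul_apply hχ c1, fderiv_const_sub]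
      simp only [neg_apply, bz_fderiv, hdb]
      ring
    simp_rw [e] at this
    have i12 : IntegrableOn (fun z => w z ^ 2 * fderiv ℝ χ z (1, u z)
      - bz i n z * (w z ^ 2 * fderiv ℝ χ z (1, u z))) (KK N τ) := iF.sub (ibF n)
    rw [integral_sub i12 (i2 n), integral_sub iF (ibF n)] at this
    simp only [ha, hX]
    linarith
  have h2 : Tendsto a atTop (nhds X) := by
    have := (bz_dct H i mF bF).const_sub X
    rw [sub_zero] at this
    exact this.congr fun n => (h1 n).symm
  -- second estimate
  obtain ⟨D, hD, hq⟩ := face_quad H i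
  have key : ∀ κ : ℝ, 0 < κ → κ ≤ 1 → |X| ≤ (4 * L * B * D) * κ := by
    intro κ hκ hκ1
    obtain ⟨P, M, k, hP, hPp, hM, hMp, hk⟩ := hq κ hκ hκ1
    obtain ⟨BP, hBP, hP1, hP2⟩ := fd_bound (τ := τ) (hP.mul hχ)
    obtain ⟨BM, hBM, hM1, hM2⟩ := fd_bound (τ := τ) (hM.mul hχ)
    have mPχ := (hP.mul hχ).continuous.measurable
    have mMχ := (hM.mul hχ).continuous.measurable
    -- M term
    have gM : ∀ z ∈ KK N τ, |fderiv ℝ (fun z => M z * χ z) z (0, u z)| ≤ BM * GG w u z := by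
      intro z hz
      refine (hM1 z hz _).trans ?_
      gcongr
      exact (norm_one_u 0 (by simp) _).trans (GG_ge w u z).2.2
    have mM := fd_meas (hM.mul hχ) (mv 0)
    have tM := bz_dct H i mM gM
    have ibM : ∀ n, IntegrableOn (fun z => bz i n z * fderiv ℝ (fun z => M z * χ z) z (0, u z)) (KK N τ) :=
      fun n => dom_int H ((bz_contDiff i n).continuous.measurable.mul mM) (B := BM) fun z hz => by
        rw [abs_mul, abs_of_nonneg (bz_mem i n z).1]
        exact (mul_le_of_le_one_left (abs_nonneg _) (bz_mem i n z).2).trans (gM z hz)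
    have iM : ∀ n, IntegrableOn (fun z => (M z * χ z) * (db n z * u z i)) (KK N τ) := fun n =>
      idb n _ mMχ BM fun z hz => by
        gcongr
        · exact hM2 z hz
        · exact (GG_ge w u z).2.2
    have eM : ∀ n, ∫ z in KK N τ, (M z * χ z) * (db n z * u z i)
        = - ∫ z in KK N τ, bz i n z * fderiv ℝ (fun z => M z * χ z) z (0, u z) := by
      intro n
      have := H.E2 (fun z => (M z * χ z) * bz i n z) ((hM.mul hχ).mul (bz_contDiff i n))
        (fun z j => by simp only [hχp z j, bz_per i n z j, hMp z j])
      have e : ∀ z, fderiv ℝ (fun z => (M z * χ z) * bz i n z) z (0, u z)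
        = (M z * χ z) * (db n z * u z i) + bz i n z * fderiv ℝ (fun z => M z * χ z) z (0, u z) := by
        intro z
        rw [fderiv_mul_apply (hM.mul hχ) (bz_contDiff i n), bz_fderiv]
        simp only [hdb]
        ring
      simp_rw [e] at this
      rw [integral_add (iM n) (ibM n)] at this
      linarith
    -- P term
    have gP : ∀ z ∈ KK N τ, |w z * fderiv ℝ (fun z => P z * χ z) z (1, u z)| ≤ BP * GG w u z := by
      intro z hz
      rw [abs_mul]
      calc _ ≤ |w z| * (BP * (1 + ‖u z‖)) := by
            gcongr
            exact (hP1 z hz _).trans (by gcongr; exact norm_one_u 1 (by simp) _)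
        _ = BP * (|w z| * (1 + ‖u z‖)) := by ring
        _ ≤ _ := by gcongr; exact (GG_ge w u z).2.1
    have mP : Measurable fun z => w z * fderiv ℝ (fun z => P z * χ z) z (1, u z) :=
      hwm.mul (fd_meas (hP.mul hχ) (mv 1))
    have tP := bz_dct H i mP gP
    have ibP : ∀ n, IntegrableOn (fun z => bz i n z * (w z * fderiv ℝ (fun z => P z * χ z) z (1, u z))) (KK N τ) :=
      fun n => dom_int H ((bz_contDiff i n).continuous.measurable.mul mP) (B := BP) fun z hz => by
        rw [abs_mul, abs_of_nonneg (bz_mem i n z).1]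
        exact (mul_le_of_le_one_left (abs_nonneg _) (bz_mem i n z).2).trans (gP z hz)
    have iP : ∀ n, IntegrableOn (fun z => (w z * (P z * χ z)) * (db n z * u z i)) (KK N τ) := fun n =>
      idb n _ (hwm.mul mPχ) BP fun z hz => by
        rw [abs_mul]
        calc _ ≤ |w z| * BP * (1 + ‖u z‖) := by gcongr; exact hP2 z hz
          _ = BP * (|w z| * (1 + ‖u z‖)) := by ring
          _ ≤ _ := by gcongr; exact (GG_ge w u z).2.1
    have eP : ∀ n, ∫ z in KK N τ, (w z * (P z * χ z)) * (db n z * u z i)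
        = - ∫ z in KK N τ, bz i n z * (w z * fderiv ℝ (fun z => P z * χ z) z (1, u z)) := by
      intro n
      have := H.E1 (fun z => (P z * χ z) * bz i n z) ((hP.mul hχ).mul (bz_contDiff i n))
        (fun z j => by simp only [hχp z j, bz_per i n z j, hPp z j])
        (fun x => by simp [hχ0 (τ, x) H.hτ.le])
      have e : ∀ z, w z * fderiv ℝ (fun z => (P z * χ z) * bz i n z) z (1, u z)
        = (w z * (P z * χ z)) * (db n z * u z i)
          + bz i n z * (w z * fderiv ℝ (fun z => P z * χ z) z (1, u z)) := by
        intro z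
        rw [fderiv_mul_apply (hP.mul hχ) (bz_contDiff i n), bz_fderiv]
        simp only [hdb]
        ring
      simp_rw [e] at this
      rw [integral_add (iP n) (ibP n)] at this
      linarith
    -- quadratic term
    have hQ : ∀ n, k ≤ n → |∫ z in KK N τ, (w z ^ 2 - P z * w z + M z) * (χ z * (db n z * u z i))|
        ≤ (4 * L * B * D) * κ := by
      intro n hn
      set δ : ℝ := (1 / 2) ^ n with hδ
      have hδ0 : 0 < δ := by positivity
      rw [← Real.norm_eq_abs, ← ENNReal.ofReal_le_ofReal_iff (by positivity), ofReal_norm]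
      refine (enorm_integral_le_lintegral_enorm _).trans ?_
      set Q : SpT N → ℝ≥0∞ := fun z => ‖(w z ^ 2 - P z * w z + M z) * u z i‖ₑ with hQd
      set c : ℝ := B * (L / (δ / 2)) with hc
      have hc0 : 0 ≤ c := by positivity
      have hpt : ∀ z ∈ KK N τ, ‖(w z ^ 2 - P z * w z + M z) * (χ z * (db n z * u z i))‖ₑ
          ≤ ENNReal.ofReal c * ((SS N τ i (Ist 1 δ)).indicator Q z + (SS N τ i (Ist (-1) δ)).indicator Q z) := by
        intro z hz
        by_cases hd : db n z = 0
        · simp [hd]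
        · have hin : z.2 i ∈ Ist 1 δ ∨ z.2 i ∈ Ist (-1) δ := by
            apply near_face (hz.2 i) hδ0
            by_contra hh
            push Not at hh
            exact hd (sb_deriv_zero (by positivity) hh)
          have hle : Q z ≤ (SS N τ i (Ist 1 δ)).indicator Q z + (SS N τ i (Ist (-1) δ)).indicator Q z := by
            rcases hin with h | h
            · rw [indicator_of_mem (s := SS N τ i (Ist 1 δ)) ⟨hz, h⟩]; exact le_self_add
            · rw [indicator_of_mem (s := SS N τ i (Ist (-1) δ)) ⟨hz, h⟩]; exact le_add_self
          refine le_trans ?_ (mul_le_mul_right hle (ENNReal.ofReal c))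
          rw [show (w z ^ 2 - P z * w z + M z) * (χ z * (db n z * u z i))
            = (χ z * db n z) * ((w z ^ 2 - P z * w z + M z) * u z i) by ring, enorm_mul]
          gcongr
          rw [← ofReal_norm]
          apply ENNReal.ofReal_le_ofReal
          rw [norm_mul]
          exact mul_le_mul (hB2 z hz) (hdbB n z) (norm_nonneg _) hB.le
      have mQ : Measurable Q :=
        ((((hwm.pow_const 2).sub (hP.continuous.measurable.mul hwm)).add hM.continuous.measurable).mul mui).enorm
      calc _ ≤ ∫⁻ z in KK N τ, ENNReal.ofReal c * ((SS N τ i (Ist 1 δ)).indicator Q z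
              + (SS N τ i (Ist (-1) δ)).indicator Q z) := setLIntegral_mono' (KK_meas N τ) hpt
        _ ≤ ∫⁻ z, ENNReal.ofReal c * ((SS N τ i (Ist 1 δ)).indicator Q z
              + (SS N τ i (Ist (-1) δ)).indicator Q z) := setLIntegral_le_lintegral _ _
        _ = ENNReal.ofReal c * ((∫⁻ z in SS N τ i (Ist 1 δ), Q z) + ∫⁻ z in SS N τ i (Ist (-1) δ), Q z) := by
            rw [lintegral_const_mul' _ _ ENNReal.ofReal_ne_top,
              lintegral_add_left (mQ.indicator (SS_meas (Ist_meas _ _))),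
              lintegral_indicator (SS_meas (Ist_meas _ _)), lintegral_indicator (SS_meas (Ist_meas _ _))]
        _ ≤ ENNReal.ofReal c * (ENNReal.ofReal (D * κ * δ) + ENNReal.ofReal (D * κ * δ)) := by
            gcongr
            · exact hk n hn 1 (by norm_num)
            · exact hk n hn (-1) (by norm_num)
        _ = _ := by
            rw [← ENNReal.ofReal_add (by positivity) (by positivity), ← ENNReal.ofReal_mul hc0]
            congr 1
            rw [hc]
            field_simp
            ring
    have hdec : ∀ n, (∫ z in KK N τ, (w z ^ 2 - P z * w z + M z) * (χ z * (db n z * u z i)))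
        = a n - (∫ z in KK N τ, (w z * (P z * χ z)) * (db n z * u z i))
          + ∫ z in KK N τ, (M z * χ z) * (db n z * u z i) := by
      intro n
      simp only [ha]
      have i12 : IntegrableOn (fun z => w z ^ 2 * (χ z * (db n z * u z i))
        - (w z * (P z * χ z)) * (db n z * u z i)) (KK N τ) := (i2 n).sub (iP n)
      rw [← integral_sub (i2 n) (iP n), ← integral_add i12 (iM n)]
      congr 1; ext z; ring
    have hlim : Tendsto (fun n => ∫ z in KK N τ, (w z ^ 2 - P z * w z + M z) * (χ z * (db n z * u z i)))
        atTop (nhds X) := by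
      simp_rw [hdec, eM, eP]
      simpa using (h2.sub tP.neg).add tM.neg
    refine le_of_tendsto hlim.abs ?_
    filter_upwards [eventually_ge_atTop k] with n hn using hQ n hn
  by_contra hne
  have hXp : 0 < |X| := abs_pos.2 hne
  have hK : 0 < 4 * L * B * D := by positivity
  have hκ : 0 < min 1 (|X| / (4 * L * B * D) / 2) := by positivity
  have h3 := key _ hκ (min_le_left _ _)
  have h4 : (4 * L * B * D) * min 1 (|X| / (4 * L * B * D) / 2) ≤ (4 * L * B * D) * (|X| / (4 * L * B * D) / 2) := by
    gcongr; exact min_le_right _ _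
  have h5 : (4 * L * B * D) * (|X| / (4 * L * B * D) / 2) = |X| / 2 := by field_simp
  linarith

/-! ### The doubling kernel -/

def th (ε s : ℝ) : ℝ := Bf (16 * (s / ε - 1 / 2) ^ 2)

lemma th_contDiff (ε : ℝ) : ContDiff ℝ 1 (th ε) :=
  Bf_contDiff.comp (contDiff_const.mul (((contDiff_id.div_const _).sub contDiff_const).pow 2))

lemma th_nonneg (ε s : ℝ) : 0 ≤ th ε s := Bf_nonneg _
lemma th_le_one (ε s : ℝ) : th ε s ≤ 1 := Bf_le_one _

lemma th_zero {ε s : ℝ} (hε : 0 < ε) (h : s ≤ 0 ∨ ε ≤ s) : th ε s = 0 := by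
  apply Bf_zero
  rcases h with h | h
  · have : s / ε ≤ 0 := div_nonpos_of_nonpos_of_nonneg h hε.le
    nlinarith
  · have : 1 ≤ s / ε := by rwa [le_div_iff₀ hε, one_mul]
    nlinarith

lemma th_one {ε s : ℝ} (hε : 0 < ε) (h : ε / 4 ≤ s) (h' : s ≤ 3 * ε / 4) : th ε s = 1 := by
  apply Bf_one
  have h1 : 1 / 4 ≤ s / ε := by rw [le_div_iff₀ hε]; linarith
  have h2 : s / ε ≤ 3 / 4 := by rw [div_le_iff₀ hε]; linarith
  nlinarith

lemma th_hasDerivAt (ε s : ℝ) :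
    HasDerivAt (th ε) (deriv Bf (16 * (s / ε - 1 / 2) ^ 2) * (16 * (2 * (s / ε - 1 / 2) * (1 / ε)))) s := by
  have h1 : HasDerivAt (fun s : ℝ => s / ε - 1 / 2) (1 / ε) s :=
    ((hasDerivAt_id s).div_const ε).sub_const _
  have h2 : HasDerivAt (fun s : ℝ => 16 * (s / ε - 1 / 2) ^ 2) (16 * (2 * (s / ε - 1 / 2) * (1 / ε))) s := by
    simpa using (h1.pow 2).const_mul 16
  have h3 : HasDerivAt Bf (deriv Bf (16 * (s / ε - 1 / 2) ^ 2)) (16 * (s / ε - 1 / 2) ^ 2) :=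
    (Bf_contDiff.differentiable one_ne_zero _).hasDerivAt
  exact h3.comp s h2

lemma th_deriv_bound : ∃ L : ℝ, 0 < L ∧ ∀ ε s, 0 < ε → |deriv (th ε) s| ≤ L / ε := by
  obtain ⟨L, hL, hB⟩ := Bf_deriv_bound
  refine ⟨32 * L, by positivity, fun ε s hε => ?_⟩
  rw [(th_hasDerivAt ε s).deriv]
  by_cases h : 2 < 16 * (s / ε - 1 / 2) ^ 2
  · rw [Bf_deriv_zero h]; simp; positivity
  · push Not at h
    have h1 : |s / ε - 1 / 2| ≤ 1 := by
      rw [abs_le]; constructor <;> nlinarith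
    rw [abs_mul]
    have h2 : |16 * (2 * (s / ε - 1 / 2) * (1 / ε))| ≤ 32 / ε := by
      rw [show 16 * (2 * (s / ε - 1 / 2) * (1 / ε)) = (32 / ε) * (s / ε - 1 / 2) by ring, abs_mul,
        abs_of_pos (by positivity)]
      exact mul_le_of_le_one_right (by positivity) h1
    calc _ ≤ L * (32 / ε) := by gcongr; exact hB _
      _ = _ := by ring

def kap {N : ℕ} (ε : ℝ) (h : SpT N) : ℝ := th ε h.1 * ∏ j, sb ε (h.2 j)

lemma kap_contDiff {N : ℕ} (ε : ℝ) : ContDiff ℝ 1 (kap ε : SpT N → ℝ) :=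
  ((th_contDiff ε).comp contDiff_fst).mul
    (contDiff_prod fun j _ => (sb_contDiff ε).comp (coord_contDiff j))

lemma kap_per {N : ℕ} (ε : ℝ) : PerST (kap ε : SpT N → ℝ) := by
  intro z i
  unfold kap
  congr 1
  · simp
  · refine Finset.prod_congr rfl fun j _ => ?_
    by_cases h : i = j
    · subst h
      rw [show (z + (2:ℝ) • ee i).2 i = z.2 i + 2 by simp, sb_per]
    · simp [Ne.symm h]

lemma kap_nonneg {N : ℕ} (ε : ℝ) (h : SpT N) : 0 ≤ kap ε h :=
  mul_nonneg (th_nonneg _ _) (Finset.prod_nonneg fun _ _ => sb_nonneg _ _)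

lemma kap_le_one {N : ℕ} (ε : ℝ) (h : SpT N) : kap ε h ≤ 1 :=
  mul_le_one₀ (th_le_one _ _) (Finset.prod_nonneg fun _ _ => sb_nonneg _ _)
    (Finset.prod_le_one (fun _ _ => sb_nonneg _ _) fun _ _ => sb_le_one _ _)

lemma mul_fd_bound {N : ℕ} {f g : SpT N → ℝ} (hf : ContDiff ℝ 1 f) (hg : ContDiff ℝ 1 g) {z : SpT N}
    {A B : ℝ} (h1 : |f z| ≤ 1) (h2 : |g z| ≤ 1) (h3 : ∀ v, |fderiv ℝ f z v| ≤ A * ‖v‖)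
    (h4 : ∀ v, |fderiv ℝ g z v| ≤ B * ‖v‖) (v : SpT N) :
    |fderiv ℝ (fun z => f z * g z) z v| ≤ (A + B) * ‖v‖ := by
  rw [fderiv_mul_apply hf hg]
  refine (abs_add_le _ _).trans ?_
  rw [abs_mul, abs_mul]
  have := h3 v; have := h4 v
  have e1 : |f z| * |fderiv ℝ g z v| ≤ 1 * |fderiv ℝ g z v| := by gcongr
  have e2 : |fderiv ℝ f z v| * |g z| ≤ |fderiv ℝ f z v| * 1 := by gcongr
  linarith

lemma comp_fd_bound {N : ℕ} {f : ℝ → ℝ} (hf : ContDiff ℝ 1 f) (ℓ : SpT N →L[ℝ] ℝ)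
    (hℓ : ∀ v, |ℓ v| ≤ ‖v‖) {A : ℝ} (hA : ∀ s, |deriv f s| ≤ A) (z v : SpT N) :
    |fderiv ℝ (fun z => f (ℓ z)) z v| ≤ A * ‖v‖ := by
  have h1 := ((hf.differentiable one_ne_zero (ℓ z)).hasDerivAt).comp_hasFDerivAt z ℓ.hasFDerivAt
  have : fderiv ℝ (fun z => f (ℓ z)) z = _ := h1.fderiv
  rw [this]
  simp only [smul_apply, smul_eq_mul, abs_mul]
  exact mul_le_mul (hA _) (hℓ v) (abs_nonneg _) ((abs_nonneg _).trans (hA 0))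

lemma kap_fd_bound (N : ℕ) : ∃ L : ℝ, 0 < L ∧ ∀ ε, 0 < ε → ∀ h v : SpT N,
    |fderiv ℝ (kap ε) h v| ≤ L / ε * ‖v‖ := by
  obtain ⟨L1, hL1, hb1⟩ := th_deriv_bound
  obtain ⟨L2, hL2, hb2⟩ := sb_deriv_bound
  refine ⟨L1 + N * L2, by positivity, fun ε hε h v => ?_⟩
  have c1 : ContDiff ℝ 1 (fun z : SpT N => th ε z.1) := (th_contDiff ε).comp contDiff_fst
  have c2 : ∀ j, ContDiff ℝ 1 (fun z : SpT N => sb ε (z.2 j)) := fun j =>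
    (sb_contDiff ε).comp (coord_contDiff j)
  have b1 : ∀ v, |fderiv ℝ (fun z : SpT N => th ε z.1) h v| ≤ L1 / ε * ‖v‖ :=
    comp_fd_bound (th_contDiff ε) (ContinuousLinearMap.fst ℝ ℝ (Spc N))
      (fun v => norm_fst_le v) (fun s => hb1 ε s hε) h
  have b2 : ∀ j v, |fderiv ℝ (fun z : SpT N => sb ε (z.2 j)) h v| ≤ L2 / ε * ‖v‖ := fun j =>
    comp_fd_bound (sb_contDiff ε)
      ((EuclideanSpace.proj j : Spc N →L[ℝ] ℝ).comp (ContinuousLinearMap.snd ℝ ℝ (Spc N)))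
      (fun v => (PiLp.norm_apply_le v.2 j).trans (norm_snd_le v)) (fun s => hb2 ε s hε) h
  have b3 : ∀ s : Finset (Fin N), ∀ v, |fderiv ℝ (fun z : SpT N => ∏ j ∈ s, sb ε (z.2 j)) h v|
      ≤ (s.card * (L2 / ε)) * ‖v‖ := by
    intro s
    induction s using Finset.induction_on with
    | empty => intro v; simp
    | insert a s ha ih =>
      intro v
      simp_rw [Finset.prod_insert ha]
      refine (mul_fd_bound (c2 a) (contDiff_prod fun j _ => c2 j) ?_ ?_ (b2 a) ih v).trans (le_of_eq ?_)
      · rw [abs_of_nonneg (sb_nonneg _ _)]; exact sb_le_one _ _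
      · rw [abs_of_nonneg (Finset.prod_nonneg fun _ _ => sb_nonneg _ _)]
        exact Finset.prod_le_one (fun _ _ => sb_nonneg _ _) fun _ _ => sb_le_one _ _
      · rw [Finset.card_insert_of_notMem ha]; push_cast; ring
  refine (mul_fd_bound c1 (contDiff_prod fun j _ => c2 j) ?_ ?_ b1 (b3 Finset.univ) v).trans (le_of_eq ?_)
  · rw [abs_of_nonneg (th_nonneg _ _)]; exact th_le_one _ _
  · rw [abs_of_nonneg (Finset.prod_nonneg fun _ _ => sb_nonneg _ _)]
    exact Finset.prod_le_one (fun _ _ => sb_nonneg _ _) fun _ _ => sb_le_one _ _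
  · rw [Finset.card_univ, Fintype.card_fin]; ring

lemma kap_zero {N : ℕ} {ε : ℝ} (hε : 0 < ε) {h : SpT N} (hh : (h.1 < 0 ∨ ε < h.1) ∨
    ∃ j, 2 * ε ^ 2 < Real.sin (Real.pi * h.2 j / 2) ^ 2) : kap ε h = 0 := by
  unfold kap
  rcases hh with hh | ⟨j, hj⟩
  · rw [th_zero hε (hh.imp le_of_lt le_of_lt), zero_mul]
  · rw [Finset.prod_eq_zero (Finset.mem_univ j) (sb_zero hε hj.le), mul_zero]

lemma kap_fd_zero {N : ℕ} {ε : ℝ} (hε : 0 < ε) {h : SpT N} (hh : (h.1 < 0 ∨ ε < h.1) ∨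
    ∃ j, 2 * ε ^ 2 < Real.sin (Real.pi * h.2 j / 2) ^ 2) : fderiv ℝ (kap ε) h = 0 := by
  have hopen : IsOpen {h : SpT N | (h.1 < 0 ∨ ε < h.1) ∨
      ∃ j, 2 * ε ^ 2 < Real.sin (Real.pi * h.2 j / 2) ^ 2} := by
    have h3 : IsOpen {h : SpT N | ∃ j, 2 * ε ^ 2 < Real.sin (Real.pi * h.2 j / 2) ^ 2} := by
      have : {h : SpT N | ∃ j, 2 * ε ^ 2 < Real.sin (Real.pi * h.2 j / 2) ^ 2}
        = ⋃ j, {h : SpT N | 2 * ε ^ 2 < Real.sin (Real.pi * h.2 j / 2) ^ 2} := by ext; simp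
      rw [this]
      refine isOpen_iUnion fun j => isOpen_lt continuous_const ?_
      have := (coord_contDiff (N := N) j).continuous
      fun_prop
    exact IsOpen.union (IsOpen.union (isOpen_lt continuous_fst continuous_const)
      (isOpen_lt continuous_const continuous_fst)) h3
  have : kap ε =ᶠ[nhds h] fun _ => (0:ℝ) := by
    filter_upwards [hopen.mem_nhds hh] with y hy using kap_zero hε hy
  rw [this.fderiv_eq]; simp

/-! ### Periodic integration by parts -/

lemma per_int_ee {N : ℕ} {τ : ℝ} {φ : SpT N → ℝ} (hφ : ContDiff ℝ 1 φ) (hP : PerST φ) (i : Fin N) :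
    ∫ z in KK N τ, fderiv ℝ φ z (ee i) = 0 := by
  obtain ⟨B, hB, hb, -⟩ := fd_bound (τ := τ) hφ
  have hfc : Continuous (fun z => fderiv ℝ φ z (ee i)) :=
    (hφ.continuous_fderiv one_ne_zero).clm_apply continuous_const
  have hbd : ∀ z ∈ KK N τ, |fderiv ℝ φ z (ee i)| ≤ B := fun z hz => by
    simpa [norm_ee] using hb z hz (ee i)
  have hFm : Measurable (fun z : SpT N => ENNReal.ofReal (fderiv ℝ φ z (ee i) + B)) :=
    ENNReal.measurable_ofReal.comp (hfc.measurable.add measurable_const)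
  have key := slice_eq (N := N) (τ := τ) (i := i) (I := Icc (-1) 1) subset_rfl measurableSet_Icc _ hFm
  rw [SS_full] at key
  have hinner : ∀ z ∈ KK N τ, ∫⁻ s in Icc (-1:ℝ) 1,
      ENNReal.ofReal (fderiv ℝ φ (z + (s - z.2 i) • ee i) (ee i) + B) = ENNReal.ofReal (2 * B) := by
    intro z hz
    have hmem : ∀ s ∈ Icc (-1:ℝ) 1, z + (s - z.2 i) • ee i ∈ KK N τ := by
      intro s hs
      refine ⟨by simpa using hz.1, fun j => ?_⟩
      by_cases h : j = i
      · subst h; simpa using hs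
      · simpa [h] using hz.2 j
    have hc : Continuous (fun s : ℝ => fderiv ℝ φ (z + (s - z.2 i) • ee i) (ee i)) :=
      hfc.comp (by fun_prop)
    rw [← ofReal_integral_eq_lintegral_ofReal]
    · congr 1
      rw [integral_Icc_eq_integral_Ioc, ← intervalIntegral.integral_of_le (by norm_num),
        intervalIntegral.integral_add (hc.intervalIntegrable _ _) (by simp)]
      have hd : ∀ s : ℝ, HasDerivAt (fun s : ℝ => φ (z + (s - z.2 i) • ee i))
          (fderiv ℝ φ (z + (s - z.2 i) • ee i) (ee i)) s := by
        intro s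
        have h1 : HasDerivAt (fun s : ℝ => z + (s - z.2 i) • (ee i : SpT N)) (ee i) s := by
          simpa using (((hasDerivAt_id s).sub_const (z.2 i)).smul_const (ee i : SpT N)).const_add z
        exact ((hφ.differentiable one_ne_zero _).hasFDerivAt).comp_hasDerivAt s h1
      rw [intervalIntegral.integral_eq_sub_of_hasDerivAt (fun s _ => hd s) (hc.intervalIntegrable _ _)]
      have : φ (z + (1 - z.2 i) • ee i) = φ (z + (-1 - z.2 i) • ee i) := by
        rw [← hP (z + (-1 - z.2 i) • ee i) i, add_assoc, ← add_smul]
        congr 3; ring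
      rw [this, intervalIntegral.integral_const, smul_eq_mul]
      ring
    · exact ((hc.add continuous_const).continuousOn.integrableOn_Icc)
    · filter_upwards [ae_restrict_mem measurableSet_Icc] with s hs
      have := (abs_le.1 (hbd _ (hmem s hs))).1
      show (0:ℝ) ≤ _
      linarith
  rw [setLIntegral_congr_fun (KK_meas N τ) hinner, lintegral_const, Measure.restrict_apply_univ,
    ← ofReal_integral_eq_lintegral_ofReal] at key
  · rw [integral_add] at key
    · simp only [integral_const, smul_eq_mul, Real.volume_Icc] at key
      have hv : volume (KK N τ) = ENNReal.ofReal ((volume.restrict (KK N τ)).real univ) := by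
        simp [Measure.real, (KK_lt_top N τ).ne]
      have hnn : 0 ≤ (volume.restrict (KK N τ)).real univ := measureReal_nonneg
      have hge : 0 ≤ ∫ z in KK N τ, (fderiv ℝ φ z (ee i) + B) :=
        setIntegral_nonneg (KK_meas N τ) fun z hz => by
          have := (abs_le.1 (hbd z hz)).1; linarith
      rw [integral_add] at hge
      · simp only [integral_const, smul_eq_mul] at hge
        rw [hv, ← ENNReal.ofReal_mul (by positivity), ← ENNReal.ofReal_mul (by norm_num),
          ENNReal.ofReal_eq_ofReal_iff (by positivity) (by linarith)] at key
        linarith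
      · exact hfc.continuousOn.integrableOn_compact (KK_compact N τ)
      · exact integrable_const _
    · exact hfc.continuousOn.integrableOn_compact (KK_compact N τ)
    · exact integrable_const _
  · exact (hfc.add continuous_const).continuousOn.integrableOn_compact (KK_compact N τ)
  · filter_upwards [ae_restrict_mem (KK_meas N τ)] with z hz
    have := (abs_le.1 (hbd _ hz)).1
    show (0:ℝ) ≤ _
    linarith

lemma per_int {N : ℕ} {τ : ℝ} {φ : SpT N → ℝ} (hφ : ContDiff ℝ 1 φ) (hP : PerST φ) (v : Spc N) :
    ∫ z in KK N τ, fderiv ℝ φ z (0, v) = 0 := by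
  have hv : ((0, v) : SpT N) = ∑ i, v i • ee i := by
    ext j
    · simp [Prod.fst_sum]
    · simp [Prod.snd_sum, Finset.sum_apply]
  have hfc : ∀ i : Fin N, Continuous (fun z => fderiv ℝ φ z (ee i)) := fun i =>
    (hφ.continuous_fderiv one_ne_zero).clm_apply continuous_const
  simp_rw [hv, map_sum, map_smul]
  rw [integral_finsetSum]
  · refine Finset.sum_eq_zero fun i _ => ?_
    rw [integral_smul, per_int_ee hφ hP, smul_zero]
  · intro i _
    have : Continuous (fun z => v i • fderiv ℝ φ z (ee i)) := by have := hfc i; fun_prop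
    exact this.continuousOn.integrableOn_compact (KK_compact N τ)

/-! ### Vanishing double integrals -/

lemma dbl_int {N : ℕ} {τ0 τ α C : ℝ} {w : SpT N → ℝ} {u : SpT N → Spc N}
    (H : Core N τ0 τ α C w u) {F : SpT N × SpT N → ℝ} (hF : Measurable F) {B : ℝ}
    (hB : ∀ z ∈ KK N τ, ∀ z' ∈ KK N τ, |F (z, z')| ≤ B * (GG w u z * GG w u z')) :
    Integrable F ((volume.restrict (KK N τ)).prod (volume.restrict (KK N τ))) := by
  have hG := (GG_int H)
  refine Integrable.mono' ((hG.mul_prod hG).const_mul B) hF.aestronglyMeasurable ?_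
  rw [Measure.prod_restrict]
  filter_upwards [ae_restrict_mem ((KK_meas N τ).prod (KK_meas N τ))] with z hz
  exact hB z.1 hz.1 z.2 hz.2

lemma dbl_zero_right {N : ℕ} {τ : ℝ} {F : SpT N × SpT N → ℝ}
    (hI : Integrable F ((volume.restrict (KK N τ)).prod (volume.restrict (KK N τ))))
    (h : ∀ z ∈ KK N τ, ∫ z' in KK N τ, F (z, z') = 0) :
    ∫ q, F q ∂((volume.restrict (KK N τ)).prod (volume.restrict (KK N τ))) = 0 := by
  rw [integral_prod _ hI, setIntegral_congr_fun (KK_meas N τ) (g := fun _ => (0:ℝ)) h]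
  simp

lemma dbl_zero_left {N : ℕ} {τ : ℝ} {F : SpT N × SpT N → ℝ}
    (hI : Integrable F ((volume.restrict (KK N τ)).prod (volume.restrict (KK N τ))))
    (h : ∀ z' ∈ KK N τ, ∫ z in KK N τ, F (z, z') = 0) :
    ∫ q, F q ∂((volume.restrict (KK N τ)).prod (volume.restrict (KK N τ))) = 0 := by
  rw [integral_prod_symm _ hI, setIntegral_congr_fun (KK_meas N τ) (g := fun _ => (0:ℝ)) h]
  simp

/-! ### The doubled identity -/

lemma kapR_contDiff {N : ℕ} (ε : ℝ) (z : SpT N) : ContDiff ℝ 1 (fun z' : SpT N => kap ε (z' - z)) :=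
  (kap_contDiff ε).comp (contDiff_id.sub contDiff_const)

lemma kapL_contDiff {N : ℕ} (ε : ℝ) (z' : SpT N) : ContDiff ℝ 1 (fun z : SpT N => kap ε (z' - z)) :=
  (kap_contDiff ε).comp (contDiff_const.sub contDiff_id)

lemma kapR_per {N : ℕ} (ε : ℝ) (z : SpT N) : PerST (fun z' : SpT N => kap ε (z' - z)) := by
  intro z' i
  show kap ε (z' + (2:ℝ) • ee i - z) = _
  rw [add_sub_right_comm, kap_per]

lemma kapL_per {N : ℕ} (ε : ℝ) (z' : SpT N) : PerST (fun z : SpT N => kap ε (z' - z)) := by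
  intro z i
  show kap ε (z' - (z + (2:ℝ) • ee i)) = _
  rw [← kap_per ε (z' - (z + (2:ℝ) • ee i)) i]
  congr 1; abel

lemma kapR_fd {N : ℕ} (ε : ℝ) (z z' v : SpT N) :
    fderiv ℝ (fun z' : SpT N => kap ε (z' - z)) z' v = fderiv ℝ (kap ε) (z' - z) v := by
  rw [fderiv_comp_sub]

lemma kapL_fd {N : ℕ} (ε : ℝ) (z z' v : SpT N) :
    fderiv ℝ (fun z : SpT N => kap ε (z' - z)) z v = - fderiv ℝ (kap ε) (z' - z) v := by
  have h1 : HasFDerivAt (kap ε : SpT N → ℝ) (fderiv ℝ (kap ε) (z' - z)) (z' - z) :=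
    ((kap_contDiff ε).differentiable one_ne_zero _).hasFDerivAt
  have h2 := h1.comp z ((hasFDerivAt_id z).const_sub z')
  have : fderiv ℝ (fun z : SpT N => kap ε (z' - z)) z = _ := h2.fderiv
  rw [this]; simp

lemma kap_fd_meas {N : ℕ} (ε : ℝ) {v : SpT N × SpT N → SpT N} (hv : Measurable v) :
    Measurable (fun q : SpT N × SpT N => fderiv ℝ (kap ε) (q.2 - q.1) (v q)) := by
  have : Continuous (fun q : SpT N × SpT N => fderiv ℝ (kap ε) q.1 q.2) :=
    (kap_contDiff ε).continuous_fderiv_apply one_ne_zero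
  exact this.measurable.comp ((measurable_snd.sub measurable_fst).prodMk hv)

lemma fd_meas2 {N : ℕ} {φ : SpT N → ℝ} (hφ : ContDiff ℝ 1 φ) {v : SpT N × SpT N → SpT N}
    (hv : Measurable v) : Measurable (fun q : SpT N × SpT N => fderiv ℝ φ q.1 (v q)) := by
  have : Continuous (fun q : SpT N × SpT N => fderiv ℝ φ q.1 q.2) := hφ.continuous_fderiv_apply one_ne_zero
  exact this.measurable.comp (measurable_fst.prodMk hv)

lemma GG_one {N : ℕ} (w : SpT N → ℝ) (u : SpT N → Spc N) (z : SpT N) :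
    1 ≤ GG w u z ∧ |w z| ≤ GG w u z ∧ w z ^ 2 ≤ GG w u z ∧ ‖u z‖ ≤ GG w u z := by
  obtain ⟨h1, h2, h3⟩ := GG_ge w u z
  have hu := norm_nonneg (u z)
  refine ⟨by linarith, ?_, ?_, by linarith⟩
  · nlinarith [abs_nonneg (w z)]
  · nlinarith [sq_nonneg (w z)]

lemma abs_mul_bd {a b M n P : ℝ} (hM : 0 ≤ M) (hb : |b| ≤ M * n) (hP : |a| * n ≤ P) :
    |a * b| ≤ M * P := by
  rw [abs_mul]
  calc |a| * |b| ≤ |a| * (M * n) := by gcongr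
    _ = M * (|a| * n) := by ring
    _ ≤ M * P := by gcongr

lemma lin6 {X : Type*} [MeasurableSpace X] {μ : Measure X} {f1 f2 f3 f4 f5 f6 : X → ℝ}
    (I1 : Integrable f1 μ) (I2 : Integrable f2 μ) (I3 : Integrable f3 μ) (I4 : Integrable f4 μ)
    (I5 : Integrable f5 μ) (I6 : Integrable f6 μ) (Z1 : ∫ x, f1 x ∂μ = 0) (Z2 : ∫ x, f2 x ∂μ = 0)
    (Z3 : ∫ x, f3 x ∂μ = 0) (Z4 : ∫ x, f4 x ∂μ = 0) (Z5 : ∫ x, f5 x ∂μ = 0)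
    (Z6 : ∫ x, f6 x ∂μ = 0) :
    Integrable (fun x => (f1 x + f2 x) + 1 / 2 * ((f3 x - f4 x) + (f5 x - f6 x))) μ ∧
    ∫ x, ((f1 x + f2 x) + 1 / 2 * ((f3 x - f4 x) + (f5 x - f6 x))) ∂μ = 0 := by
  have J1 : Integrable (fun x => f1 x + f2 x) μ := I1.add I2
  have J2 : Integrable (fun x => f3 x - f4 x) μ := I3.sub I4
  have J3 : Integrable (fun x => f5 x - f6 x) μ := I5.sub I6
  have J4 : Integrable (fun x => (f3 x - f4 x) + (f5 x - f6 x)) μ := J2.add J3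
  have J5 : Integrable (fun x => 1 / 2 * ((f3 x - f4 x) + (f5 x - f6 x))) μ := J4.const_mul _
  refine ⟨J1.add J5, ?_⟩
  rw [integral_add J1 J5, integral_add I1 I2, integral_const_mul, integral_add J2 J3,
    integral_sub I3 I4, integral_sub I5 I6, Z1, Z2, Z3, Z4, Z5, Z6]
  simp

lemma dbl_T {N : ℕ} {τ0 τ α C : ℝ} {w : SpT N → ℝ} {u : SpT N → Spc N}
    (H : Core N τ0 τ α C w u) {χ : SpT N → ℝ} (hχ : ContDiff ℝ 1 χ) (hχp : PerST χ)
    (hχ0 : ∀ z : SpT N, τ0 ≤ z.1 → χ z = 0) {ε : ℝ} (hε : 0 < ε) (hετ : ε < τ - τ0) :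
    Integrable (fun q : SpT N × SpT N => 
      w q.1 * w q.2 * kap ε (q.2 - q.1) * fderiv ℝ χ q.1 (1, u q.1)
      + 1 / 2 * (w q.1 - w q.2) ^ 2 * χ q.1 * fderiv ℝ (kap ε) (q.2 - q.1) (0, u q.1 - u q.2)
      - 1 / 2 * w q.2 ^ 2 * kap ε (q.2 - q.1) * fderiv ℝ χ q.1 (0, u q.1 - u q.2))
      ((volume.restrict (KK N τ)).prod (volume.restrict (KK N τ))) ∧
    ∫ q : SpT N × SpT N, 
      (w q.1 * w q.2 * kap ε (q.2 - q.1) * fderiv ℝ χ q.1 (1, u q.1)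
      + 1 / 2 * (w q.1 - w q.2) ^ 2 * χ q.1 * fderiv ℝ (kap ε) (q.2 - q.1) (0, u q.1 - u q.2)
      - 1 / 2 * w q.2 ^ 2 * kap ε (q.2 - q.1) * fderiv ℝ χ q.1 (0, u q.1 - u q.2))
      ∂((volume.restrict (KK N τ)).prod (volume.restrict (KK N τ))) = 0 := by
  have hwm := H.wm
  have hum := H.um
  obtain ⟨B, hB, hb1, hb2⟩ := fd_bound (τ := τ) hχ
  obtain ⟨L, hL, hD⟩ := kap_fd_bound N
  have hkm : Measurable (fun q : SpT N × SpT N => kap ε (q.2 - q.1)) :=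
    (kap_contDiff ε).continuous.measurable.comp (measurable_snd.sub measurable_fst)
  have hχm : Measurable χ := hχ.continuous.measurable
  have hM : 0 ≤ B + B * (L / ε) := by positivity
  have hM1 : B * (L / ε) ≤ B + B * (L / ε) := by linarith
  -- bracket bound
  have hbr : ∀ z ∈ KK N τ, ∀ z' v : SpT N,
      |kap ε (z' - z) * fderiv ℝ χ z v - χ z * fderiv ℝ (kap ε) (z' - z) v|
        ≤ (B + B * (L / ε)) * ‖v‖ := by
    intro z hz z' v
    refine (abs_sub _ _).trans ?_
    rw [abs_mul, abs_mul, abs_of_nonneg (kap_nonneg _ _)]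
    have e1 : kap ε (z' - z) * |fderiv ℝ χ z v| ≤ 1 * (B * ‖v‖) := by
      gcongr
      · exact kap_le_one _ _
      · exact hb1 z hz v
    have e2 : |χ z| * |fderiv ℝ (kap ε) (z' - z) v| ≤ B * (L / ε * ‖v‖) := by
      gcongr
      · exact hb2 z hz
      · exact hD ε hε _ v
    linarith
  have hχD : ∀ z ∈ KK N τ, ∀ z' v : SpT N,
      |χ z * fderiv ℝ (kap ε) (z' - z) v| ≤ (B + B * (L / ε)) * ‖v‖ := by
    intro z hz z' v
    rw [abs_mul]
    have e2 : |χ z| * |fderiv ℝ (kap ε) (z' - z) v| ≤ B * (L / ε * ‖v‖) := by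
      gcongr
      · exact hb2 z hz
      · exact hD ε hε _ v
    have : 0 ≤ B * ‖v‖ := by positivity
    linarith
  have hv1 : Measurable (fun q : SpT N × SpT N => ((1, u q.1) : SpT N)) := by fun_prop
  have hv1' : Measurable (fun q : SpT N × SpT N => ((1, u q.2) : SpT N)) := by fun_prop
  have hv0 : Measurable (fun q : SpT N × SpT N => ((0, u q.1) : SpT N)) := by fun_prop
  have hv0' : Measurable (fun q : SpT N × SpT N => ((0, u q.2) : SpT N)) := by fun_prop
  have n0 : ∀ v : Spc N, ‖((0, v) : SpT N)‖ = ‖v‖ := fun v => by simp [Prod.norm_def]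
  have n1 : ∀ v : Spc N, ‖((1, v) : SpT N)‖ ≤ 1 + ‖v‖ := fun v => norm_one_u 1 (by simp) v
  have hw1 : Measurable (fun q : SpT N × SpT N => w q.1) := hwm.comp measurable_fst
  have hw2 : Measurable (fun q : SpT N × SpT N => w q.2) := hwm.comp measurable_snd
  have hx1 : Measurable (fun q : SpT N × SpT N => χ q.1) := hχm.comp measurable_fst
  have Gn : ∀ z, 0 ≤ GG w u z := fun z => zero_le_one.trans (GG_one w u z).1
  -- the six functions
  have I1 : Integrable (fun q : SpT N × SpT N => (w q.2 * w q.1) * (kap ε (q.2 - q.1) *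
      fderiv ℝ χ q.1 (1, u q.1) - χ q.1 * fderiv ℝ (kap ε) (q.2 - q.1) (1, u q.1)))
      ((volume.restrict (KK N τ)).prod (volume.restrict (KK N τ))) := by
    refine dbl_int H ((hw2.mul hw1).mul ((hkm.mul (fd_meas2 hχ hv1)).sub
      (hx1.mul (kap_fd_meas ε hv1)))) (B := B + B * (L / ε)) fun z hz z' hz' => ?_
    refine abs_mul_bd hM (hbr z hz z' _) ?_
    have g := GG_ge w u z
    have g' := GG_one w u z'
    calc |w z' * w z| * ‖((1, u z) : SpT N)‖ ≤ |w z' * w z| * (1 + ‖u z‖) := by gcongr; exact n1 _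
      _ = (|w z| * (1 + ‖u z‖)) * |w z'| := by rw [abs_mul]; ring
      _ ≤ _ := mul_le_mul g.2.1 g'.2.1 (abs_nonneg _) (Gn z)
  have I2 : Integrable (fun q : SpT N × SpT N => (w q.1 * w q.2) * (χ q.1 *
      fderiv ℝ (kap ε) (q.2 - q.1) (1, u q.2)))
      ((volume.restrict (KK N τ)).prod (volume.restrict (KK N τ))) := by
    refine dbl_int H ((hw1.mul hw2).mul (hx1.mul (kap_fd_meas ε hv1')))
      (B := B + B * (L / ε)) fun z hz z' hz' => ?_
    refine abs_mul_bd hM (hχD z hz z' _) ?_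
    have g := GG_one w u z
    have g' := GG_ge w u z'
    calc |w z * w z'| * ‖((1, u z') : SpT N)‖ ≤ |w z * w z'| * (1 + ‖u z'‖) := by gcongr; exact n1 _
      _ = |w z| * (|w z'| * (1 + ‖u z'‖)) := by rw [abs_mul]; ring
      _ ≤ _ := mul_le_mul g.2.1 g'.2.1 (by positivity) (Gn z)
  have I3 : Integrable (fun q : SpT N × SpT N => (w q.2 ^ 2) * (kap ε (q.2 - q.1) *
      fderiv ℝ χ q.1 (0, u q.1) - χ q.1 * fderiv ℝ (kap ε) (q.2 - q.1) (0, u q.1)))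
      ((volume.restrict (KK N τ)).prod (volume.restrict (KK N τ))) := by
    refine dbl_int H ((hw2.pow_const 2).mul ((hkm.mul (fd_meas2 hχ hv0)).sub
      (hx1.mul (kap_fd_meas ε hv0)))) (B := B + B * (L / ε)) fun z hz z' hz' => ?_
    refine abs_mul_bd hM (hbr z hz z' _) ?_
    rw [n0, abs_of_nonneg (sq_nonneg _), mul_comm]
    exact mul_le_mul (GG_one w u z).2.2.2 (GG_one w u z').2.2.1 (by positivity) (Gn z)
  have I4 : Integrable (fun q : SpT N × SpT N => (w q.1 ^ 2) * (χ q.1 *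
      fderiv ℝ (kap ε) (q.2 - q.1) (0, u q.2)))
      ((volume.restrict (KK N τ)).prod (volume.restrict (KK N τ))) := by
    refine dbl_int H ((hw1.pow_const 2).mul (hx1.mul (kap_fd_meas ε hv0')))
      (B := B + B * (L / ε)) fun z hz z' hz' => ?_
    refine abs_mul_bd hM (hχD z hz z' _) ?_
    rw [n0, abs_of_nonneg (sq_nonneg _)]
    exact mul_le_mul (GG_one w u z).2.2.1 (GG_one w u z').2.2.2 (by positivity) (Gn z)
  have I5 : Integrable (fun q : SpT N × SpT N => (w q.1 ^ 2) * (χ q.1 *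
      fderiv ℝ (kap ε) (q.2 - q.1) (0, u q.1)))
      ((volume.restrict (KK N τ)).prod (volume.restrict (KK N τ))) := by
    refine dbl_int H ((hw1.pow_const 2).mul (hx1.mul (kap_fd_meas ε hv0)))
      (B := B + B * (L / ε)) fun z hz z' hz' => ?_
    refine abs_mul_bd hM (hχD z hz z' _) ?_
    rw [n0, abs_of_nonneg (sq_nonneg _)]
    have h1 : w z ^ 2 * ‖u z‖ ≤ GG w u z := by
      have := (GG_ge w u z).1
      nlinarith [sq_nonneg (w z)]
    calc w z ^ 2 * ‖u z‖ ≤ GG w u z * 1 := by linarith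
      _ ≤ _ := mul_le_mul_of_nonneg_left (GG_one w u z').1 (Gn z)
  have I6 : Integrable (fun q : SpT N × SpT N => (w q.2 ^ 2) * (kap ε (q.2 - q.1) *
      fderiv ℝ χ q.1 (0, u q.2) - χ q.1 * fderiv ℝ (kap ε) (q.2 - q.1) (0, u q.2)))
      ((volume.restrict (KK N τ)).prod (volume.restrict (KK N τ))) := by
    refine dbl_int H ((hw2.pow_const 2).mul ((hkm.mul (fd_meas2 hχ hv0')).sub
      (hx1.mul (kap_fd_meas ε hv0')))) (B := B + B * (L / ε)) fun z hz z' hz' => ?_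
    refine abs_mul_bd hM (hbr z hz z' _) ?_
    rw [n0, abs_of_nonneg (sq_nonneg _)]
    have h1 : w z' ^ 2 * ‖u z'‖ ≤ GG w u z' := by
      have := (GG_ge w u z').1
      nlinarith [sq_nonneg (w z')]
    calc w z' ^ 2 * ‖u z'‖ ≤ 1 * GG w u z' := by linarith
      _ ≤ _ := mul_le_mul_of_nonneg_right (GG_one w u z).1 (Gn z')
  -- product test functions
  have pc : ∀ z' : SpT N, ContDiff ℝ 1 (fun z => kap ε (z' - z) * χ z) := fun z' =>
    (kapL_contDiff ε z').mul hχ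
  have pp : ∀ z' : SpT N, PerST (fun z => kap ε (z' - z) * χ z) := fun z' z i => by
    have := kapL_per ε z' z i
    simp only at this ⊢
    rw [this, hχp]
  have pf : ∀ z' z v : SpT N, fderiv ℝ (fun z => kap ε (z' - z) * χ z) z v
      = kap ε (z' - z) * fderiv ℝ χ z v - χ z * fderiv ℝ (kap ε) (z' - z) v := fun z' z v => by
    rw [fderiv_mul_apply (kapL_contDiff ε z') hχ, kapL_fd]; ring
  -- zero integrals
  have Z1 := dbl_zero_left I1 fun z' hz' => by
    have := H.E1 _ (pc z') (pp z') (fun x => by rw [hχ0 (τ, x) H.hτ.le, mul_zero])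
    simp_rw [pf] at this
    simp_rw [mul_assoc (w z')]
    rw [integral_const_mul, this, mul_zero]
  have Z2 := dbl_zero_right I2 fun z hz => by
    by_cases h0 : τ0 ≤ z.1
    · simp [hχ0 z h0]
    · have := H.E1 _ (kapR_contDiff ε z) (kapR_per ε z) (fun x => by
        apply kap_zero hε
        left; right
        push Not at h0
        simp; linarith)
      simp_rw [kapR_fd] at this
      have e : ∀ z', (w z * w z') * (χ z * fderiv ℝ (kap ε) (z' - z) (1, u z'))
        = (w z * χ z) * (w z' * fderiv ℝ (kap ε) (z' - z) (1, u z')) := fun z' => by ring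
      simp_rw [e]
      rw [integral_const_mul, this, mul_zero]
  have Z3 := dbl_zero_left I3 fun z' hz' => by
    have := H.E2 _ (pc z') (pp z')
    simp_rw [pf] at this
    simp only
    rw [integral_const_mul, this, mul_zero]
  have Z4 := dbl_zero_right I4 fun z hz => by
    have := H.E2 _ (kapR_contDiff ε z) (kapR_per ε z)
    simp_rw [kapR_fd] at this
    simp only
    rw [integral_const_mul, integral_const_mul, this, mul_zero, mul_zero]
  have Z5 := dbl_zero_right I5 fun z hz => by
    have := per_int (τ := τ) (kapR_contDiff ε z) (kapR_per ε z) (u z)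
    simp_rw [kapR_fd] at this
    simp only
    rw [integral_const_mul, integral_const_mul, this, mul_zero, mul_zero]
  have Z6 := dbl_zero_left I6 fun z' hz' => by
    have := per_int (τ := τ) (pc z') (pp z') (u z')
    simp_rw [pf] at this
    simp only
    rw [integral_const_mul, this, mul_zero]
  have s1 : ∀ (a : Spc N) (b : Spc N), ((0, a - b) : SpT N) = (0, a) - (0, b) := fun a b => by simp
  have s2 : ∀ (a : Spc N), ((1, a) : SpT N) = (1, 0) + (0, a) := fun a => by simp
  have hptw : ∀ q : SpT N × SpT N, 
      w q.1 * w q.2 * kap ε (q.2 - q.1) * fderiv ℝ χ q.1 (1, u q.1)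
      + 1 / 2 * (w q.1 - w q.2) ^ 2 * χ q.1 * fderiv ℝ (kap ε) (q.2 - q.1) (0, u q.1 - u q.2)
      - 1 / 2 * w q.2 ^ 2 * kap ε (q.2 - q.1) * fderiv ℝ χ q.1 (0, u q.1 - u q.2)
      = ((w q.2 * w q.1) * (kap ε (q.2 - q.1) *
      fderiv ℝ χ q.1 (1, u q.1) - χ q.1 * fderiv ℝ (kap ε) (q.2 - q.1) (1, u q.1))
      + (w q.1 * w q.2) * (χ q.1 * fderiv ℝ (kap ε) (q.2 - q.1) (1, u q.2)))
      + 1 / 2 * (((w q.1 ^ 2) * (χ q.1 * fderiv ℝ (kap ε) (q.2 - q.1) (0, u q.1))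
        - (w q.1 ^ 2) * (χ q.1 * fderiv ℝ (kap ε) (q.2 - q.1) (0, u q.2)))
      + ((w q.2 ^ 2) * (kap ε (q.2 - q.1) *
      fderiv ℝ χ q.1 (0, u q.2) - χ q.1 * fderiv ℝ (kap ε) (q.2 - q.1) (0, u q.2))
      - (w q.2 ^ 2) * (kap ε (q.2 - q.1) *
      fderiv ℝ χ q.1 (0, u q.1) - χ q.1 * fderiv ℝ (kap ε) (q.2 - q.1) (0, u q.1)))) := by
    intro q
    rw [s1, map_sub, map_sub, s2 (u q.1), s2 (u q.2)]
    simp only [map_add]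
    ring
  simp_rw [hptw]
  exact lin6 I1 I2 I5 I4 I6 I3 Z1 Z2 Z5 Z4 Z6 Z3

/-! ### Geometry of the kernel support -/

def Hh (N : ℕ) (ε : ℝ) : Set (SpT N) := {h | (0 ≤ h.1 ∧ h.1 ≤ ε) ∧ ∀ j, |h.2 j| ≤ 2 * ε}

lemma coord_cont {N : ℕ} (j : Fin N) : Continuous (fun h : SpT N => h.2 j) :=
  (coord_contDiff j).continuous

lemma Hh_meas (N : ℕ) (ε : ℝ) : MeasurableSet (Hh N ε) := by
  refine IsClosed.measurableSet ?_
  have h1 : IsClosed {h : SpT N | 0 ≤ h.1} := isClosed_le continuous_const continuous_fst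
  have h2 : IsClosed {h : SpT N | h.1 ≤ ε} := isClosed_le continuous_fst continuous_const
  have h3 : IsClosed {h : SpT N | ∀ j, |h.2 j| ≤ 2 * ε} := by
    have : {h : SpT N | ∀ j, |h.2 j| ≤ 2 * ε} = ⋂ j, {h : SpT N | |h.2 j| ≤ 2 * ε} := by ext; simp
    rw [this]
    exact isClosed_iInter fun j => isClosed_le (coord_cont j).abs continuous_const
  exact (h1.inter h2).inter h3

def cN (N : ℕ) : ℝ := 2 * N + 1

lemma cN_pos (N : ℕ) : 0 < cN N := by unfold cN; positivity

lemma spc_norm_le {N : ℕ} (x : Spc N) {a : ℝ} (h : ∀ j, |x j| ≤ a) : ‖x‖ ≤ N * a := by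
  have hx : x = ∑ j, EuclideanSpace.single j (x j) := by
    ext k; simp [Finset.sum_apply]
  rw [hx]
  refine (norm_sum_le _ _).trans ?_
  calc _ ≤ ∑ _j : Fin N, a := Finset.sum_le_sum fun j _ => by simpa using h j
    _ = _ := by simp

lemma Hh_norm {N : ℕ} {ε : ℝ} (hε : 0 < ε) {h : SpT N} (hh : h ∈ Hh N ε) : ‖h‖ ≤ cN N * ε := by
  rw [Prod.norm_def]
  unfold cN
  refine max_le ?_ ?_
  · rw [Real.norm_eq_abs, abs_of_nonneg hh.1.1]
    have := hh.1.2
    have : (0:ℝ) ≤ 2 * N * ε := by positivity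
    linarith
  · have := spc_norm_le h.2 hh.2
    linarith

def mm (N : ℕ) (ε : ℝ) : ℝ := ∫ h in Hh N ε, kap ε h

lemma Hh_fin {N : ℕ} {ε : ℝ} (hε : 0 < ε) : volume (Hh N ε) < ⊤ :=
  (measure_mono fun _ hh => mem_closedBall_zero_iff.2 (Hh_norm hε hh)).trans_lt
    (isCompact_closedBall (0 : SpT N) (cN N * ε)).measure_lt_top

lemma kap_one {N : ℕ} {ε : ℝ} (hε : 0 < ε) {h : SpT N}
    (hh : h ∈ Metric.ball ((ε / 2, 0) : SpT N) (ε / 4)) : kap ε h = 1 ∧ h ∈ Hh N ε := by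
  rw [mem_ball_iff_norm, Prod.norm_def, max_lt_iff] at hh
  obtain ⟨h1, h2⟩ := hh
  simp only [Prod.fst_sub, Prod.snd_sub, sub_zero, Real.norm_eq_abs] at h1 h2
  rw [abs_lt] at h1
  have h3 : ∀ j, |h.2 j| < ε / 4 := fun j => (PiLp.norm_apply_le h.2 j).trans_lt h2
  constructor
  · unfold kap
    rw [th_one hε (by linarith) (by linarith), one_mul]
    refine Finset.prod_eq_one fun j _ => sb_one hε (sin_le_small ?_)
    have := h3 j; linarith
  · refine ⟨⟨by linarith, by linarith⟩, fun j => ?_⟩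
    have := h3 j; linarith

lemma mm_bound (N : ℕ) : ∃ A : ℝ, 0 < A ∧ ∀ ε, 0 < ε → 0 < mm N ε ∧
    volume.real (Hh N ε) ≤ A * mm N ε := by
  have hc := cN_pos N
  refine ⟨(4 * cN N) ^ Module.finrank ℝ (SpT N), by positivity, fun ε hε => ?_⟩
  have hsub : Metric.ball ((ε / 2, 0) : SpT N) (ε / 4) ⊆ Hh N ε := fun h hh => (kap_one hε hh).2
  have hInt : IntegrableOn (kap ε) (Hh N ε) := by
    refine IntegrableOn.mono_set ((kap_contDiff ε).continuous.continuousOn.integrableOn_compact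
      (isCompact_closedBall (0 : SpT N) (cN N * ε))) fun _ hh => mem_closedBall_zero_iff.2 (Hh_norm hε hh)
  have h1 : volume.real (Metric.ball ((ε / 2, 0) : SpT N) (ε / 4)) ≤ mm N ε := by
    calc volume.real (Metric.ball ((ε / 2, 0) : SpT N) (ε / 4))
        = ∫ h in Metric.ball ((ε / 2, 0) : SpT N) (ε / 4), kap ε h := by
          rw [setIntegral_congr_fun measurableSet_ball (g := fun _ => (1:ℝ)) fun h hh => (kap_one hε hh).1]
          simp
      _ ≤ _ := setIntegral_mono_set hInt (ae_of_all _ fun h => kap_nonneg ε h) hsub.eventuallyLE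
  have h2 : volume.real (Hh N ε) ≤ volume.real (Metric.closedBall (0 : SpT N) (cN N * ε)) :=
    measureReal_mono (fun _ hh => mem_closedBall_zero_iff.2 (Hh_norm hε hh))
      (isCompact_closedBall (0 : SpT N) (cN N * ε)).measure_lt_top.ne
  rw [measureReal_def, Measure.addHaar_ball _ _ (by positivity), ENNReal.toReal_mul,
    ENNReal.toReal_ofReal (by positivity)] at h1
  rw [measureReal_def volume (Metric.closedBall _ _), Measure.addHaar_closedBall _ _ (by positivity),
    ENNReal.toReal_mul, ENNReal.toReal_ofReal (by positivity)] at h2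
  have hV : 0 < (volume (Metric.ball (0 : SpT N) 1)).toReal :=
    ENNReal.toReal_pos (Metric.measure_ball_pos _ _ one_pos).ne' measure_ball_lt_top.ne
  constructor
  · refine lt_of_lt_of_le ?_ h1
    positivity
  · refine h2.trans ?_
    calc _ = (4 * cN N) ^ Module.finrank ℝ (SpT N) * ((ε / 4) ^ Module.finrank ℝ (SpT N) *
        (volume (Metric.ball (0 : SpT N) 1)).toReal) := by
          rw [← mul_assoc, ← mul_pow]; congr 2; ring
      _ ≤ _ := by gcongr

/-- the support set of the cut-off -/
def Zz (N : ℕ) (τ0 τ l : ℝ) : Set (SpT N) :=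
  {z | z ∈ KK N τ ∧ z.1 ≤ τ0 ∧ ∀ j, l ≤ |Real.cos (Real.pi * z.2 j / 2)|}

lemma Zz_meas (N : ℕ) (τ0 τ l : ℝ) : MeasurableSet (Zz N τ0 τ l) := by
  refine IsClosed.measurableSet ?_
  have h2 : IsClosed {h : SpT N | h.1 ≤ τ0} := isClosed_le continuous_fst continuous_const
  have h3 : IsClosed {h : SpT N | ∀ j, l ≤ |Real.cos (Real.pi * h.2 j / 2)|} := by
    have : {h : SpT N | ∀ j, l ≤ |Real.cos (Real.pi * h.2 j / 2)|}
      = ⋂ j, {h : SpT N | l ≤ |Real.cos (Real.pi * h.2 j / 2)|} := by ext; simp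
    rw [this]
    refine isClosed_iInter fun j => isClosed_le continuous_const ?_
    have := coord_cont (N := N) j
    fun_prop
  exact (KK_closed N τ).inter (h2.inter h3)

lemma cos_far {x l : ℝ} (hx : |x| ≤ 1) (h : l ≤ |Real.cos (Real.pi * x / 2)|) : l / 2 ≤ 1 - |x| := by
  have h1 : |Real.cos (Real.pi * x / 2)| = Real.sin (Real.pi * (1 - |x|) / 2) := by
    rw [show Real.pi * (1 - |x|) / 2 = Real.pi / 2 - Real.pi * |x| / 2 by ring, Real.sin_pi_div_two_sub]
    have e : Real.cos (Real.pi * x / 2) = Real.cos (Real.pi * |x| / 2) := by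
      rw [← Real.cos_abs (Real.pi * x / 2)]
      congr 1
      rw [abs_div, abs_mul, abs_of_pos Real.pi_pos, abs_two]
    rw [e]
    refine abs_of_nonneg (Real.cos_nonneg_of_mem_Icc ⟨?_, ?_⟩)
    · have := Real.pi_pos; have := abs_nonneg x; have : 0 ≤ Real.pi * |x| := by positivity
      linarith
    · have := Real.pi_pos; nlinarith
  have h0 : 0 ≤ 1 - |x| := by linarith
  have h2 := Real.sin_le (x := Real.pi * (1 - |x|) / 2) (by have := Real.pi_pos; positivity)
  have h3 := Real.pi_le_four
  nlinarith

lemma Zz_add {N : ℕ} {τ0 τ l ε : ℝ} (hε : 0 < ε) (hετ : ε < τ - τ0) (hεl : 4 * ε ≤ l) {z h : SpT N}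
    (hz : z ∈ Zz N τ0 τ l) (hh : h ∈ Hh N ε) : z + h ∈ KK N τ := by
  obtain ⟨⟨hz1, hz2⟩, hz3, hz4⟩ := hz
  refine ⟨⟨?_, ?_⟩, fun j => ?_⟩
  · exact add_nonneg hz1.1 hh.1.1
  · have := hh.1.2
    show z.1 + h.1 ≤ τ
    linarith
  · have := cos_far (abs_le.2 (hz2 j)) (hz4 j)
    have h3 := hh.2 j
    have h4 := abs_add_le (z.2 j) (h.2 j)
    exact abs_le.1 (show |z.2 j + h.2 j| ≤ 1 by linarith)

lemma Zz_out {N : ℕ} {τ0 τ l ε : ℝ} (hε : 0 < ε) (hεl : 4 * ε ≤ l) {z z' : SpT N}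
    (hz : z ∈ Zz N τ0 τ l) (hz' : z' ∈ KK N τ) (hh : z' - z ∉ Hh N ε) :
    kap ε (z' - z) = 0 ∧ fderiv ℝ (kap ε) (z' - z) = 0 := by
  suffices hs : ((z' - z).1 < 0 ∨ ε < (z' - z).1) ∨
      ∃ j, 2 * ε ^ 2 < Real.sin (Real.pi * (z' - z).2 j / 2) ^ 2 from ⟨kap_zero hε hs, kap_fd_zero hε hs⟩
  by_contra hc
  push Not at hc
  refine hh ⟨hc.1, fun j => ?_⟩
  have h1 := hc.2 j
  have h2 := cos_far (abs_le.2 (hz.1.2 j)) (hz.2.2 j)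
  have h3 := abs_le.2 (hz'.2 j)
  have h4 : |(z' - z).2 j| ≤ 2 - 2 * ε := by
    have := abs_sub (z'.2 j) (z.2 j)
    show |z'.2 j - z.2 j| ≤ _
    linarith
  have key : ∀ y : ℝ, |y| ≤ 1 → Real.sin (Real.pi * y / 2) ^ 2 ≤ 2 * ε ^ 2 → |y| < 2 * ε := by
    intro y hy h
    have := jordan hy
    have h2 : |y| ^ 2 ≤ Real.sin (Real.pi * y / 2) ^ 2 := by
      rw [← sq_abs (Real.sin _)]; gcongr
    by_contra hh
    push Not at hh
    nlinarith
  set y := (z' - z).2 j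
  by_cases hy : |y| ≤ 1
  · exact (key y hy h1).le
  · exfalso
    push Not at hy
    have h5 : Real.sin (Real.pi * (2 - |y|) / 2) ^ 2 = Real.sin (Real.pi * y / 2) ^ 2 := by
      rw [show Real.pi * (2 - |y|) / 2 = Real.pi - Real.pi * |y| / 2 by ring, Real.sin_pi_sub]
      rcases abs_cases y with ⟨e, _⟩ | ⟨e, _⟩
      · rw [e]
      · rw [e, show Real.pi * -y / 2 = -(Real.pi * y / 2) by ring, Real.sin_neg, neg_sq]
    have h6 := key (2 - |y|) (by rw [abs_of_nonneg (by linarith)]; linarith) (h5.le.trans h1)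
    rw [abs_of_nonneg (by linarith)] at h6
    linarith

lemma mm_eq {N : ℕ} {τ0 τ l ε : ℝ} (hε : 0 < ε) (hετ : ε < τ - τ0) (hεl : 4 * ε ≤ l) {z : SpT N}
    (hz : z ∈ Zz N τ0 τ l) : ∫ z' in KK N τ, kap ε (z' - z) = mm N ε := by
  unfold mm
  rw [← integral_indicator (Hh_meas N ε), ← integral_indicator (KK_meas N τ),
    ← integral_sub_right_eq_self ((Hh N ε).indicator (kap ε)) z]
  refine integral_congr_ae (ae_of_all _ fun z' => ?_)
  show (KK N τ).indicator (fun z' => kap ε (z' - z)) z' = (Hh N ε).indicator (kap ε) (z' - z)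
  by_cases h : z' - z ∈ Hh N ε
  · have : z' ∈ KK N τ := by simpa using Zz_add hε hετ hεl hz h
    rw [indicator_of_mem h, indicator_of_mem this]
  · rw [indicator_of_notMem h]
    by_cases h' : z' ∈ KK N τ
    · rw [indicator_of_mem h', (Zz_out hε hεl hz h' h).1]
    · rw [indicator_of_notMem h']

/-! ### The commutator estimate -/

lemma shift_lint {N : ℕ} {τ0 τ l ε : ℝ} {F : SpT N × SpT N → ℝ≥0∞} (hF : Measurable F)
    (h0 : ∀ z ∈ KK N τ, ∀ z' ∈ KK N τ, ¬ (z ∈ Zz N τ0 τ l ∧ z' - z ∈ Hh N ε) → F (z, z') = 0) :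
    ∫⁻ q, F q ∂((volume.restrict (KK N τ)).prod (volume.restrict (KK N τ)))
      ≤ ∫⁻ h in Hh N ε, ∫⁻ z in Zz N τ0 τ l, F (z, z + h) := by
  rw [lintegral_prod _ hF.aemeasurable]
  have hm : Measurable (Function.uncurry fun z h : SpT N => F (z, z + h)) :=
    hF.comp (f := fun q : SpT N × SpT N => (q.1, q.1 + q.2)) (by fun_prop)
  have h1 : ∀ z ∈ KK N τ, ∫⁻ z' in KK N τ, F (z, z')
      ≤ (Zz N τ0 τ l).indicator (fun z => ∫⁻ h in Hh N ε, F (z, z + h)) z := by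
    intro z hz
    by_cases hzZ : z ∈ Zz N τ0 τ l
    · rw [indicator_of_mem hzZ, ← lintegral_indicator (KK_meas N τ), ← lintegral_indicator (Hh_meas N ε),
        ← lintegral_sub_right_eq_self ((Hh N ε).indicator fun h => F (z, z + h)) z]
      refine lintegral_mono fun z' => ?_
      by_cases h' : z' ∈ KK N τ
      · rw [indicator_of_mem h']
        by_cases hh : z' - z ∈ Hh N ε
        · rw [indicator_of_mem hh]; simp
        · rw [h0 z hz z' h' (fun h => hh h.2)]; exact zero_le
      · rw [indicator_of_notMem h']; exact zero_le
    · rw [indicator_of_notMem hzZ, setLIntegral_congr_fun (KK_meas N τ) (g := fun _ => 0)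
        (fun z' hz' => h0 z hz z' hz' fun h => hzZ h.1)]
      simp
  calc _ ≤ ∫⁻ z in KK N τ, (Zz N τ0 τ l).indicator (fun z => ∫⁻ h in Hh N ε, F (z, z + h)) z :=
        setLIntegral_mono' (KK_meas N τ) h1
    _ ≤ ∫⁻ z, (Zz N τ0 τ l).indicator (fun z => ∫⁻ h in Hh N ε, F (z, z + h)) z :=
        setLIntegral_le_lintegral _ _
    _ = ∫⁻ z in Zz N τ0 τ l, ∫⁻ h in Hh N ε, F (z, z + h) := lintegral_indicator (Zz_meas N τ0 τ l) _
    _ = _ := lintegral_lintegral_swap hm.aemeasurable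

lemma young_real {a b c : ℝ} (ha : 0 ≤ a) (hb : 0 ≤ b) (hc : 0 ≤ c) :
    a * b * c ≤ a ^ 3 + b ^ 3 + c ^ 3 := by
  nlinarith [mul_nonneg ha (sq_nonneg (a - b)), mul_nonneg hb (sq_nonneg (a - b)),
    mul_nonneg hc (sq_nonneg (a - b)), mul_nonneg ha (sq_nonneg (a - c)),
    mul_nonneg hb (sq_nonneg (a - c)), mul_nonneg hc (sq_nonneg (a - c)),
    mul_nonneg ha (sq_nonneg (b - c)), mul_nonneg hb (sq_nonneg (b - c)),
    mul_nonneg hc (sq_nonneg (b - c)), pow_nonneg ha 3, pow_nonneg hb 3, pow_nonneg hc 3]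

lemma young_s {g d s : ℝ} (hg : 0 ≤ g) (hd : 0 ≤ d) (hs : 0 < s) :
    g ^ 2 * d ≤ s * (2 * g ^ 3) + s⁻¹ ^ 2 * d ^ 3 := by
  have := young_real hg hg (show 0 ≤ s⁻¹ * d by positivity)
  have e : g ^ 2 * d = s * (g * g * (s⁻¹ * d)) := by field_simp
  have e2 : s * (g ^ 3 + g ^ 3 + (s⁻¹ * d) ^ 3) = s * (2 * g ^ 3) + s⁻¹ ^ 2 * d ^ 3 := by field_simp; ring
  rw [e, ← e2]
  gcongr

/-- pointwise bound of the commutator; `x = fχ(1,u)`, `y = D(0,u-u')`, `v = fχ(0,u-u')` -/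
lemma ptw_bound {w w' k x y v c B L ε s g g' e U : ℝ} (hB : 0 < B) (hL : 0 < L) (hε : 0 < ε)
    (hs : 0 < s) (hk0 : 0 ≤ k) (hk1 : k ≤ 1) (hx : |x| ≤ B * U) (hU : 0 ≤ U) (he : 0 ≤ e)
    (hy : |y| ≤ L / ε * e) (hv : |v| ≤ B * e) (hc : |c| ≤ B)
    (hg : |w| ≤ g) (hg2 : U ≤ g) (hg' : |w'| ≤ g') :
    |w ^ 2 * k * x - (w * w' * k * x + 1 / 2 * (w - w') ^ 2 * c * y - 1 / 2 * w' ^ 2 * k * v)|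
      ≤ (B * (1 + L)) * (s * 2) * g ^ 3 + (B * (1 + L)) * (s * 2) * g' ^ 3
        + (B * (1 + L)) * (s⁻¹ ^ 2 + 1 / ε) * (|w' - w| ^ 3 + e ^ 3) := by
  have hw := abs_nonneg w
  have hw' := abs_nonneg w'
  have hgn : 0 ≤ g := hw.trans hg
  have hgn' : 0 ≤ g' := hw'.trans hg'
  set d := |w' - w| with hd
  have hdn : 0 ≤ d := abs_nonneg _
  have t1 : |w * (w - w') * k * x| ≤ B * (g ^ 2 * d) := by
    rw [abs_mul, abs_mul, abs_mul, abs_of_nonneg hk0, abs_sub_comm]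
    calc |w| * d * k * |x| ≤ g * d * 1 * (B * g) := by
          gcongr
          exact hx.trans (by gcongr)
      _ = _ := by ring
  have t2 : |1 / 2 * (w - w') ^ 2 * c * y| ≤ B * L * (1 / ε) * (d ^ 3 + e ^ 3) := by
    rw [abs_mul, abs_mul, abs_mul, abs_pow, abs_sub_comm, abs_of_nonneg (by norm_num : (0:ℝ) ≤ 1 / 2)]
    have hde : d ^ 2 * e ≤ 2 * (d ^ 3 + e ^ 3) := by
      have := young_real hdn hdn he
      nlinarith [pow_nonneg hdn 3, pow_nonneg he 3]
    calc 1 / 2 * d ^ 2 * |c| * |y| ≤ 1 / 2 * d ^ 2 * B * (L / ε * e) := by gcongr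
      _ = B * L * (1 / ε) * (1 / 2 * (d ^ 2 * e)) := by ring
      _ ≤ B * L * (1 / ε) * (1 / 2 * (2 * (d ^ 3 + e ^ 3))) := by gcongr
      _ = _ := by ring
  have t3 : |1 / 2 * w' ^ 2 * k * v| ≤ B * (g' ^ 2 * e) := by
    rw [abs_mul, abs_mul, abs_mul, abs_pow, abs_of_nonneg hk0, abs_of_nonneg (by norm_num : (0:ℝ) ≤ 1 / 2)]
    calc 1 / 2 * |w'| ^ 2 * k * |v| ≤ 1 * g' ^ 2 * 1 * (B * e) := by
          gcongr; norm_num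
      _ = _ := by ring
  have y1 := young_s hgn hdn hs
  have y2 := young_s hgn' he hs
  have e1 : w ^ 2 * k * x - (w * w' * k * x + 1 / 2 * (w - w') ^ 2 * c * y - 1 / 2 * w' ^ 2 * k * v)
      = w * (w - w') * k * x - 1 / 2 * (w - w') ^ 2 * c * y + 1 / 2 * w' ^ 2 * k * v := by ring
  rw [e1]
  refine (abs_add_le _ _).trans ((add_le_add (abs_sub _ _) le_rfl).trans ?_)
  have z1 : B * (g ^ 2 * d) ≤ B * (s * (2 * g ^ 3) + s⁻¹ ^ 2 * d ^ 3) := by gcongr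
  have z2 : B * (g' ^ 2 * e) ≤ B * (s * (2 * g' ^ 3) + s⁻¹ ^ 2 * e ^ 3) := by gcongr
  have p1 : 0 ≤ B * L * (s * 2) * g ^ 3 := by positivity
  have p2 : 0 ≤ B * L * (s * 2) * g' ^ 3 := by positivity
  have p3 : 0 ≤ B * L * s⁻¹ ^ 2 * (d ^ 3 + e ^ 3) := by positivity
  have p4 : 0 ≤ B * (1 / ε) * (d ^ 3 + e ^ 3) := by positivity
  nlinarith

lemma enorm_cube_real {E : Type*} [NormedAddCommGroup E] (x : E) :
    ENNReal.ofReal (‖x‖ ^ 3) = ‖x‖ₑ ^ 3 := by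
  rw [ENNReal.ofReal_pow (norm_nonneg _), ofReal_norm]

/-- one translate -/
lemma one_shift {N : ℕ} {τ0 τ α C : ℝ} {w : SpT N → ℝ} {u : SpT N → Spc N}
    (H : Core N τ0 τ α C w u) {l ε : ℝ} (hε : 0 < ε) (hετ : ε < τ - τ0) (hεl : 4 * ε ≤ l)
    {a b : ℝ} (ha : 0 ≤ a) (hb : 0 ≤ b) {h : SpT N} (hh : h ∈ Hh N ε) :
    ∫⁻ z in Zz N τ0 τ l, ENNReal.ofReal (a * GG w u z + a * GG w u (z + h)
        + b * (|w (z + h) - w z| ^ 3 + ‖u (z + h) - u z‖ ^ 3))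
      ≤ ENNReal.ofReal (2 * a * (∫ z in KK N τ, GG w u z) + 2 * b * (C * (cN N * ε) ^ α) ^ 3) := by
  have hwm := H.wm
  have hum := H.um
  have Gn : ∀ z, 0 ≤ GG w u z := fun z => zero_le_one.trans (GG_one w u z).1
  have Gm : Measurable (GG w u) := by unfold GG; fun_prop
  have hΓ : ∫⁻ z in KK N τ, ENNReal.ofReal (GG w u z) = ENNReal.ofReal (∫ z in KK N τ, GG w u z) :=
    (ofReal_integral_eq_lintegral_ofReal (GG_int H) (ae_of_all _ Gn)).symm
  have hsub : Zz N τ0 τ l ⊆ KK N τ ∩ {z | z + h ∈ KK N τ} := fun z hz =>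
    ⟨hz.1, Zz_add hε hετ hεl hz hh⟩
  have i1 : ∫⁻ z in Zz N τ0 τ l, ENNReal.ofReal (GG w u z) ≤ ENNReal.ofReal (∫ z in KK N τ, GG w u z) := by
    rw [← hΓ]; exact lintegral_mono_set fun z hz => hz.1
  have i2 : ∫⁻ z in Zz N τ0 τ l, ENNReal.ofReal (GG w u (z + h)) ≤ ENNReal.ofReal (∫ z in KK N τ, GG w u z) := by
    rw [← hΓ, ← lintegral_indicator (KK_meas N τ), ← lintegral_indicator (Zz_meas N τ0 τ l),
      ← lintegral_add_right_eq_self ((KK N τ).indicator fun z => ENNReal.ofReal (GG w u z)) h]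
    refine lintegral_mono fun z => ?_
    by_cases hz : z ∈ Zz N τ0 τ l
    · rw [indicator_of_mem hz, indicator_of_mem (show z + h ∈ KK N τ from (hsub hz).2)]
    · rw [indicator_of_notMem hz]; exact zero_le
  have hnorm : ‖h‖ ^ α ≤ (cN N * ε) ^ α :=
    Real.rpow_le_rpow (norm_nonneg _) (Hh_norm hε hh) (by linarith [H.hα])
  have hbb : ENNReal.ofReal ((C * ‖h‖ ^ α) ^ 3) ≤ ENNReal.ofReal ((C * (cN N * ε) ^ α) ^ 3) := by
    have := H.hC
    gcongr
  have i3 : ∫⁻ z in Zz N τ0 τ l, ‖w (z + h) - w z‖ₑ ^ 3 ≤ ENNReal.ofReal ((C * (cN N * ε) ^ α) ^ 3) :=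
    (lintegral_mono_set hsub).trans ((H.wB h).trans hbb)
  have i4 : ∫⁻ z in Zz N τ0 τ l, ‖u (z + h) - u z‖ₑ ^ 3 ≤ ENNReal.ofReal ((C * (cN N * ε) ^ α) ^ 3) :=
    (lintegral_mono_set hsub).trans ((H.uB h).trans hbb)
  have hCn : 0 ≤ (C * (cN N * ε) ^ α) ^ 3 := by
    have := H.hC; have := cN_pos N; positivity
  have hΓn : 0 ≤ ∫ z in KK N τ, GG w u z := integral_nonneg Gn
  calc _ = ∫⁻ z in Zz N τ0 τ l, ((ENNReal.ofReal a * ENNReal.ofReal (GG w u z)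
        + ENNReal.ofReal a * ENNReal.ofReal (GG w u (z + h)))
        + ENNReal.ofReal b * (‖w (z + h) - w z‖ₑ ^ 3 + ‖u (z + h) - u z‖ₑ ^ 3)) := by
        refine lintegral_congr fun z => ?_
        have g1 := Gn z
        have g2 := Gn (z + h)
        rw [ENNReal.ofReal_add (by positivity) (by positivity), ENNReal.ofReal_add (by positivity) (by positivity),
          ENNReal.ofReal_mul ha, ENNReal.ofReal_mul ha, ENNReal.ofReal_mul hb,
          ENNReal.ofReal_add (by positivity) (by positivity), ← enorm_cube_real, ← enorm_cube_real]
        rfl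
    _ = (ENNReal.ofReal a * (∫⁻ z in Zz N τ0 τ l, ENNReal.ofReal (GG w u z))
        + ENNReal.ofReal a * ∫⁻ z in Zz N τ0 τ l, ENNReal.ofReal (GG w u (z + h)))
        + ENNReal.ofReal b * ((∫⁻ z in Zz N τ0 τ l, ‖w (z + h) - w z‖ₑ ^ 3)
          + ∫⁻ z in Zz N τ0 τ l, ‖u (z + h) - u z‖ₑ ^ 3) := by
        rw [lintegral_add_left (by fun_prop), lintegral_add_left (by fun_prop),
          lintegral_const_mul _ (by fun_prop), lintegral_const_mul _ (by fun_prop),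
          lintegral_const_mul _ (by fun_prop), lintegral_add_left (by fun_prop)]
    _ ≤ (ENNReal.ofReal a * ENNReal.ofReal (∫ z in KK N τ, GG w u z)
        + ENNReal.ofReal a * ENNReal.ofReal (∫ z in KK N τ, GG w u z))
        + ENNReal.ofReal b * (ENNReal.ofReal ((C * (cN N * ε) ^ α) ^ 3)
          + ENNReal.ofReal ((C * (cN N * ε) ^ α) ^ 3)) := by gcongr
    _ = _ := by
        rw [← ENNReal.ofReal_add hCn hCn, ← ENNReal.ofReal_mul ha, ← ENNReal.ofReal_mul hb,
          ← ENNReal.ofReal_add (by positivity) (by positivity),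
          ← ENNReal.ofReal_add (by positivity) (by positivity)]
        congr 1; ring

lemma chi_out {N : ℕ} {τ0 τ l : ℝ} {χ : SpT N → ℝ}
    (hχ0 : ∀ z : SpT N, τ0 ≤ z.1 → χ z = 0)
    (hχl : ∀ z : SpT N, ∀ j, |Real.cos (Real.pi * z.2 j / 2)| ≤ l → χ z = 0) {z : SpT N}
    (hz : z ∈ KK N τ) (hzZ : z ∉ Zz N τ0 τ l) : χ z = 0 ∧ fderiv ℝ χ z = 0 := by
  have hopen : IsOpen {z : SpT N | τ0 < z.1 ∨ ∃ j, |Real.cos (Real.pi * z.2 j / 2)| < l} := by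
    have h3 : IsOpen {z : SpT N | ∃ j, |Real.cos (Real.pi * z.2 j / 2)| < l} := by
      have : {z : SpT N | ∃ j, |Real.cos (Real.pi * z.2 j / 2)| < l}
        = ⋃ j, {z : SpT N | |Real.cos (Real.pi * z.2 j / 2)| < l} := by ext; simp
      rw [this]
      refine isOpen_iUnion fun j => isOpen_lt ?_ continuous_const
      have := coord_cont (N := N) j
      fun_prop
    exact IsOpen.union (isOpen_lt continuous_const continuous_fst) h3
  have hmem : τ0 < z.1 ∨ ∃ j, |Real.cos (Real.pi * z.2 j / 2)| < l := by
    by_contra hc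
    push Not at hc
    exact hzZ ⟨hz, hc.1, hc.2⟩
  have hz0 : ∀ y : SpT N, (τ0 < y.1 ∨ ∃ j, |Real.cos (Real.pi * y.2 j / 2)| < l) → χ y = 0 := by
    rintro y (h | ⟨j, h⟩)
    · exact hχ0 y h.le
    · exact hχl y j h.le
  refine ⟨hz0 z hmem, ?_⟩
  have : χ =ᶠ[nhds z] fun _ => (0:ℝ) := by
    filter_upwards [hopen.mem_nhds hmem] with y hy using hz0 y hy
  rw [this.fderiv_eq]; simp

lemma interior_est {N : ℕ} {τ0 τ α C : ℝ} {w : SpT N → ℝ} {u : SpT N → Spc N}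
    (H : Core N τ0 τ α C w u) {χ : SpT N → ℝ} (hχ : ContDiff ℝ 1 χ) (hχp : PerST χ)
    (hχ0 : ∀ z : SpT N, τ0 ≤ z.1 → χ z = 0) {l : ℝ}
    (hχl : ∀ z : SpT N, ∀ j, |Real.cos (Real.pi * z.2 j / 2)| ≤ l → χ z = 0) :
    ∃ A M : ℝ, 0 < A ∧ 0 < M ∧ ∀ ε, 0 < ε → ε < τ - τ0 → 4 * ε ≤ l → ∀ s, 0 < s →
      |∫ z in KK N τ, w z ^ 2 * fderiv ℝ χ z (1, u z)| ≤ A * (2 * (M * (s * 2)) *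
        (∫ z in KK N τ, GG w u z) + 2 * (M * (s⁻¹ ^ 2 + 1 / ε)) * (C * (cN N * ε) ^ α) ^ 3) := by
  have hwm := H.wm
  have hum := H.um
  obtain ⟨A, hA, hm⟩ := mm_bound N
  obtain ⟨B, hB, hb1, hb2⟩ := fd_bound (τ := τ) hχ
  obtain ⟨L, hL, hD⟩ := kap_fd_bound N
  refine ⟨A, B * (1 + L), hA, by positivity, fun ε hε hετ hεl s hs => ?_⟩
  obtain ⟨hTi, hT⟩ := dbl_T H hχ hχp hχ0 hε hετ
  obtain ⟨hmp, hmv⟩ := hm ε hε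
  have n0 : ∀ v : Spc N, ‖((0, v) : SpT N)‖ = ‖v‖ := fun v => by simp [Prod.norm_def]
  have n1 : ∀ v : Spc N, ‖((1, v) : SpT N)‖ ≤ 1 + ‖v‖ := fun v => norm_one_u 1 (by simp) v
  have Gn : ∀ z, 0 ≤ GG w u z := fun z => zero_le_one.trans (GG_one w u z).1
  set μ := volume.restrict (KK N τ) with hμ
  set X := ∫ z in KK N τ, w z ^ 2 * fderiv ℝ χ z (1, u z) with hX
  have hkm : Measurable (fun q : SpT N × SpT N => kap ε (q.2 - q.1)) :=
    (kap_contDiff ε).continuous.measurable.comp (measurable_snd.sub measurable_fst)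
  have hfm : Measurable (fun q : SpT N × SpT N => fderiv ℝ χ q.1 (1, u q.1)) :=
    fd_meas2 hχ (by fun_prop)
  have hfm0 : Measurable (fun q : SpT N × SpT N => fderiv ℝ χ q.1 (0, u q.1 - u q.2)) :=
    fd_meas2 hχ (by fun_prop)
  have hDm0 : Measurable (fun q : SpT N × SpT N => fderiv ℝ (kap ε) (q.2 - q.1) (0, u q.1 - u q.2)) :=
    kap_fd_meas ε (by fun_prop)
  have hχm : Measurable χ := hχ.continuous.measurable
  have I0 : Integrable (fun q : SpT N × SpT N => w q.1 ^ 2 * kap ε (q.2 - q.1) *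
      fderiv ℝ χ q.1 (1, u q.1)) (μ.prod μ) := by
    refine dbl_int H (by fun_prop) (B := B) fun z hz z' hz' => ?_
    have g := (GG_ge w u z).1
    have g' := (GG_one w u z').1
    rw [abs_mul, abs_mul, abs_of_nonneg (sq_nonneg _), abs_of_nonneg (kap_nonneg _ _)]
    calc w z ^ 2 * kap ε (z' - z) * |fderiv ℝ χ z (1, u z)|
        ≤ w z ^ 2 * 1 * (B * (1 + ‖u z‖)) := by
          gcongr
          · exact kap_le_one _ _
          · exact (hb1 z hz _).trans (by gcongr; exact n1 _)
      _ = B * (w z ^ 2 * (1 + ‖u z‖) * 1) := by ring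
      _ ≤ B * (GG w u z * GG w u z') := by
          have := Gn z
          gcongr
  have Z0 : ∫ q : SpT N × SpT N, w q.1 ^ 2 * kap ε (q.2 - q.1) *
      fderiv ℝ χ q.1 (1, u q.1) ∂(μ.prod μ) = mm N ε * X := by
    rw [integral_prod _ I0, hX, ← integral_const_mul]
    refine setIntegral_congr_fun (KK_meas N τ) fun z hz => ?_
    by_cases hzZ : z ∈ Zz N τ0 τ l
    · have e : ∀ z', w z ^ 2 * kap ε (z' - z) * fderiv ℝ χ z (1, u z)
        = (w z ^ 2 * fderiv ℝ χ z (1, u z)) * kap ε (z' - z) := fun z' => by ring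
      simp_rw [e]
      rw [integral_const_mul, hμ, mm_eq hε hετ hεl hzZ]; ring
    · simp [(chi_out hχ0 hχl hz hzZ).2]
  set Φ : SpT N × SpT N → ℝ := fun q => w q.1 ^ 2 * kap ε (q.2 - q.1) * fderiv ℝ χ q.1 (1, u q.1)
    - (w q.1 * w q.2 * kap ε (q.2 - q.1) * fderiv ℝ χ q.1 (1, u q.1)
      + 1 / 2 * (w q.1 - w q.2) ^ 2 * χ q.1 * fderiv ℝ (kap ε) (q.2 - q.1) (0, u q.1 - u q.2)
      - 1 / 2 * w q.2 ^ 2 * kap ε (q.2 - q.1) * fderiv ℝ χ q.1 (0, u q.1 - u q.2)) with hΦ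
  have hΦm : Measurable Φ := by rw [hΦ]; fun_prop
  have hval : ∫ q, Φ q ∂(μ.prod μ) = mm N ε * X := by
    rw [hΦ, integral_sub I0 hTi, hT, Z0, sub_zero]
  have hΦ0 : ∀ z ∈ KK N τ, ∀ z' ∈ KK N τ, ¬ (z ∈ Zz N τ0 τ l ∧ z' - z ∈ Hh N ε) →
      ‖Φ (z, z')‖ₑ = 0 := by
    intro z hz z' hz' hn
    rw [enorm_eq_zero, hΦ]
    by_cases hzZ : z ∈ Zz N τ0 τ l
    · have := Zz_out hε hεl hzZ hz' (fun h => hn ⟨hzZ, h⟩)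
      simp [this.1, this.2]
    · have := chi_out hχ0 hχl hz hzZ
      simp [this.1, this.2]
  set P := 2 * (B * (1 + L) * (s * 2)) *
        (∫ z in KK N τ, GG w u z) + 2 * (B * (1 + L) * (s⁻¹ ^ 2 + 1 / ε)) * (C * (cN N * ε) ^ α) ^ 3 with hP
  have hPn : 0 ≤ P := by
    have := H.hC; have := cN_pos N
    have : 0 ≤ ∫ z in KK N τ, GG w u z := integral_nonneg Gn
    positivity
  have hone : ∀ h ∈ Hh N ε, ∫⁻ z in Zz N τ0 τ l, ‖Φ (z, z + h)‖ₑ ≤ ENNReal.ofReal P := by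
    intro h hh
    refine le_trans (setLIntegral_mono' (Zz_meas N τ0 τ l) fun z hz => ?_)
      (one_shift H hε hετ hεl (a := B * (1 + L) * (s * 2)) (b := B * (1 + L) * (s⁻¹ ^ 2 + 1 / ε))
        (by positivity) (by positivity) hh)
    rw [← ofReal_norm, Real.norm_eq_abs]
    refine ENNReal.ofReal_le_ofReal ?_
    have hw0 := abs_nonneg (w z)
    have hu0 := norm_nonneg (u z)
    have hw0' := abs_nonneg (w (z + h))
    have hu0' := norm_nonneg (u (z + h))
    have := ptw_bound (w := w z) (w' := w (z + h)) (k := kap ε (z + h - z))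
      (x := fderiv ℝ χ z (1, u z)) (y := fderiv ℝ (kap ε) (z + h - z) (0, u z - u (z + h)))
      (v := fderiv ℝ χ z (0, u z - u (z + h))) (c := χ z) (g := 1 + |w z| + ‖u z‖)
      (g' := 1 + |w (z + h)| + ‖u (z + h)‖) (e := ‖u (z + h) - u z‖) (U := 1 + ‖u z‖) hB hL hε hs
      (kap_nonneg _ _) (kap_le_one _ _) ((hb1 z hz.1 _).trans (by gcongr; exact n1 _)) (by positivity)
      (norm_nonneg _) (by
        have := hD ε hε (z + h - z) (0, u z - u (z + h))
        rwa [n0, norm_sub_rev] at this) (by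
        have := hb1 z hz.1 (0, u z - u (z + h))
        rwa [n0, norm_sub_rev] at this) (hb2 z hz.1) (by linarith) (by linarith) (by linarith)
    simpa only [hΦ, GG] using this
  have hfinal : ENNReal.ofReal |mm N ε * X| ≤ ENNReal.ofReal P * volume (Hh N ε) := by
    rw [← hval, ← Real.norm_eq_abs, ofReal_norm]
    refine (enorm_integral_le_lintegral_enorm _).trans ?_
    refine (shift_lint hΦm.enorm hΦ0).trans ?_
    refine (setLIntegral_mono' (Hh_meas N ε) hone).trans ?_
    rw [lintegral_const, Measure.restrict_apply_univ]
  have hv : volume (Hh N ε) = ENNReal.ofReal (volume.real (Hh N ε)) := by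
    rw [measureReal_def, ENNReal.ofReal_toReal (Hh_fin hε).ne]
  rw [hv, ← ENNReal.ofReal_mul hPn, ENNReal.ofReal_le_ofReal_iff (by positivity), abs_mul,
    abs_of_pos hmp] at hfinal
  have h2 : mm N ε * |X| ≤ mm N ε * (A * P) := by
    calc _ ≤ P * volume.real (Hh N ε) := hfinal
      _ ≤ P * (A * mm N ε) := by gcongr
      _ = _ := by ring
  exact le_of_mul_le_mul_left h2 hmp

lemma Sprop_interior {N : ℕ} {τ0 τ α C : ℝ} {w : SpT N → ℝ} {u : SpT N → Spc N}
    (H : Core N τ0 τ α C w u) : Sprop τ0 τ w u Finset.univ := by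
  intro χ hχ hχp hχ0 ⟨l, hl, hχl⟩
  obtain ⟨A, M, hA, hM, hest⟩ := interior_est H hχ hχp hχ0 (l := l) (fun z j => hχl z j (Finset.mem_univ j))
  set X := ∫ z in KK N τ, w z ^ 2 * fderiv ℝ χ z (1, u z)
  set Γ := ∫ z in KK N τ, GG w u z
  have hc := cN_pos N
  have hC := H.hC
  have hα := H.hα
  have key : ∀ᶠ ε in nhdsWithin (0:ℝ) (Ioi 0), |X| ≤ A * ((4 * M * Γ + 2 * M * C ^ 3) * (cN N * ε) ^ α
      + 2 * M * C ^ 3 * cN N * (cN N * ε) ^ (3 * α - 1)) := by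
    have e1 : ∀ᶠ ε in nhdsWithin (0:ℝ) (Ioi 0), ε < τ - τ0 :=
      nhdsWithin_le_nhds (gt_mem_nhds (by linarith [H.hτ]))
    have e2 : ∀ᶠ ε in nhdsWithin (0:ℝ) (Ioi 0), ε < l / 4 :=
      nhdsWithin_le_nhds (gt_mem_nhds (by linarith))
    filter_upwards [e1, e2, self_mem_nhdsWithin] with ε h1 h2 h3
    have h3 : 0 < ε := h3
    have hcε : 0 < cN N * ε := by positivity
    have hs : 0 < (cN N * ε) ^ α := by positivity
    refine (hest ε h3 h1 (by linarith) _ hs).trans (le_of_eq ?_)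
    have e3 : (cN N * ε) ^ (3 * α - 1) = ((cN N * ε) ^ α) ^ 3 / (cN N * ε) := by
      rw [Real.rpow_sub hcε, Real.rpow_one, mul_comm 3 α, Real.rpow_mul hcε.le]
      norm_cast
    rw [e3]
    field_simp
    ring
  have hlim : Tendsto (fun ε : ℝ => A * ((4 * M * Γ + 2 * M * C ^ 3) * (cN N * ε) ^ α
      + 2 * M * C ^ 3 * cN N * (cN N * ε) ^ (3 * α - 1))) (nhdsWithin (0:ℝ) (Ioi 0)) (nhds 0) := by
    have t : ∀ β : ℝ, 0 < β → Tendsto (fun ε : ℝ => (cN N * ε) ^ β) (nhdsWithin (0:ℝ) (Ioi 0)) (nhds 0) := by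
      intro β hβ
      have h1 : Continuous (fun ε : ℝ => (cN N * ε) ^ β) :=
        (continuous_const.mul continuous_id).rpow_const fun _ => Or.inr hβ.le
      have := h1.tendsto 0
      simp only [mul_zero, Real.zero_rpow hβ.ne'] at this
      exact this.mono_left nhdsWithin_le_nhds
    have := (((t α (by linarith)).const_mul (4 * M * Γ + 2 * M * C ^ 3)).add
      ((t (3 * α - 1) (by linarith)).const_mul (2 * M * C ^ 3 * cN N))).const_mul A
    simpa using this
  have : |X| ≤ 0 := ge_of_tendsto hlim key
  exact abs_nonpos_iff.1 this

/-! ### Conclusion of the core theorem -/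

lemma Sprop_empty {N : ℕ} {τ0 τ α C : ℝ} {w : SpT N → ℝ} {u : SpT N → Spc N}
    (H : Core N τ0 τ α C w u) : Sprop τ0 τ w u ∅ := by
  have key : ∀ J : Finset (Fin N), Sprop τ0 τ w u J → Sprop τ0 τ w u ∅ := by
    intro J
    induction J using Finset.induction_on with
    | empty => exact id
    | insert i J _ ih => exact fun h => ih (face_step H i J h)
  exact key _ (Sprop_interior H)

def hq (s : ℝ) : ℝ := (max s 0) ^ 2

lemma hq_hasDerivAt (s : ℝ) : HasDerivAt hq (2 * max s 0) s := by
  rcases lt_trichotomy s 0 with h | h | h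
  · rw [max_eq_right h.le]
    have : hq =ᶠ[nhds s] fun _ => 0 := by
      filter_upwards [Iio_mem_nhds h] with t ht
      simp [hq, max_eq_right (mem_Iio.1 ht).le]
    simpa using (hasDerivAt_const s (0:ℝ)).congr_of_eventuallyEq this
  · subst h
    rw [hasDerivAt_iff_isLittleO]
    simp only [hq, max_self, sub_zero, smul_eq_mul, mul_zero]
    have h1 : (fun x : ℝ => max x 0 ^ 2 - 0 ^ 2) =O[nhds 0] fun x : ℝ => x ^ 2 := by
      refine Asymptotics.isBigO_of_le _ fun x => ?_
      simp only [Real.norm_eq_abs, abs_pow]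
      rcases le_total x 0 with hx | hx
      · simp [max_eq_right hx]; positivity
      · simp [max_eq_left hx]
    have h2 : (fun x : ℝ => x ^ 2) =o[nhds 0] fun x : ℝ => x := by
      simpa using Asymptotics.isLittleO_pow_pow (𝕜 := ℝ) (m := 1) (n := 2) (by norm_num)
    simpa using h1.trans_isLittleO h2
  · rw [max_eq_left h.le]
    have : hq =ᶠ[nhds s] fun t => t ^ 2 := by
      filter_upwards [Ioi_mem_nhds h] with t ht
      simp [hq, max_eq_left (mem_Ioi.1 ht).le]
    simpa using (hasDerivAt_pow 2 s).congr_of_eventuallyEq this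

lemma hq_contDiff : ContDiff ℝ 1 hq := by
  rw [contDiff_one_iff_deriv]
  refine ⟨fun s => (hq_hasDerivAt s).differentiableAt, ?_⟩
  rw [show deriv hq = fun s => 2 * max s 0 from funext fun s => (hq_hasDerivAt s).deriv]
  fun_prop

lemma core_concl {N : ℕ} {τ0 τ α C : ℝ} {w : SpT N → ℝ} {u : SpT N → Spc N}
    (H : Core N τ0 τ α C w u) :
    ∀ᵐ z ∂(volume.restrict (KK N τ)), z.1 < τ0 → w z = 0 := by
  set χ : SpT N → ℝ := fun z => hq (τ0 - z.1) with hχ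
  have hχc : ContDiff ℝ 1 χ := hq_contDiff.comp (contDiff_const.sub contDiff_fst)
  have hfd : ∀ z v : SpT N, fderiv ℝ χ z v = - (2 * max (τ0 - z.1) 0 * v.1) := by
    intro z v
    have h1 := (hq_hasDerivAt (τ0 - z.1)).comp_hasFDerivAt z
      ((ContinuousLinearMap.fst ℝ ℝ (Spc N)).hasFDerivAt.const_sub τ0)
    have : fderiv ℝ χ z = _ := h1.fderiv
    rw [this]
    simp
  have hz := Sprop_empty H χ hχc (fun z i => by simp [hχ]) (fun z hz => by
    simp only [hχ, hq]; rw [max_eq_right (by linarith)]; norm_num) ⟨1, one_pos, by simp⟩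
  have hF : ∀ z, w z ^ 2 * fderiv ℝ χ z (1, u z) = - (w z ^ 2 * (2 * max (τ0 - z.1) 0)) := by
    intro z; rw [hfd]; ring
  simp_rw [hF] at hz
  rw [integral_neg, neg_eq_zero] at hz
  have hm : Measurable (fun z : SpT N => w z ^ 2 * (2 * max (τ0 - z.1) 0)) := by
    have := H.wm
    fun_prop
  have hInt : IntegrableOn (fun z : SpT N => w z ^ 2 * (2 * max (τ0 - z.1) 0)) (KK N τ) := by
    refine dom_int H hm (B := 2 * τ0) fun z hzK => ?_
    have h1 := (GG_ge w u z).1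
    have h2 : max (τ0 - z.1) 0 ≤ τ0 := max_le (by linarith [hzK.1.1]) H.h0.le
    have h3 : 0 ≤ max (τ0 - z.1) 0 := le_max_right _ _
    have h4 : w z ^ 2 ≤ GG w u z := le_trans (by nlinarith [sq_nonneg (w z), norm_nonneg (u z)]) h1
    rw [abs_of_nonneg (by positivity)]
    nlinarith [sq_nonneg (w z), H.h0]
  rw [integral_eq_zero_iff_of_nonneg (fun z => by positivity) hInt] at hz
  filter_upwards [hz] with z hz hlt
  simp only [Pi.zero_apply] at hz
  have : 0 < max (τ0 - z.1) 0 := lt_max_of_lt_left (by linarith)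
  rcases mul_eq_zero.1 hz with h | h
  · exact pow_eq_zero_iff (two_ne_zero) |>.1 h
  · linarith

/-! ### Reduction to the core theorem -/

lemma ae_shift {N : ℕ} {τ : ℝ} {P : SpT N → Prop} (h : ∀ᵐ z ∂(volume.restrict (KK N τ)), P z)
    (ξ : SpT N) :
    ∀ᵐ z ∂(volume.restrict (KK N τ ∩ {z | z + ξ ∈ KK N τ})), P z ∧ P (z + ξ) := by
  have hm : MeasurableSet (KK N τ ∩ {z | z + ξ ∈ KK N τ}) :=
    (KK_meas N τ).inter ((by fun_prop : Measurable (fun z : SpT N => z + ξ)) (KK_meas N τ))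
  rw [ae_restrict_iff' (KK_meas N τ)] at h
  rw [ae_restrict_iff' hm]
  have h2 := (measurePreserving_add_right (volume : Measure (SpT N)) ξ).quasiMeasurePreserving.ae h
  filter_upwards [h, h2] with z hz hz2 hh
  exact ⟨hz hh.1, hz2 hh.2⟩

lemma besov_rep {N : ℕ} {T τ α p : ℝ} (hτ : τ < T) (hα : 0 < α) (hp : 3 ≤ p) {f : SpT N → ℝ}
    (hf : MemBesovST α p (Ico (0 : ℝ) T ×ˢ TorusBox N) f) :
    ∃ (g : SpT N → ℝ) (C : ℝ), Measurable g ∧ 0 < C ∧ f =ᵐ[volume.restrict (KK N τ)] g ∧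
      MemLp g 3 (volume.restrict (KK N τ)) ∧
      ∀ ξ : SpT N, eLpNorm (fun z => g (z + ξ) - g z) 3
        (volume.restrict (KK N τ ∩ {z | z + ξ ∈ KK N τ})) ≤ ENNReal.ofReal (C * ‖ξ‖ ^ α) := by
  have hsub : KK N τ ⊆ Ico (0 : ℝ) T ×ˢ TorusBox N := fun z hz =>
    ⟨⟨hz.1.1, lt_of_le_of_lt hz.1.2 hτ⟩, hz.2⟩
  have hfK : MemLp f (ENNReal.ofReal p) (volume.restrict (KK N τ)) :=
    hf.1.mono_measure (Measure.restrict_mono hsub le_rfl)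
  have h3p : (3 : ℝ≥0∞) ≤ ENNReal.ofReal p := by
    rw [show (3 : ℝ≥0∞) = ENNReal.ofReal 3 by simp]
    exact ENNReal.ofReal_le_ofReal hp
  set g := hfK.1.aemeasurable.mk f with hg
  have hgm : Measurable g := hfK.1.aemeasurable.measurable_mk
  have hfg : f =ᵐ[volume.restrict (KK N τ)] g := hfK.1.aemeasurable.ae_eq_mk
  have hgK : MemLp g (ENNReal.ofReal p) (volume.restrict (KK N τ)) := hfK.ae_eq hfg
  set M := besovSeminormST α p (Ico (0 : ℝ) T ×ˢ TorusBox N) f with hM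
  have hMt : M ≠ ⊤ := hf.2.ne
  set e : ℝ := 1 / (3 : ℝ≥0∞).toReal - 1 / (ENNReal.ofReal p).toReal with he
  have he0 : 0 ≤ e := by
    rw [he, ENNReal.toReal_ofReal (by linarith)]
    simp only [ENNReal.toReal_ofNat]
    have : 1 / p ≤ 1 / 3 := one_div_le_one_div_of_le (by norm_num) hp
    linarith
  set V : ℝ≥0∞ := volume (KK N τ) ^ e with hV
  have hVt : V ≠ ⊤ := ENNReal.rpow_ne_top_of_nonneg he0 (KK_lt_top N τ).ne
  refine ⟨g, (M * V).toReal + 1, hgm, by positivity, hfg, hgK.mono_exponent h3p, fun ξ => ?_⟩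
  set S := KK N τ ∩ {z | z + ξ ∈ KK N τ} with hS
  by_cases hξ : ξ = 0
  · subst hξ; simp
  have hSc : IsClosed S := (KK_closed N τ).inter
    ((KK_closed N τ).preimage (by fun_prop : Continuous (fun z : SpT N => z + ξ)))
  have hfgS : (fun z => f (z + ξ) - f z) =ᵐ[volume.restrict S] fun z => g (z + ξ) - g z := by
    filter_upwards [ae_shift hfg ξ] with z hz
    rw [hz.1, hz.2]
  have hnp : 0 < ‖ξ‖ ^ α := by
    have := norm_pos_iff.2 hξ
    positivity
  have hb : eLpNorm (fun z => f (z + ξ) - f z) (ENNReal.ofReal p) (volume.restrict S)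
      / ENNReal.ofReal (‖ξ‖ ^ α) ≤ M := by
    rw [hM]
    unfold besovSeminormST
    refine le_iSup_of_le S (le_iSup_of_le ?_ (le_iSup_of_le ξ (le_iSup_of_le hξ (le_iSup_of_le ?_ le_rfl))))
    · rw [hSc.closure_eq]; exact inter_subset_left.trans hsub
    · rintro _ ⟨z, hz, rfl⟩; exact hsub hz.2
  rw [ENNReal.div_le_iff (by simpa using hnp) (by simp)] at hb
  have hmeas : AEStronglyMeasurable (fun z => g (z + ξ) - g z) (volume.restrict S) := by
    apply Measurable.aestronglyMeasurable
    fun_prop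
  calc eLpNorm (fun z => g (z + ξ) - g z) 3 (volume.restrict S)
      ≤ eLpNorm (fun z => g (z + ξ) - g z) (ENNReal.ofReal p) (volume.restrict S)
        * (volume.restrict S) univ ^ e := eLpNorm_le_eLpNorm_mul_rpow_measure_univ h3p hmeas
    _ ≤ (M * ENNReal.ofReal (‖ξ‖ ^ α)) * V := by
        rw [← eLpNorm_congr_ae hfgS]
        refine mul_le_mul' hb ?_
        refine ENNReal.rpow_le_rpow ?_ he0
        rw [Measure.restrict_apply_univ]
        exact measure_mono inter_subset_left
    _ = ENNReal.ofReal ((M * V).toReal) * ENNReal.ofReal (‖ξ‖ ^ α) := by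
        rw [ENNReal.ofReal_toReal (ENNReal.mul_ne_top hMt hVt)]; ring
    _ = ENNReal.ofReal ((M * V).toReal * ‖ξ‖ ^ α) := (ENNReal.ofReal_mul (by positivity)).symm
    _ ≤ _ := by
        apply ENNReal.ofReal_le_ofReal
        gcongr
        linarith

lemma norm_toLp_le {N : ℕ} (x : Spc N) : ‖x‖ ≤ ∑ i, |x i| := by
  have h : x = ∑ i, x i • EuclideanSpace.single i (1 : ℝ) := by
    ext j; simp [Pi.single_apply]
  calc ‖x‖ = ‖∑ i, x i • EuclideanSpace.single i (1 : ℝ)‖ := by rw [← h]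
    _ ≤ ∑ i, ‖x i • (EuclideanSpace.single i (1 : ℝ) : Spc N)‖ := norm_sum_le _ _
    _ = _ := by simp [norm_smul]

lemma besov_rep_vec {N : ℕ} {T τ α p : ℝ} (hτ : τ < T) (hα : 0 < α) (hp : 3 ≤ p)
    {f : SpT N → Spc N}
    (hf : ∀ i, MemBesovST α p (Ico (0 : ℝ) T ×ˢ TorusBox N) (fun z => f z i)) :
    ∃ (g : SpT N → Spc N) (C : ℝ), Measurable g ∧ 0 < C ∧ f =ᵐ[volume.restrict (KK N τ)] g ∧
      MemLp g 3 (volume.restrict (KK N τ)) ∧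
      ∀ ξ : SpT N, eLpNorm (fun z => g (z + ξ) - g z) 3
        (volume.restrict (KK N τ ∩ {z | z + ξ ∈ KK N τ})) ≤ ENNReal.ofReal (C * ‖ξ‖ ^ α) := by
  choose g C hgm hC hfg hgL hgB using fun i => besov_rep (τ := τ) hτ hα hp (hf i)
  set G : SpT N → Spc N := fun z => WithLp.toLp 2 (fun i => g i z) with hG
  have hGm : Measurable G := by
    refine (WithLp.measurable_toLp 2 _).comp ?_
    exact measurable_pi_lambda _ hgm
  refine ⟨G, ∑ i, C i + 1, hGm, ?_, ?_, ?_, fun ξ => ?_⟩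
  · have : 0 ≤ ∑ i, C i := Finset.sum_nonneg fun i _ => (hC i).le
    linarith
  · filter_upwards [ae_all_iff.2 hfg] with z hz
    ext i; simp [hG, hz i]
  · have h1 : MemLp (fun z => ∑ i, |g i z|) 3 (volume.restrict (KK N τ)) :=
      memLp_finsetSum _ fun i _ => (hgL i).norm
    refine h1.mono hGm.aestronglyMeasurable (ae_of_all _ fun z => ?_)
    refine (norm_toLp_le _).trans (le_trans (le_of_eq ?_) (le_abs_self _))
    simp [hG]
  · set μ := volume.restrict (KK N τ ∩ {z | z + ξ ∈ KK N τ}) with hμ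
    calc eLpNorm (fun z => G (z + ξ) - G z) 3 μ
        ≤ eLpNorm (∑ i, fun z => |g i (z + ξ) - g i z|) 3 μ := by
          refine eLpNorm_mono fun z => ?_
          refine (norm_toLp_le _).trans (le_trans (le_of_eq ?_) (le_abs_self _))
          simp [hG]
      _ ≤ ∑ i, eLpNorm (fun z => |g i (z + ξ) - g i z|) 3 μ := by
          refine eLpNorm_sum_le (fun i _ => ?_) (by norm_num)
          have := hgm i
          apply Measurable.aestronglyMeasurable
          fun_prop
      _ ≤ ∑ i, ENNReal.ofReal (C i * ‖ξ‖ ^ α) := by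
          refine Finset.sum_le_sum fun i _ => ?_
          refine le_trans (le_of_eq ?_) (hgB i ξ)
          exact eLpNorm_norm (fun z => g i (z + ξ) - g i z)
      _ = ENNReal.ofReal (∑ i, C i * ‖ξ‖ ^ α) :=
          (ENNReal.ofReal_sum_of_nonneg fun i _ => by have := (hC i).le; positivity).symm
      _ ≤ _ := by
          apply ENNReal.ofReal_le_ofReal
          rw [← Finset.sum_mul]
          gcongr
          linarith

lemma fderiv_slice_t {N : ℕ} {φ : SpT N → ℝ} (hφ : ContDiff ℝ 1 φ) (t : ℝ) (x : Spc N) :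
    deriv (fun s => φ (s, x)) t = fderiv ℝ φ (t, x) (1, 0) := by
  have h1 : HasFDerivAt φ (fderiv ℝ φ (t, x)) (t, x) :=
    (hφ.differentiable one_ne_zero).differentiableAt.hasFDerivAt
  have h2 : HasDerivAt (fun s : ℝ => ((s, x) : SpT N)) (1, 0) t :=
    (hasDerivAt_id t).prodMk (hasDerivAt_const t x)
  exact (h1.comp_hasDerivAt t h2).deriv

lemma fderiv_slice_x {N : ℕ} {φ : SpT N → ℝ} (hφ : ContDiff ℝ 1 φ) (t : ℝ) (x v : Spc N) :
    ⟪v, gradient (fun y => φ (t, y)) x⟫ = fderiv ℝ φ (t, x) (0, v) := by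
  have h1 : HasFDerivAt φ (fderiv ℝ φ (t, x)) (t, x) :=
    (hφ.differentiable one_ne_zero).differentiableAt.hasFDerivAt
  have h2 : HasFDerivAt (fun y : Spc N => ((t, y) : SpT N)) (ContinuousLinearMap.inr ℝ ℝ (Spc N)) x :=
    hasFDerivAt_prodMk_right t x
  have h3 : fderiv ℝ (fun y => φ (t, y)) x = _ := (h1.comp x h2).fderiv
  rw [real_inner_comm, gradient, InnerProductSpace.toDual_symm_apply, h3]
  simp

lemma integral_KK {N : ℕ} {τ : ℝ} {F : SpT N → ℝ} (hF : IntegrableOn F (KK N τ)) :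
    ∫ z in KK N τ, F z = ∫ t in Ioc 0 τ, ∫ x in TorusBox N, F (t, x) := by
  unfold KK at hF ⊢
  rw [Measure.volume_eq_prod] at hF ⊢
  rw [setIntegral_prod _ hF, integral_Icc_eq_integral_Ioc]

lemma per_of {N : ℕ} {φ : SpT N → ℝ} (h : PerST φ) (t : ℝ) :
    IsPeriodic (fun x : Spc N => φ (t, x)) := by
  intro x i
  have := h (t, x) i
  change φ (t, x + EuclideanSpace.single i 2) = φ (t, x)
  rw [← this]
  congr 1
  ext
  · simp
  · simp [ee]

lemma fd_int {N : ℕ} {τ : ℝ} {w : SpT N → ℝ} {u : SpT N → Spc N} (wm : Measurable w)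
    (um : Measurable u) (wL : MemLp w 3 (volume.restrict (KK N τ)))
    (uL : MemLp u 3 (volume.restrict (KK N τ))) {φ : SpT N → ℝ} (hφ : ContDiff ℝ 1 φ) :
    IntegrableOn (fun z => w z * fderiv ℝ φ z (1, u z)) (KK N τ) ∧
    IntegrableOn (fun z => fderiv ℝ φ z (0, u z)) (KK N τ) := by
  have hGi : IntegrableOn (GG w u) (KK N τ) := by
    have h : MemLp (fun z => 1 + |w z| + ‖u z‖) 3 (volume.restrict (KK N τ)) :=
      ((memLp_const (1:ℝ)).add wL.norm).add uL.norm
    have := h.integrable_norm_pow (by norm_num)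
    refine this.congr (ae_of_all _ fun z => ?_)
    simp only [GG, Real.norm_eq_abs]
    rw [abs_of_nonneg (by positivity)]
  obtain ⟨B, hB, hB1, -⟩ := fd_bound (τ := τ) hφ
  constructor
  · refine Integrable.mono' (hGi.const_mul B)
      (wm.mul (fd_meas hφ (measurable_const.prodMk um))).aestronglyMeasurable ?_
    filter_upwards [ae_restrict_mem (KK_meas N τ)] with z hz
    rw [Real.norm_eq_abs, abs_mul]
    have h1 := hB1 z hz (1, u z)
    have h2 := norm_one_u 1 (by simp) (u z)
    have h3 := (GG_ge w u z).2.1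
    calc |w z| * |fderiv ℝ φ z (1, u z)| ≤ |w z| * (B * (1 + ‖u z‖)) := by
          gcongr; exact h1.trans (by gcongr)
      _ = B * (|w z| * (1 + ‖u z‖)) := by ring
      _ ≤ _ := by gcongr
  · refine Integrable.mono' (hGi.const_mul B)
      (fd_meas hφ (measurable_const.prodMk um)).aestronglyMeasurable ?_
    filter_upwards [ae_restrict_mem (KK_meas N τ)] with z hz
    rw [Real.norm_eq_abs]
    have h1 := hB1 z hz (0, u z)
    have h2 := norm_one_u 0 (by simp) (u z)
    have h3 := (GG_ge w u z).2.2
    exact h1.trans (by gcongr; exact h2.trans h3)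

lemma E2_of {N : ℕ} {T τ : ℝ} (h0 : 0 < τ) (hτ : τ < T) {u : ℝ → Spc N → Spc N}
    (hdiv : WeaklyDivFree T u) {u' : SpT N → Spc N} (um : Measurable u')
    (uL : MemLp u' 3 (volume.restrict (KK N τ)))
    (hu : (fun z : SpT N => u z.1 z.2) =ᵐ[volume.restrict (KK N τ)] u')
    {φ : SpT N → ℝ} (hφ : ContDiff ℝ 1 φ) (hp : PerST φ) :
    ∫ z in KK N τ, fderiv ℝ φ z (0, u' z) = 0 := by
  have hi := (fd_int (w := fun _ => 0) measurable_const um MemLp.zero' uL hφ).2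
  have hae : (fun z => fderiv ℝ φ z (0, u' z)) =ᵐ[volume.restrict (KK N τ)]
      fun z => fderiv ℝ φ z (0, u z.1 z.2) := by
    filter_upwards [hu] with z hz
    rw [← hz]
  rw [integral_congr_ae hae, integral_KK (hi.congr hae)]
  have := hdiv (fun t x => φ (t, x)) hφ (per_of hp) 0 τ le_rfl h0 hτ
  simp_rw [fderiv_slice_x hφ] at this
  exact this

lemma E1_of {N : ℕ} {T τ : ℝ} (h0 : 0 < τ) (hτ : τ < T) {u : ℝ → Spc N → Spc N}
    {σ : ℝ → Spc N → ℝ}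
    (heq : WeakContinuityEq T σ u) {u' : SpT N → Spc N} (um : Measurable u')
    (uL : MemLp u' 3 (volume.restrict (KK N τ)))
    (hu : (fun z : SpT N => u z.1 z.2) =ᵐ[volume.restrict (KK N τ)] u')
    {s : SpT N → ℝ} (sm : Measurable s) (sL : MemLp s 3 (volume.restrict (KK N τ)))
    (hs : (fun z : SpT N => σ z.1 z.2) =ᵐ[volume.restrict (KK N τ)] s)
    {φ : SpT N → ℝ} (hφ : ContDiff ℝ 1 φ) (hp : PerST φ) (hφτ : ∀ x, φ (τ, x) = 0) :
    ∫ z in KK N τ, s z * fderiv ℝ φ z (1, u' z) = - ∫ x in TorusBox N, σ 0 x * φ (0, x) := by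
  have hi := (fd_int sm um sL uL hφ).1
  have hae : (fun z => s z * fderiv ℝ φ z (1, u' z)) =ᵐ[volume.restrict (KK N τ)]
      fun z => σ z.1 z.2 * fderiv ℝ φ z (1, 0) + σ z.1 z.2 * fderiv ℝ φ z (0, u z.1 z.2) := by
    filter_upwards [hu, hs] with z hz hz2
    rw [← hz, ← hz2, ← mul_add, ← map_add]
    simp
  rw [integral_congr_ae hae, integral_KK (hi.congr hae)]
  have := heq (fun t x => φ (t, x)) hφ (per_of hp) 0 τ le_rfl h0 hτ
  simp_rw [fderiv_slice_x hφ, fderiv_slice_t hφ, hφτ] at this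
  rw [this]
  simp

/-- **Uniqueness for the continuity equation with Besov regularity.** -/
theorem continuity_equation_uniqueness
    (N : ℕ) (hN : 2 ≤ N) (T : ℝ) (hT : 0 < T)
    (u : ℝ → Spc N → Spc N) (ρ r : ℝ → Spc N → ℝ)
    (huper : ∀ t, IsPeriodic (u t)) (hρper : ∀ t, IsPeriodic (ρ t))
    (hrper : ∀ t, IsPeriodic (r t))
    (huC : ContL2 T u) (hρC : ContL2 T ρ) (hrC : ContL2 T r)
    (hdiv : WeaklyDivFree T u)
    (hρeq : WeakContinuityEq T ρ u) (hreq : WeakContinuityEq T r u)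
    (h0 : ρ 0 = r 0)
    (α p : ℝ) (hα : 1 / 3 < α) (hα1 : α < 1) (hp : 3 ≤ p)
    (hρB : MemBesovST α p (Ico (0 : ℝ) T ×ˢ TorusBox N) (fun z => ρ z.1 z.2))
    (hrB : MemBesovST α p (Ico (0 : ℝ) T ×ˢ TorusBox N) (fun z => r z.1 z.2))
    (huB : ∀ i, MemBesovST α p (Ico (0 : ℝ) T ×ˢ TorusBox N) (fun z => u z.1 z.2 i))
    (hρuB : ∀ i, MemBesovST α p (Ico (0 : ℝ) T ×ˢ TorusBox N)
      (fun z => ρ z.1 z.2 * u z.1 z.2 i))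
    (hruB : ∀ i, MemBesovST α p (Ico (0 : ℝ) T ×ˢ TorusBox N)
      (fun z => r z.1 z.2 * u z.1 z.2 i)) :
    ∀ᵐ z ∂((volume.restrict (Ico (0 : ℝ) T)).prod (volume.restrict (TorusBox N))),
      ρ z.1 z.2 = r z.1 z.2 := by
  have key : ∀ τ0 : ℝ, 0 < τ0 → τ0 < T →
      ∀ᵐ z ∂((volume.restrict (Ico (0 : ℝ) T)).prod (volume.restrict (TorusBox N))),
        z.1 < τ0 → ρ z.1 z.2 = r z.1 z.2 := by
    intro τ0 hτ0 hτ0T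
    set τ := (τ0 + T) / 2 with hτdef
    have hτ1 : τ0 < τ := by rw [hτdef]; linarith
    have hτT : τ < T := by rw [hτdef]; linarith
    have hτp : 0 < τ := by linarith
    have hα0 : 0 < α := by linarith
    obtain ⟨s, C1, sm, hC1, hs, sL, sB⟩ := besov_rep (τ := τ) hτT hα0 hp hρB
    obtain ⟨q, C2, qm, hC2, hq', qL, qB⟩ := besov_rep (τ := τ) hτT hα0 hp hrB
    obtain ⟨v, C3, vm, hC3, hv, vL, vB⟩ :=
      besov_rep_vec (τ := τ) (f := fun z : SpT N => u z.1 z.2) hτT hα0 hp huB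
    have H : Core N τ0 τ α (C1 + C2 + C3) (fun z => s z - q z) v := by
      refine ⟨hτ0, hτ1, hα, hα1, by positivity, sm.sub qm, vm, sL.sub qL, vL, fun ξ => ?_,
        fun ξ => ?_, fun φ hφ hφp hφτ => ?_, fun φ hφ hφp => E2_of hτp hτT hdiv vm vL hv hφ hφp⟩
      · refine le_eLpNorm_three (by positivity) ?_
        have e : (fun z => s (z + ξ) - q (z + ξ) - (s z - q z))
            = (fun z => s (z + ξ) - s z) - (fun z => q (z + ξ) - q z) := by
          ext z; simp only [Pi.sub_apply]; ring
        rw [e]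
        refine (eLpNorm_sub_le (Measurable.aestronglyMeasurable (by fun_prop))
          (Measurable.aestronglyMeasurable (by fun_prop)) (by norm_num)).trans ?_
        refine (add_le_add (sB ξ) (qB ξ)).trans ?_
        rw [← ENNReal.ofReal_add (by positivity) (by positivity)]
        apply ENNReal.ofReal_le_ofReal
        have : 0 ≤ C3 * ‖ξ‖ ^ α := by positivity
        linarith
      · refine le_eLpNorm_three (by positivity) ((vB ξ).trans ?_)
        apply ENNReal.ofReal_le_ofReal
        gcongr
        linarith
      · have h1 := E1_of hτp hτT hρeq vm vL hv sm sL hs hφ hφp hφτ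
        have h2 := E1_of hτp hτT hreq vm vL hv qm qL hq' hφ hφp hφτ
        simp_rw [sub_mul]
        rw [integral_sub (fd_int sm vm sL vL hφ).1 (fd_int qm vm qL vL hφ).1, h1, h2, h0]
        simp
    have hc := core_concl H
    have hc2 : ∀ᵐ z ∂(volume.restrict (KK N τ)), z.1 < τ0 → ρ z.1 z.2 = r z.1 z.2 := by
      filter_upwards [hc, hs, hq'] with z hz h1 h2 hlt
      have := hz hlt
      rw [h1, h2]
      linarith
    rw [ae_restrict_iff' (KK_meas N τ)] at hc2
    rw [Measure.prod_restrict, ← Measure.volume_eq_prod,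
      ae_restrict_iff' (measurableSet_Ico.prod (TorusBox_closed N).measurableSet)]
    filter_upwards [hc2] with z hz hzQ hlt
    exact hz ⟨⟨hzQ.1.1, by linarith⟩, hzQ.2⟩ hlt
  have hall := ae_all_iff.2 fun n : ℕ =>
    key (T * (1 - 1 / ((n : ℝ) + 2))) (by
      have : 1 / ((n : ℝ) + 2) < 1 := by
        rw [div_lt_one (by positivity)]; linarith [(Nat.cast_nonneg n : (0:ℝ) ≤ n)]
      have : 0 < 1 - 1 / ((n : ℝ) + 2) := by linarith
      positivity) (by
      have : 0 < T * (1 / ((n : ℝ) + 2)) := by positivity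
      linarith)
  have hmem : ∀ᵐ z ∂((volume.restrict (Ico (0 : ℝ) T)).prod (volume.restrict (TorusBox N))),
      z ∈ Ico (0 : ℝ) T ×ˢ TorusBox N := by
    rw [Measure.prod_restrict]
    exact ae_restrict_mem (measurableSet_Ico.prod (TorusBox_closed N).measurableSet)
  filter_upwards [hall, hmem] with z hz hzQ
  have hlt : 0 < (T - z.1) / T := div_pos (by linarith [hzQ.1.2]) hT
  obtain ⟨n, hn⟩ := exists_nat_one_div_lt hlt
  refine hz n ?_
  have h1 : 1 / ((n : ℝ) + 2) < (T - z.1) / T :=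
    lt_of_le_of_lt (one_div_le_one_div_of_le (by positivity) (by linarith)) hn
  rw [lt_div_iff₀ hT] at h1
  linarith
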